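/- arXiv:2511.13537 — 3 statements merged into one kernel-verified Lean document; each statement's English description precedes it below -/
import Mathlib

section
/- If f, g ∈ ℂ[X₀, …, Xₙ] are homogeneous of degree d − n − 1 and both satisfy the vanishing conditions f ∈ I_v^{ord_P(L_v)} and g ∈ I_v^{ord_P(L_v)} for every nonzero v ∈ ℝ^{n+1}, then f and g are linearly dependent over ℂ: there exists a pair (a, b) ∈ ℂ² with (a, b) ≠ (0, 0) and a·f + b·g = 0. (Uniqueness part of the paper's main theorem on adjoints of arbitrary, possibly non-simple, polytopes.) -/
open MvPolynomial Finset Classical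

noncomputable section

/-- The homogenization embedding `y ↦ (1, y₁, …, yₙ)`. -/
def lift1 {n : ℕ} (y : Fin n → ℝ) : Fin (n + 1) → ℝ := Fin.cons 1 y

/-- The polytope `P = {y ∈ ℝⁿ | ℓᵢ(1,y) ≥ 0 for all i}`. -/
def polytopeOf {n d : ℕ} (ℓ : Fin d → MvPolynomial (Fin (n + 1)) ℝ) : Set (Fin n → ℝ) :=
  {y | ∀ i, 0 ≤ eval (lift1 y) (ℓ i)}

/-- The facet `Fᵢ = {y ∈ P | ℓᵢ(1,y) = 0}`. -/
def facetOf {n d : ℕ} (ℓ : Fin d → MvPolynomial (Fin (n + 1)) ℝ) (i : Fin d) :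
    Set (Fin n → ℝ) :=
  {y ∈ polytopeOf ℓ | eval (lift1 y) (ℓ i) = 0}

/-- The flat `F_v = {i | ℓᵢ(v) = 0}` of all facet hyperplanes through `v`. -/
def flatOf {n d : ℕ} (ℓ : Fin d → MvPolynomial (Fin (n + 1)) ℝ) (v : Fin (n + 1) → ℝ) :
    Finset (Fin d) :=
  Finset.univ.filter fun i => eval v (ℓ i) = 0

/-- The rank `r_v`: the dimension of the linear span of `{ℓᵢ : i ∈ F_v}`. -/
def rkOf {n d : ℕ} (ℓ : Fin d → MvPolynomial (Fin (n + 1)) ℝ) (v : Fin (n + 1) → ℝ) : ℕ :=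
  Module.finrank ℝ (Submodule.span ℝ (ℓ '' (flatOf ℓ v : Set (Fin d))))

/-- The nullity `nl_v = |F_v| − r_v`. -/
def nlOf {n d : ℕ} (ℓ : Fin d → MvPolynomial (Fin (n + 1)) ℝ) (v : Fin (n + 1) → ℝ) : ℕ :=
  (flatOf ℓ v).card - rkOf ℓ v

/-- The set `P_v = {y ∈ P | ℓᵢ(1,y) = 0 for all i ∈ F_v}`. -/
def faceOf {n d : ℕ} (ℓ : Fin d → MvPolynomial (Fin (n + 1)) ℝ) (v : Fin (n + 1) → ℝ) :
    Set (Fin n → ℝ) :=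
  {y ∈ polytopeOf ℓ | ∀ i ∈ flatOf ℓ v, eval (lift1 y) (ℓ i) = 0}

/-- The order `ord_P(L_v)`: equal to `nl_v` if `P_v` is nonempty with affine span of
dimension `n − r_v`, and to `nl_v + 1` otherwise. -/
def ordOf {n d : ℕ} (ℓ : Fin d → MvPolynomial (Fin (n + 1)) ℝ) (v : Fin (n + 1) → ℝ) : ℕ :=
  if (faceOf ℓ v).Nonempty ∧
      Module.finrank ℝ (affineSpan ℝ (faceOf ℓ v)).direction = n - rkOf ℓ v
  then nlOf ℓ v
  else nlOf ℓ v + 1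

/-- The ideal `I_v ⊆ ℂ[X₀,…,Xₙ]` generated by all homogeneous degree-1 polynomials
vanishing at the real point `v`. -/
def pointIdealC {n : ℕ} (v : Fin (n + 1) → ℝ) : Ideal (MvPolynomial (Fin (n + 1)) ℂ) :=
  Ideal.span {p | p.IsHomogeneous 1 ∧ eval (fun i => (v i : ℂ)) p = 0}

/-- The ideal `I_v ⊆ ℝ[X₀,…,Xₙ]` generated by all homogeneous degree-1 polynomials
vanishing at `v`. -/
def pointIdealR {n : ℕ} (v : Fin (n + 1) → ℝ) : Ideal (MvPolynomial (Fin (n + 1)) ℝ) :=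
  Ideal.span {p | p.IsHomogeneous 1 ∧ eval v p = 0}

/-- Complexification of a real polynomial. -/
def toC {n : ℕ} (p : MvPolynomial (Fin (n + 1)) ℝ) : MvPolynomial (Fin (n + 1)) ℂ :=
  map (algebraMap ℝ ℂ) p

/-- The hypotheses on the facet equations `ℓ₁, …, ℓ_d` of a full-dimensional compact convex
polytope `P ⊆ ℝⁿ`: the `ℓᵢ` are pairwise non-proportional homogeneous degree-1 polynomials,
`P` is compact with affine span all of `ℝⁿ`, and each facet `Fᵢ` is nonempty with affine
span of dimension `n − 1`. -/
structure IsPolytopeSetup {n d : ℕ} (ℓ : Fin d → MvPolynomial (Fin (n + 1)) ℝ) : Prop where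
  hn : 1 ≤ n
  hd : n + 1 ≤ d
  hhom : ∀ i, (ℓ i).IsHomogeneous 1
  hne : ∀ i, ℓ i ≠ 0
  hprop : ∀ i j, i ≠ j → ∀ c : ℝ, c • ℓ i ≠ ℓ j
  hcpt : IsCompact (polytopeOf ℓ)
  hfull : affineSpan ℝ (polytopeOf ℓ) = ⊤
  hfacet_ne : ∀ i, (facetOf ℓ i).Nonempty
  hfacet : ∀ i, Module.finrank ℝ (affineSpan ℝ (facetOf ℓ i)).direction = n - 1

section AuxMain

/-- Polynomial functions of degree `< m`. -/
inductive PolyF {V : Type} [AddCommGroup V] [Module ℝ V] : ℕ → (V → ℂ) → Prop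
  | zero (m : ℕ) : PolyF m (fun _ => 0)
  | const (m : ℕ) (c : ℂ) : PolyF (m + 1) (fun _ => c)
  | add {m : ℕ} {f g : V → ℂ} : PolyF m f → PolyF m g → PolyF m (fun x => f x + g x)
  | mul {m : ℕ} {f : V → ℂ} (l : V →ₗ[ℝ] ℝ) : PolyF m f →
      PolyF (m + 1) (fun x => (l x : ℂ) * f x)

section
variable {V W : Type} [AddCommGroup V] [Module ℝ V] [AddCommGroup W] [Module ℝ W]

theorem PolyF.eq_zero {m : ℕ} {f : V → ℂ} (h : PolyF m f) (hm : m = 0) : ∀ x, f x = 0 := by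
  induction h with
  | zero m => intro x; rfl
  | const m c => omega
  | add _ _ h1 h2 => intro x; simp [h1 hm, h2 hm]
  | mul l _ _ => omega

theorem PolyF.comp {m : ℕ} {f : V → ℂ} (h : PolyF m f) (φ : W →ₗ[ℝ] V) :
    PolyF m (fun x => f (φ x)) := by
  induction h with
  | zero m => exact PolyF.zero m
  | const m c => exact PolyF.const m c
  | add _ _ h1 h2 => exact PolyF.add h1 h2
  | mul l _ h => exact PolyF.mul (l.comp φ) h

theorem PolyF.smul {m : ℕ} {f : V → ℂ} (h : PolyF m f) (a : ℂ) :
    PolyF m (fun x => a * f x) := by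
  induction h with
  | zero m => simpa using PolyF.zero m
  | const m c => exact PolyF.const m _
  | add _ _ h1 h2 => simpa [mul_add] using PolyF.add h1 h2
  | mul l _ h =>
    convert PolyF.mul l h using 2
    ring

theorem PolyF.succ {m : ℕ} {f : V → ℂ} (h : PolyF m f) : PolyF (m + 1) f := by
  induction h with
  | zero m => exact PolyF.zero _
  | const m c => exact PolyF.const _ _
  | add _ _ h1 h2 => exact PolyF.add h1 h2
  | mul l _ h => exact PolyF.mul l h

theorem PolyF.prod {ι : Type} {m : ℕ} {f : V → ℂ} (h : PolyF m f) (l : ι → V →ₗ[ℝ] ℝ)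
    (s : Finset ι) : PolyF (m + s.card) (fun x => (∏ j ∈ s, (l j x : ℂ)) * f x) := by
  induction s using Finset.induction_on with
  | empty => simpa using h
  | insert a s ha ih =>
    rw [Finset.card_insert_of_notMem ha, ← add_assoc]
    convert PolyF.mul (l a) ih using 2
    rw [Finset.prod_insert ha]; ring

theorem PolyF.sub_proj {m : ℕ} {f : V → ℂ} (h : PolyF m f) (l : V →ₗ[ℝ] ℝ) (u : V) :
    ∃ g, PolyF (m - 1) g ∧ ∀ x, f x - f (x - l x • u) = (l x : ℂ) * g x := by
  induction h with
  | zero m => exact ⟨_, PolyF.zero _, by simp⟩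
  | const m c => exact ⟨_, PolyF.zero _, by simp⟩
  | add _ _ h1 h2 =>
    obtain ⟨g1, p1, e1⟩ := h1
    obtain ⟨g2, p2, e2⟩ := h2
    refine ⟨_, PolyF.add p1 p2, fun x => ?_⟩
    linear_combination e1 x + e2 x
  | @mul m f k hf h =>
    obtain ⟨g, p, e⟩ := h
    rcases Nat.eq_zero_or_pos m with rfl | hm
    · refine ⟨_, PolyF.zero _, fun x => ?_⟩
      simp [hf.eq_zero rfl]
    · have p1 := PolyF.mul k p
      have p2 : PolyF m (fun x => f ((LinearMap.id - l.smulRight u : V →ₗ[ℝ] V) x)) :=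
        hf.comp _
      rw [Nat.sub_add_cancel hm] at p1
      refine ⟨_, PolyF.add p1 (p2.smul (k u : ℂ)), fun x => ?_⟩
      have := e x
      simp only [LinearMap.sub_apply, LinearMap.id_apply, LinearMap.smulRight_apply, map_sub,
        map_smul, smul_eq_mul, Complex.ofReal_sub, Complex.ofReal_mul]
      linear_combination (k x : ℂ) * this

theorem PolyF.div {m : ℕ} {f : V → ℂ} (h : PolyF m f) (l : V →ₗ[ℝ] ℝ) (hl : l ≠ 0)
    (h0 : ∀ x, l x = 0 → f x = 0) : ∃ g, PolyF (m - 1) g ∧ ∀ x, f x = (l x : ℂ) * g x := by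
  obtain ⟨w, hw⟩ : ∃ w, l w ≠ 0 := by
    by_contra hc; push Not at hc; exact hl (LinearMap.ext hc)
  obtain ⟨g, p, e⟩ := h.sub_proj l ((l w)⁻¹ • w)
  refine ⟨g, p, fun x => ?_⟩
  rw [← e x, h0 (x - _), sub_zero]
  simp [hw]

/-- `f` vanishes at `v` to order at least `m`. -/
def Van (f : V → ℂ) (v : V) (m : ℕ) : Prop :=
  ∀ u : V, ∃ q : Polynomial ℂ, ∀ t : ℝ, f (v + t • u) = (t : ℂ) ^ m * q.eval (t : ℂ)

theorem Van.mono {f : V → ℂ} {v : V} {m k : ℕ} (h : Van f v m) (hk : k ≤ m) : Van f v k := by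
  intro u
  obtain ⟨q, hq⟩ := h u
  refine ⟨Polynomial.X ^ (m - k) * q, fun t => ?_⟩
  rw [hq]
  simp only [Polynomial.eval_mul, Polynomial.eval_pow, Polynomial.eval_X]
  rw [← mul_assoc, ← pow_add, Nat.add_sub_cancel' hk]

theorem Van.comb {f g : V → ℂ} {v : V} {m : ℕ} (h : Van f v m) (h' : Van g v m) (a b : ℂ) :
    Van (fun x => a * f x + b * g x) v m := by
  intro u
  obtain ⟨q, hq⟩ := h u
  obtain ⟨q', hq'⟩ := h' u
  refine ⟨Polynomial.C a * q + Polynomial.C b * q', fun t => ?_⟩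
  simp [hq, hq']; ring

theorem Van.comp {f : V → ℂ} (φ : W →ₗ[ℝ] V) {v : W} {m : ℕ} (h : Van f (φ v) m) :
    Van (fun x => f (φ x)) v m := by
  intro u
  obtain ⟨q, hq⟩ := h (φ u)
  exact ⟨q, fun t => by simp [← hq]⟩

theorem Van.eq_zero {f : V → ℂ} {v : V} {m : ℕ} (h : Van f v m) (hm : 1 ≤ m) : f v = 0 := by
  obtain ⟨q, hq⟩ := h 0
  have := hq 0
  simpa [Nat.ne_of_gt hm] using this

open scoped Polynomial in
theorem PolyF.biv {m : ℕ} {f : V → ℂ} (h : PolyF m f) (v z u y : V) :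
    ∃ Q : ℂ[X][X], ∀ e t : ℝ, f ((v + e • z) + t • (u + e • y)) =
      ((Q.map (Polynomial.evalRingHom (e : ℂ))).eval (t : ℂ)) := by
  induction h with
  | zero m => exact ⟨0, by simp⟩
  | const m c => exact ⟨Polynomial.C (Polynomial.C c), by simp⟩
  | add _ _ h1 h2 =>
    obtain ⟨g1, e1⟩ := h1
    obtain ⟨g2, e2⟩ := h2
    exact ⟨g1 + g2, fun e t => by beta_reduce; rw [e1, e2]; simp⟩
  | mul l _ h =>
    obtain ⟨g, hg⟩ := h
    refine ⟨(Polynomial.C (Polynomial.C (l v : ℂ) + Polynomial.X * Polynomial.C (l z : ℂ)) + Polynomial.X * Polynomial.C (Polynomial.C (l u : ℂ) + Polynomial.X * Polynomial.C (l y : ℂ))) * g,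
      fun e t => ?_⟩
    beta_reduce
    rw [hg]
    simp
    left; ring

open scoped Polynomial in
theorem poly_eq_of_real {p q : ℂ[X]} (S : Set ℝ) (hS : S.Infinite)
    (h : ∀ t ∈ S, p.eval (t : ℂ) = q.eval (t : ℂ)) : p = q := by
  apply Polynomial.eq_of_infinite_eval_eq
  refine Set.Infinite.mono ?_ (hS.image (Complex.ofReal_injective.injOn))
  rintro _ ⟨t, ht, rfl⟩
  exact h t ht

open scoped Polynomial in
theorem PolyF.closure {m k : ℕ} {f : V → ℂ} (h : PolyF m f) (v z u y : V) (S : Set ℝ)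
    (hS : Sᶜ.Finite) (hv : ∀ e ∈ S, ∃ q : ℂ[X], ∀ t : ℝ,
      f ((v + e • z) + t • (u + e • y)) = (t : ℂ) ^ k * q.eval (t : ℂ)) :
    ∃ q : ℂ[X], ∀ t : ℝ, f (v + t • u) = (t : ℂ) ^ k * q.eval (t : ℂ) := by
  obtain ⟨Q, hQ⟩ := h.biv v z u y
  have hS' : S.Infinite := by simpa using hS.infinite_compl
  have key : ∀ j < k, Q.coeff j = 0 := by
    intro j hj
    apply poly_eq_of_real S hS'
    intro e he
    obtain ⟨q, hq⟩ := hv e he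
    have : Q.map (Polynomial.evalRingHom (e : ℂ)) = Polynomial.X ^ k * q := by
      apply poly_eq_of_real Set.univ Set.infinite_univ
      intro t _
      rw [← hQ, hq]; simp
    have h2 := congrArg (fun p => p.coeff j) this
    simp only [Polynomial.coeff_map, Polynomial.coeff_X_pow_mul', Polynomial.coe_evalRingHom] at h2
    rw [h2, if_neg (by omega)]; simp
  have hd : Polynomial.X ^ k ∣ Q := by
    rw [Polynomial.X_pow_dvd_iff]; exact key
  obtain ⟨R, rfl⟩ := hd
  refine ⟨R.map (Polynomial.evalRingHom (0 : ℂ)), fun t => ?_⟩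
  have := hQ 0 t
  simpa using this

theorem PolyF.van_closure {m k : ℕ} {f : V → ℂ} (h : PolyF m f) (v z : V) (S : Set ℝ)
    (hS : Sᶜ.Finite) (hv : ∀ e ∈ S, Van f (v + e • z) k) : Van f v k := by
  intro u
  apply h.closure v z u 0 S hS
  intro e he
  simpa using hv e he u

open scoped Polynomial in
theorem PolyF.van_one {m : ℕ} {f : V → ℂ} (h : PolyF m f) (v : V) (h0 : f v = 0) : Van f v 1 := by
  intro u
  obtain ⟨Q, hQ⟩ := h.biv v 0 u 0
  have h1 : Polynomial.X ∣ Q.map (Polynomial.evalRingHom ((0:ℝ) : ℂ)) := by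
    rw [Polynomial.X_dvd_iff, Polynomial.coeff_zero_eq_eval_zero]
    have := hQ 0 0
    simp [h0] at this
    simp [← this]
  obtain ⟨q, hq⟩ := h1
  refine ⟨q, fun t => ?_⟩
  have := hQ 0 t
  rw [hq] at this
  simpa using this

theorem PolyF.cancel {m : ℕ} {h : V → ℂ} (hh : PolyF m h) (L : Submodule ℝ V) (l : V →ₗ[ℝ] ℝ)
    (hl : ∃ z ∈ L, l z ≠ 0) (h0 : ∀ x ∈ L, (l x : ℂ) * h x = 0) : ∀ x ∈ L, h x = 0 := by
  intro x hx
  obtain ⟨z, hz, hlz⟩ := hl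
  by_cases hlx : l x = 0
  · refine Van.eq_zero (m := 1) (hh.van_closure x z {0}ᶜ (by simp) ?_) le_rfl
    intro e he
    apply hh.van_one
    have := h0 (x + e • z) (L.add_mem hx (L.smul_mem _ hz))
    simpa [hlx, hlz, show e ≠ 0 from he] using this
  · have := h0 x hx
    simpa [hlx] using this

theorem PolyF.cancel_prod {ι : Type} {m : ℕ} {h : V → ℂ} (hh : PolyF m h) (L : Submodule ℝ V)
    (l : ι → V →ₗ[ℝ] ℝ) (s : Finset ι) (hl : ∀ j ∈ s, ∃ z ∈ L, l j z ≠ 0)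
    (h0 : ∀ x ∈ L, (∏ j ∈ s, (l j x : ℂ)) * h x = 0) : ∀ x ∈ L, h x = 0 := by
  induction s using Finset.induction_on with
  | empty => simpa using h0
  | insert a s ha ih =>
    apply ih (fun j hj => hl j (by simp [hj]))
    apply (hh.prod l s).cancel L (l a) (hl a (by simp))
    intro x hx
    rw [← h0 x hx, Finset.prod_insert ha, mul_assoc]

theorem PolyF.div_prod {ι : Type} {m : ℕ} {f : V → ℂ} (hf : PolyF m f)
    (l : ι → V →ₗ[ℝ] ℝ) (s : Finset ι) (hne : ∀ j ∈ s, l j ≠ 0)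
    (hl : ∀ j ∈ s, ∀ k ∈ s, j ≠ k → ∃ z, l j z = 0 ∧ l k z ≠ 0)
    (h0 : ∀ j ∈ s, ∀ x, l j x = 0 → f x = 0) :
    ∃ g, PolyF (m - s.card) g ∧ ∀ x, f x = (∏ j ∈ s, (l j x : ℂ)) * g x := by
  induction s using Finset.induction_on with
  | empty => exact ⟨f, by simpa using hf, by simp⟩
  | insert a s ha ih =>
    obtain ⟨g, pg, eg⟩ := ih (fun j hj => hne j (by simp [hj]))
      (fun j hj k hk => hl j (by simp [hj]) k (by simp [hk])) (fun j hj => h0 j (by simp [hj]))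
    have : ∀ x, l a x = 0 → g x = 0 := by
      have := pg.cancel_prod (LinearMap.ker (l a)) l s (fun j hj => by
        obtain ⟨z, h1, h2⟩ := hl a (by simp) j (by simp [hj]) (by rintro rfl; exact ha hj)
        exact ⟨z, by simpa using h1, h2⟩) (fun x hx => by
        rw [← eg]; exact h0 a (by simp) x (by simpa using hx))
      intro x hx; exact this x (by simpa using hx)
    obtain ⟨g', pg', eg'⟩ := pg.div (l a) (hne a (by simp)) this
    refine ⟨g', ?_, fun x => ?_⟩
    · rw [Finset.card_insert_of_notMem ha]
      simpa [Nat.sub_sub] using pg'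
    · rw [eg, eg', Finset.prod_insert ha]; ring

open scoped Polynomial in
theorem PolyF.van_div {m k : ℕ} {h : V → ℂ} (hh : PolyF m h) (l : V →ₗ[ℝ] ℝ) (hl : l ≠ 0)
    (v : V) (hv : Van (fun x => (l x : ℂ) * h x) v k) :
    Van h v (k - if l v = 0 then 1 else 0) := by
  intro u
  split_ifs with h0
  · rcases Nat.eq_zero_or_pos k with rfl | hk
    · obtain ⟨Q, hQ⟩ := hh.biv v 0 u 0
      exact ⟨_, fun t => by simpa using hQ 0 t⟩
    obtain ⟨w, hw⟩ : ∃ w, l w ≠ 0 := by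
      by_contra hc; push Not at hc; exact hl (LinearMap.ext hc)
    apply hh.closure v 0 u w {e | l u + e * l w ≠ 0}
    · refine Set.Finite.subset (Set.finite_singleton (- l u / l w)) ?_
      intro e he
      simp only [Set.mem_compl_iff, Set.mem_ofPred_eq, not_not] at he
      simp only [Set.mem_singleton_iff]
      field_simp; linarith
    · intro e he
      obtain ⟨q, hq⟩ := hv (u + e • w)
      obtain ⟨Q, hQ⟩ := hh.biv v 0 (u + e • w) 0
      have hQ' : ∀ t : ℝ, h (v + t • (u + e • w)) = ((Q.map (Polynomial.evalRingHom ((0:ℝ) : ℂ))).eval (t : ℂ)) := fun t => by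
        simpa using hQ 0 t
      set R := Q.map (Polynomial.evalRingHom ((0:ℝ) : ℂ))
      have he' : ((l u + e * l w : ℝ) : ℂ) ≠ 0 := by exact_mod_cast he
      have : Polynomial.C ((l u + e * l w : ℝ) : ℂ) * Polynomial.X * R = Polynomial.X ^ k * q := by
        apply poly_eq_of_real Set.univ Set.infinite_univ
        intro t _
        have := hq t
        simp only [hQ', map_add, map_smul, h0, smul_eq_mul] at this
        simp only [Polynomial.eval_mul, Polynomial.eval_pow, Polynomial.eval_X, Polynomial.eval_C, ← this]
        push_cast; ring
      have h2 : Polynomial.C ((l u + e * l w : ℝ) : ℂ) * R = Polynomial.X ^ (k - 1) * q := by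
        apply mul_left_cancel₀ (Polynomial.X_ne_zero (R := ℂ))
        obtain ⟨k, rfl⟩ : ∃ k', k = k' + 1 := ⟨k - 1, by omega⟩
        simp only [Nat.add_sub_cancel]
        rw [pow_succ] at this
        linear_combination this
      refine ⟨Polynomial.C ((l u + e * l w : ℝ) : ℂ)⁻¹ * q, fun t => ?_⟩
      have h3 := congrArg (fun p => p.eval (t : ℂ)) h2
      simp only [Polynomial.eval_mul, Polynomial.eval_pow, Polynomial.eval_X, Polynomial.eval_C] at h3 ⊢
      simp only [add_zero, smul_zero, hQ']
      field_simp
      linear_combination h3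
  · obtain ⟨q, hq⟩ := hv u
    obtain ⟨Q, hQ⟩ := hh.biv v 0 u 0
    have hQ' : ∀ t : ℝ, h (v + t • u) = ((Q.map (Polynomial.evalRingHom ((0:ℝ) : ℂ))).eval (t : ℂ)) := fun t => by
      simpa using hQ 0 t
    set R := Q.map (Polynomial.evalRingHom ((0:ℝ) : ℂ))
    have this : (Polynomial.C (l v : ℂ) + Polynomial.X * Polynomial.C (l u : ℂ)) * R = Polynomial.X ^ k * q := by
      apply poly_eq_of_real Set.univ Set.infinite_univ
      intro t _
      have := hq t
      simp only [hQ', map_add, map_smul, smul_eq_mul] at this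
      simp only [Polynomial.eval_mul, Polynomial.eval_pow, Polynomial.eval_X, Polynomial.eval_C, ← this, Polynomial.eval_add]
      push_cast; ring
    have hd : Polynomial.X ^ k ∣ (Polynomial.C (l v : ℂ) + Polynomial.X * Polynomial.C (l u : ℂ)) * R := ⟨q, this⟩
    have hX : ¬ Polynomial.X ∣ (Polynomial.C (l v : ℂ) + Polynomial.X * Polynomial.C (l u : ℂ)) := by
      rw [Polynomial.X_dvd_iff]; simpa using h0
    have hd2 : Polynomial.X ^ k ∣ R := (Polynomial.prime_X.pow_dvd_of_dvd_mul_left k hX hd)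
    obtain ⟨r, hr⟩ := hd2
    exact ⟨r, fun t => by rw [hQ', hr]; simp⟩

theorem PolyF.van_div_prod {ι : Type} {m k : ℕ} {h : V → ℂ} (hh : PolyF m h)
    (l : ι → V →ₗ[ℝ] ℝ) (s : Finset ι) (hl : ∀ j ∈ s, l j ≠ 0)
    (v : V) (hv : Van (fun x => (∏ j ∈ s, (l j x : ℂ)) * h x) v k) :
    Van h v (k - (s.filter (fun j => l j v = 0)).card) := by
  induction s using Finset.induction_on generalizing k with
  | empty => simpa using hv
  | insert a s ha ih =>
    have h1 := (hh.prod l s).van_div (l a) (hl a (by simp)) v (k := k) (by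
      convert hv using 2
      rw [Finset.prod_insert ha, mul_assoc])
    have h2 := ih (fun j hj => hl j (by simp [hj])) h1
    convert h2 using 1
    rw [Finset.filter_insert]
    split_ifs with h0
    · rw [Finset.card_insert_of_notMem (by simp [ha])]; omega
    · omega
end

/-- An irredundantly described pointed full-dimensional polyhedral cone. -/
structure PCone {V : Type} [AddCommGroup V] [Module ℝ V] {ι : Type}
    (l : ι → V →ₗ[ℝ] ℝ) : Prop where
  pointed : ∀ x, (∀ i, l i x = 0) → x = 0
  facet : ∀ i, ∃ x, l i x = 0 ∧ ∀ j, j ≠ i → 0 < l j x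
  inter : ∃ c, ∀ i, 0 < l i c

/-- Facets `i`, `j` are adjacent. -/
def FAdj {V : Type} [AddCommGroup V] [Module ℝ V] {ι : Type}
    (l : ι → V →ₗ[ℝ] ℝ) (i j : ι) : Prop :=
  j ≠ i ∧ ∃ x, l i x = 0 ∧ l j x = 0 ∧ ∀ k, k ≠ i → k ≠ j → 0 < l k x

theorem FAdj.symm {V : Type} [AddCommGroup V] [Module ℝ V] {ι : Type}
    {l : ι → V →ₗ[ℝ] ℝ} {i j : ι} (h : FAdj l i j) : FAdj l j i := by
  obtain ⟨h1, x, h2, h3, h4⟩ := h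
  exact ⟨h1.symm, x, h3, h2, fun k a b => h4 k b a⟩

theorem small_eps {ι : Type} (s : Finset ι) (a b : ι → ℝ) (h : ∀ i ∈ s, 0 < a i) :
    ∃ e : ℝ, 0 < e ∧ ∀ i ∈ s, 0 < a i + e * b i := by
  induction s using Finset.induction_on with
  | empty => exact ⟨1, one_pos, by simp⟩
  | insert k s hk ih =>
    obtain ⟨e, he, h1⟩ := ih (fun i hi => h i (by simp [hi]))
    have hk' := h k (by simp)
    set e' := min e (a k / (2 * (|b k| + 1))) with he'
    have hpos : 0 < e' := lt_min he (by positivity)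
    refine ⟨e', hpos, fun i hi => ?_⟩
    rcases Finset.mem_insert.1 hi with rfl | hi
    · have h2 : e' ≤ a i / (2 * (|b i| + 1)) := min_le_right _ _
      rw [le_div_iff₀ (by positivity)] at h2
      have h3 : -|b i| ≤ b i := neg_abs_le _
      nlinarith [abs_nonneg (b i)]
    · have h2 : e' ≤ e := min_le_left _ _
      have h3 := h1 i hi
      have h4 := h i (by simp [hi])
      by_cases hb : 0 ≤ b i
      · positivity
      · nlinarith

namespace PCone
set_option linter.unusedSectionVars false
variable {V : Type} [AddCommGroup V] [Module ℝ V] {ι : Type} [Fintype ι] {l : ι → V →ₗ[ℝ] ℝ}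

theorem three [FiniteDimensional ℝ V] (h : PCone l) {i j k : ι} (hij : i ≠ j) (hik : i ≠ k)
    (hjk : j ≠ k) : ∃ x, l i x = 0 ∧ l j x = 0 ∧ l k x ≠ 0 := by
  by_contra hc
  push Not at hc
  have : l k ∈ Submodule.span ℝ (Set.range ![l i, l j]) := by
    apply mem_span_of_iInf_ker_le_ker
    intro x hx
    simp only [Submodule.mem_iInf, LinearMap.mem_ker] at hx ⊢
    exact hc x (hx 0) (hx 1)
  rw [Submodule.mem_span_range_iff_exists_fun] at this
  obtain ⟨c, hcc⟩ := this
  have e : ∀ x, l k x = c 0 * l i x + c 1 * l j x := by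
    intro x; rw [← hcc]; simp
  obtain ⟨xi, h1, h2⟩ := h.facet i
  obtain ⟨xj, h3, h4⟩ := h.facet j
  obtain ⟨xk, h5, h6⟩ := h.facet k
  have a1 := e xi
  have a2 := e xj
  have a3 := e xk
  have b1 := h2 j hij.symm
  have b2 := h2 k hik.symm
  have b3 := h4 i hij
  have b4 := h4 k hjk.symm
  have b5 := h6 i hik
  have b6 := h6 j hjk
  rw [h1, mul_zero, zero_add] at a1
  rw [h3, mul_zero, add_zero] at a2
  rw [h5] at a3
  have c1 : 0 < c 1 := by
    by_contra hh; push Not at hh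
    nlinarith
  have c0 : 0 < c 0 := by
    by_contra hh; push Not at hh
    nlinarith
  nlinarith [mul_pos c0 b5, mul_pos c1 b6]

theorem facet_ineq [FiniteDimensional ℝ V] (h : PCone l) (i : ι) (x : V) (hx : l i x = 0)
    (hadj : ∀ j, FAdj l i j → 0 ≤ l j x) : ∀ k, 0 ≤ l k x := by
  let D : Finset ι → Prop := fun J => ∀ x, l i x = 0 → (∀ j ∈ J, 0 ≤ l j x) → ∀ k, 0 ≤ l k x
  have hD0 : D (univ.erase i) := by
    intro x hx hj k
    by_cases hk : k = i
    · rw [hk, hx]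
    · exact hj k (by simp [hk])
  obtain ⟨J, hJle, hJ⟩ := (Set.toFinite {J : Finset ι | D J}).exists_le_minimal hD0
  have hJD : D J := hJ.prop
  apply hJD x hx
  intro j hj
  apply hadj
  have hji : j ≠ i := by
    have := hJle hj
    simpa using this
  refine ⟨hji, ?_⟩
  have hnot : ¬ D (J.erase j) := by
    intro hD
    have := hJ.le_of_le hD (Finset.erase_subset j J) hj
    simp at this
  simp only [D] at hnot
  push Not at hnot
  obtain ⟨x, hx0, hx1, k, hk⟩ := hnot
  have hjx : l j x < 0 := by
    by_contra hc; push Not at hc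
    have := hJD x hx0 (fun m hm => by
      by_cases hmj : m = j
      · rw [hmj]; exact hc
      · exact hx1 m (by simp [hm, hmj])) k
    linarith
  obtain ⟨c, hc0, hc1⟩ := h.facet i
  have hcj := hc1 j hji
  set y := l j c • x + (-l j x) • c with hy
  have hyi : l i y = 0 := by simp [hy, hx0, hc0]
  have hyj : l j y = 0 := by simp [hy]; ring
  have hyJ : ∀ k ∈ J.erase j, 0 < l k y := by
    intro k hk
    have h1 := hx1 k hk
    have h2 := hc1 k (by
      have := hJle (Finset.mem_of_mem_erase hk)
      simpa using this)
    simp only [hy, map_add, map_smul, smul_eq_mul]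
    have := mul_pos (neg_pos.2 hjx) h2
    have := mul_nonneg hcj.le h1
    linarith
  have hynn := hJD y hyi (fun k hk => by
    by_cases hkj : k = j
    · rw [hkj, hyj]
    · exact (hyJ k (by simp [hk, hkj])).le)
  refine ⟨y, hyi, hyj, fun k hki hkj => ?_⟩
  by_contra hcon
  have hky : l k y = 0 := le_antisymm (not_lt.1 hcon) (hynn k)
  obtain ⟨z', hz1, hz2, hz3⟩ := h.three hji.symm (Ne.symm hki) (Ne.symm hkj)
  obtain ⟨z, hzi, hzj, hzk⟩ : ∃ z, l i z = 0 ∧ l j z = 0 ∧ l k z < 0 := by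
    rcases lt_or_gt_of_ne hz3 with hlt | hlt
    · exact ⟨z', hz1, hz2, hlt⟩
    · exact ⟨-z', by simp [hz1], by simp [hz2], by simpa using hlt⟩
  obtain ⟨e, he, hE⟩ := small_eps (J.erase j) (fun m => l m y) (fun m => l m z) hyJ
  have := hJD (y + e • z) (by simp [hyi, hzi]) (fun m hm => by
    by_cases hmj : m = j
    · rw [hmj]; simp [hyj, hzj]
    · simpa using (hE m (by simp [hm, hmj])).le) k
  simp [hky] at this
  nlinarith

/-- Restricted functionals on a facet. -/
def res (l : ι → V →ₗ[ℝ] ℝ) (i : ι) : {j // FAdj l i j} → (LinearMap.ker (l i)) →ₗ[ℝ] ℝ :=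
  fun j => (l j).comp (LinearMap.ker (l i)).subtype

theorem facet_cone [FiniteDimensional ℝ V] (h : PCone l) (i : ι) : PCone (res l i) where
  pointed := by
    rintro ⟨x, hx⟩ h0
    have hx' : l i x = 0 := hx
    have h1 := h.facet_ineq i x hx' (fun j hj => (h0 ⟨j, hj⟩).ge)
    have h2 := h.facet_ineq i (-x) (by simp [hx']) (fun j hj => by
      have : l j x = 0 := h0 ⟨j, hj⟩
      simp [this])
    have := h.pointed x (fun k => le_antisymm (by simpa using h2 k) (h1 k))
    exact Subtype.ext this
  facet := by
    rintro ⟨j, hj1, x, h1, h2, h3⟩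
    refine ⟨⟨x, h1⟩, h2, ?_⟩
    rintro ⟨k, hk⟩ hne
    exact h3 k hk.1 (fun hh => hne (Subtype.ext hh))
  inter := by
    obtain ⟨c, h1, h2⟩ := h.facet i
    exact ⟨⟨c, h1⟩, fun k => h2 k k.2.1⟩

theorem exists_adj [FiniteDimensional ℝ V] (h : PCone l) (i : ι)
    (hN : 2 ≤ Module.finrank ℝ V) : ∃ j, FAdj l i j := by
  by_contra hc
  push Not at hc
  have h1 : ∀ x : LinearMap.ker (l i), x = 0 := fun x =>
    (h.facet_cone i).pointed x (fun j => absurd j.2 (hc j))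
  have h2 : Module.finrank ℝ (LinearMap.ker (l i)) = 0 := by
    rw [Module.finrank_zero_iff]
    exact ⟨fun a b => by rw [h1 a, h1 b]⟩
  have h3 := (l i).finrank_range_add_finrank_ker
  have h4 := Submodule.finrank_le (LinearMap.range (l i))
  simp at h4
  omega

theorem connected [FiniteDimensional ℝ V] (h : PCone l) (S : Set ι) (i0 : ι) (hi0 : i0 ∈ S)
    (hS : ∀ i ∈ S, ∀ j, FAdj l i j → j ∈ S) (hN : 1 ≤ Module.finrank ℝ V) : ∀ k, k ∈ S := by
  intro k
  by_contra hk
  by_cases hN2 : 2 ≤ Module.finrank ℝ V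
  · obtain ⟨j0, hj0⟩ := h.exists_adj i0 hN2
    have hj0S := hS i0 hi0 j0 hj0
    obtain ⟨c, hc⟩ := h.inter
    obtain ⟨xk, hxk, hxk'⟩ := h.facet k
    obtain ⟨e, he, hE⟩ := small_eps (univ.erase k) (fun m => l m xk) (fun m => - l m c)
      (fun m hm => hxk' m (by simpa using hm))
    set u := xk - e • c with hu
    have huk : l k u < 0 := by
      simp [hu, hxk]; exact mul_pos he (hc k)
    have huS : ∀ m ∈ S, 0 < l m u := by
      intro m hm
      have := hE m (by simp; rintro rfl; exact hk hm)
      simp [hu]; linarith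
    have claim : ∀ z, (∃ j ∈ S, l j z < 0) → 0 < l k z := by
      rintro z ⟨j, hj, hjz⟩
      obtain ⟨m, hm, hmin⟩ := (univ.filter (fun m => m ∈ S ∧ l m z < 0)).exists_min_image
        (fun m => l m u / (- l m z)) ⟨j, by simp [hj, hjz]⟩
      simp only [mem_filter, mem_univ, true_and] at hm hmin
      obtain ⟨hmS, hmz⟩ := hm
      set t := l m u / (- l m z) with ht
      have htpos : 0 < t := div_pos (huS m hmS) (by linarith)
      have hm0 : l m (u + t • z) = 0 := by
        have hmz' : l m z ≠ 0 := hmz.ne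
        rw [map_add, map_smul, ht, smul_eq_mul]; field_simp; ring
      have := h.facet_ineq m (u + t • z) hm0 (fun j hj => by
        have hjS := hS m hmS j hj
        by_cases hjz : l j z < 0
        · have h1 := hmin j ⟨hjS, hjz⟩
          rw [le_div_iff₀ (by linarith)] at h1
          simp; linarith
        · push Not at hjz
          have := huS j hjS
          simp; positivity) k
      simp at this
      by_contra hcon
      push Not at hcon
      nlinarith
    obtain ⟨xi, hxi, hxi'⟩ := h.facet i0
    obtain ⟨xj, hxj, hxj'⟩ := h.facet j0
    have h1 := hxi' j0 hj0.1
    have h2 := hxj' i0 hj0.1.symm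
    have c1 := claim (xj - xi) ⟨j0, hj0S, by simp [hxj, h1]⟩
    have c2 := claim (xi - xj) ⟨i0, hi0, by simp [hxi, h2]⟩
    simp at c1 c2
    linarith
  · have hN1 : Module.finrank ℝ V = 1 := by omega
    have hki : k ≠ i0 := by rintro rfl; exact hk hi0
    obtain ⟨x, hx, hx'⟩ := h.facet i0
    have h1 := hx' k hki
    have hx0 : x ≠ 0 := by rintro rfl; simp at h1
    obtain ⟨c, hc⟩ := h.inter
    obtain ⟨a, ha⟩ := exists_smul_eq_of_finrank_eq_one hN1 hx0 c
    have := hc i0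
    rw [← ha] at this
    simp [hx] at this

end PCone

section
variable {V : Type} [AddCommGroup V] [Module ℝ V] {ι : Type}

/-- The flat through `v`. -/
def LS (l : ι → V →ₗ[ℝ] ℝ) (v : V) : Submodule ℝ V where
  carrier := {x | ∀ k, l k v = 0 → l k x = 0}
  add_mem' := by
    intro a b ha hb k hk
    simp [ha k hk, hb k hk]
  zero_mem' := by intro k _; simp
  smul_mem' := by
    intro c x hx k hk
    simp [hx k hk]

theorem mem_LS {l : ι → V →ₗ[ℝ] ℝ} {v x : V} : x ∈ LS l v ↔ ∀ k, l k v = 0 → l k x = 0 :=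
  Iff.rfl

/-- The flat through `v` is spanned by a face. -/
def FaceC (l : ι → V →ₗ[ℝ] ℝ) (v : V) : Prop :=
  ∃ y, ∀ k, (l k v = 0 → l k y = 0) ∧ (l k v ≠ 0 → 0 < l k y)

/-- The vanishing order. -/
def bd [Fintype ι] (l : ι → V →ₗ[ℝ] ℝ) (v : V) : ℕ :=
  (univ.filter (fun k => l k v = 0)).card + Module.finrank ℝ (LS l v)
    + (if FaceC l v then 0 else 1) - Module.finrank ℝ V

/-- Adjoint polynomial functions. -/
structure Adjt [Fintype ι] (l : ι → V →ₗ[ℝ] ℝ) (f : V → ℂ) : Prop where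
  poly : PolyF (Fintype.card ι + 1 - Module.finrank ℝ V) f
  van : ∀ v, Van f v (bd l v)

theorem Adjt.comb [Fintype ι] {l : ι → V →ₗ[ℝ] ℝ} {f g : V → ℂ} (hf : Adjt l f) (hg : Adjt l g)
    (a b : ℂ) : Adjt l (fun x => a * f x + b * g x) :=
  ⟨PolyF.add (hf.poly.smul a) (hg.poly.smul b), fun v => (hf.van v).comb (hg.van v) a b⟩

theorem gen_point [Fintype ι] (l : ι → V →ₗ[ℝ] ℝ) (L : Submodule ℝ V) (v : V) (hv : v ∈ L) :
    ∃ z ∈ L, ∃ S : Set ℝ, Sᶜ.Finite ∧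
      ∀ e ∈ S, ∀ k, l k (v + e • z) = 0 ↔ ∀ x ∈ L, l k x = 0 := by
  obtain ⟨z, hz, hz'⟩ := Module.Dual.exists_forall_mem_ne_zero_of_forall_exists L
    (fun k : {k // ¬ ∀ x ∈ L, l k x = 0} => l k) (fun k => by
      have := k.2
      push Not at this
      obtain ⟨x, hx, hx'⟩ := this
      exact ⟨x, hx, hx'⟩)
  refine ⟨z, hz, {e | ∀ k, l k z ≠ 0 → l k (v + e • z) ≠ 0}, ?_, ?_⟩
  · refine Set.Finite.subset (Set.finite_range (fun k => - l k v / l k z)) ?_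
    intro e he
    simp only [Set.mem_compl_iff, Set.mem_ofPred_eq] at he
    push Not at he
    obtain ⟨k, hk, hk'⟩ := he
    refine ⟨k, ?_⟩
    simp at hk'
    field_simp
    linarith
  · intro e he k
    constructor
    · intro h0
      by_contra hc
      exact he k (hz' ⟨k, hc⟩) h0
    · intro h
      exact h _ (L.add_mem hv (L.smul_mem _ hz))

set_option linter.unusedSectionVars false
variable [Fintype ι] {l : ι → V →ₗ[ℝ] ℝ} [FiniteDimensional ℝ V]

theorem PCone.ne_zero (h : PCone l) (i : ι) : l i ≠ 0 := by
  obtain ⟨c, hc⟩ := h.inter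
  intro h0
  have := hc i
  simp [h0] at this

theorem finrank_ker_add (m : V →ₗ[ℝ] ℝ) (hm : m ≠ 0) :
    Module.finrank ℝ (LinearMap.ker m) + 1 = Module.finrank ℝ V :=
  Module.Dual.finrank_ker_add_one_of_ne_zero hm

theorem Adjt.nonadj (h : PCone l) {f : V → ℂ} (hf : Adjt l f) {i j : ι} (hij : j ≠ i)
    (hna : ¬ FAdj l i j) (x : V) (hi : l i x = 0) (hj : l j x = 0) : f x = 0 := by
  set L : Submodule ℝ V := LinearMap.ker (l i) ⊓ LinearMap.ker (l j) with hL
  obtain ⟨z, hz, S, hS, hgen⟩ := gen_point l L x ⟨hi, hj⟩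
  refine Van.eq_zero (m := 1) (hf.poly.van_closure x z S hS fun e he => ?_) le_rfl
  have hg := hgen e he
  set w := x + e • z
  have hw : ∀ k, l k w = 0 ↔ k = i ∨ k = j := by
    intro k
    rw [hg]
    constructor
    · intro hk
      by_contra hc
      push Not at hc
      obtain ⟨y, h1, h2, h3⟩ := h.three hij.symm hc.1.symm hc.2.symm
      exact h3 (hk y ⟨h1, h2⟩)
    · rintro (rfl | rfl) y hy
      · exact hy.1
      · exact hy.2
  apply (hf.van w).mono
  have hLS : LS l w = L := by
    ext y
    simp only [mem_LS, hw, hL, Submodule.mem_inf, LinearMap.mem_ker]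
    constructor
    · intro hh; exact ⟨hh i (Or.inl rfl), hh j (Or.inr rfl)⟩
    · rintro ⟨h1, h2⟩ k (rfl | rfl) <;> assumption
  have hcard : (univ.filter (fun k => l k w = 0)).card = 2 := by
    rw [show (univ.filter (fun k => l k w = 0)) = {i, j} by ext k; simp [hw]]
    exact Finset.card_pair hij.symm
  have hF : ¬ FaceC l w := by
    rintro ⟨y, hy⟩
    apply hna
    refine ⟨hij, y, (hy i).1 ((hw i).2 (Or.inl rfl)), (hy j).1 ((hw j).2 (Or.inr rfl)), ?_⟩
    intro k h1 h2
    apply (hy k).2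
    rw [ne_eq, hw]
    tauto
  have hdim : Module.finrank ℝ V ≤ Module.finrank ℝ L + 2 := by
    have h1 := Submodule.finrank_sup_add_finrank_inf_eq (LinearMap.ker (l i)) (LinearMap.ker (l j))
    have h2 := finrank_ker_add (l i) (h.ne_zero i)
    have h3 := finrank_ker_add (l j) (h.ne_zero j)
    have h4 := Submodule.finrank_le (LinearMap.ker (l i) ⊔ LinearMap.ker (l j))
    rw [← hL] at h1
    omega
  rw [bd, hLS, hcard, if_neg hF]
  omega

/-- Facets not adjacent to facet `i`. -/
def NA (l : ι → V →ₗ[ℝ] ℝ) (i : ι) : Finset ι := univ.filter (fun j => j ≠ i ∧ ¬ FAdj l i j)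

theorem card_split (i : ι) (p : ι → Prop) [DecidablePred p] (hp : p i) :
    (univ.filter p).card = 1 + (univ.filter (fun j : {j // FAdj l i j} => p j)).card
      + ((NA l i).filter p).card := by
  have e : univ.filter p = insert i (((univ.filter (fun j : {j // FAdj l i j} => p j)).map
      (Function.Embedding.subtype _)) ∪ (NA l i).filter p) := by
    ext k
    simp only [NA, mem_filter, mem_univ, true_and, mem_insert, mem_union, mem_map,
      Function.Embedding.coe_subtype, Subtype.exists, exists_and_left, exists_prop, exists_eq_right_right]
    by_cases hk : k = i
    · simp [hk, hp]
    · tauto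
  rw [e, Finset.card_insert_of_notMem, Finset.card_union_of_disjoint, Finset.card_map]
  · ring
  · rw [Finset.disjoint_left]
    intro k hk hk'
    simp [NA] at hk hk'
    tauto
  · simp only [NA, mem_filter, mem_univ, true_and, mem_union, mem_map,
      Function.Embedding.coe_subtype, Subtype.exists, exists_and_left, exists_prop, exists_eq_right_right]
    rintro (⟨_, hh⟩ | hh)
    · exact hh.1 rfl
    · exact hh.1.1 rfl

theorem Adjt.restrict (h : PCone l) {f : V → ℂ} (hf : Adjt l f) (i : ι) :
    ∃ g : LinearMap.ker (l i) → ℂ, Adjt (PCone.res l i) g ∧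
      ∀ x : LinearMap.ker (l i), f x = (∏ j ∈ NA l i, (l j x : ℂ)) * g x := by
  have hfr := finrank_ker_add (l i) (h.ne_zero i)
  have hne : ∀ j ∈ NA l i, (l j).comp (LinearMap.ker (l i)).subtype ≠ 0 := by
    intro j hj h0
    simp only [NA, mem_filter, mem_univ, true_and] at hj
    obtain ⟨x, h1, h2⟩ := h.facet i
    have h3 := h2 j hj.1
    have := congrArg (fun m => m ⟨x, h1⟩) h0
    simp at this
    linarith
  obtain ⟨g, pg, eg⟩ := (hf.poly.comp (LinearMap.ker (l i)).subtype).div_prod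
    (fun j => (l j).comp (LinearMap.ker (l i)).subtype) (NA l i) hne (by
      intro j hj k hk hjk
      simp only [NA, mem_filter, mem_univ, true_and] at hj hk
      obtain ⟨x, h1, h2, h3⟩ := h.three hj.1.symm hk.1.symm hjk
      exact ⟨⟨x, h1⟩, h2, h3⟩) (by
      rintro j hj ⟨x, hx⟩ hjx
      simp only [NA, mem_filter, mem_univ, true_and] at hj
      exact hf.nonadj h hj.1 hj.2 x hx hjx)
  refine ⟨g, ⟨?_, ?_⟩, eg⟩
  · have hc := card_split (l := l) i (fun _ => True) trivial
    simp only [Finset.filter_true, Finset.card_univ] at hc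
    convert pg using 1
    omega
  · intro v
    set L' := LS (PCone.res l i) v with hL'
    set L := L'.map (LinearMap.ker (l i)).subtype with hL
    have hvL' : v ∈ L' := fun k hk => hk
    obtain ⟨z, hz, S, hS, hgen⟩ := gen_point l L v ⟨v, hvL', rfl⟩
    obtain ⟨z, hz', rfl⟩ := hz
    refine pg.van_closure v z S hS fun e he => ?_
    have hg := hgen e he
    set w := v + e • z with hw
    have hww : (v : V) + e • (LinearMap.ker (l i)).subtype z = (w : V) := by simp [hw]
    rw [hww] at hg
    have hwL : w ∈ L' := L'.add_mem hvL' (L'.smul_mem _ hz')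
    have hwadj : ∀ j, FAdj l i j → (l j w = 0 ↔ l j v = 0) := by
      intro j hj
      constructor
      · intro h0
        exact (hg j).1 h0 v ⟨v, hvL', rfl⟩
      · intro h0
        exact hwL ⟨j, hj⟩ h0
    have hwi : l i w = 0 := w.2
    have hLS : LS l (w : V) = L := by
      ext y
      rw [mem_LS]
      constructor
      · intro hy
        refine ⟨⟨y, hy i hwi⟩, ?_, rfl⟩
        rintro ⟨k, hk⟩ hk0
        exact hy k ((hwadj k hk).2 hk0)
      · intro hy k hk
        exact (hg k).1 hk y hy
    have hfin : Module.finrank ℝ L = Module.finrank ℝ L' :=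
      Submodule.finrank_map_subtype_eq _ _
    have hvf := (hf.van w).comp (LinearMap.ker (l i)).subtype (v := w)
    have hvg := pg.van_div_prod (fun j => (l j).comp (LinearMap.ker (l i)).subtype) (NA l i) hne w
      (k := bd l (w : V)) (by
        convert hvf using 2
        exact (eg _).symm)
    apply hvg.mono
    have hc := card_split (l := l) i (fun k => l k w = 0) hwi
    have hA : (univ.filter (fun j : {j // FAdj l i j} => l j w = 0)) =
        univ.filter (fun j : {j // FAdj l i j} => PCone.res l i j v = 0) := by
      ext j
      simp only [mem_filter, mem_univ, true_and]
      exact hwadj j j.2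
    rw [hA] at hc
    have hF : FaceC l (w : V) → FaceC (PCone.res l i) v := by
      rintro ⟨y, hy⟩
      refine ⟨⟨y, (hy i).1 hwi⟩, fun k => ⟨fun hk => ?_, fun hk => ?_⟩⟩
      · exact (hy k).1 ((hwadj k k.2).2 hk)
      · exact (hy k).2 (fun hh => hk ((hwadj k k.2).1 hh))
    have hb : (if FaceC (PCone.res l i) v then 0 else 1) ≤ (if FaceC l (w : V) then 0 else 1) := by
      split_ifs <;> first | omega | (exfalso; tauto)
    rw [bd, bd, hLS, hfin, hc, ← hL']
    simp only [LinearMap.comp_apply, Submodule.subtype_apply]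
    have arith : ∀ A B L b c N M : ℕ, N + 1 = M → b ≤ c →
        A + L + b - N ≤ 1 + A + B + L + c - M - B := by intros; omega
    exact arith _ _ _ _ _ _ _ hfr hb

end

theorem vanish_facet (N : ℕ) : ∀ (V : Type) [AddCommGroup V] [Module ℝ V] [FiniteDimensional ℝ V]
    (ι : Type) [Fintype ι] (l : ι → V →ₗ[ℝ] ℝ), Module.finrank ℝ V = N → PCone l →
    ∀ f : V → ℂ, Adjt l f → ∀ i, (∀ x, l i x = 0 → f x = 0) → ∀ x, f x = 0 := by
  induction N with
  | zero =>
    intro V _ _ _ ι _ l hN h f hf i h0 x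
    apply h0
    have : Subsingleton V := Module.finrank_zero_iff.1 hN
    rw [Subsingleton.elim x 0, map_zero]
  | succ N ih =>
    intro V _ _ _ ι _ l hN h f hf i h0
    have hall := h.connected {j | ∀ x, l j x = 0 → f x = 0} i h0 (by
      intro j hj k hjk
      obtain ⟨g, hg, eg⟩ := hf.restrict h k
      have hfr := finrank_ker_add (l k) (h.ne_zero k)
      have hg0 := ih (LinearMap.ker (l k)) _ (PCone.res l k) (by omega) (h.facet_cone k) g hg
        ⟨j, hjk.symm⟩ (by
          have := hg.poly.cancel_prod (LinearMap.ker (PCone.res l k ⟨j, hjk.symm⟩))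
            (fun j => (l j).comp (LinearMap.ker (l k)).subtype) (NA l k) (by
              intro m hm
              simp only [NA, mem_filter, mem_univ, true_and] at hm
              have hmj : j ≠ m := by
                rintro rfl; exact hm.2 hjk.symm
              obtain ⟨x, h1, h2, h3⟩ := h.three hjk.1 hm.1.symm hmj
              exact ⟨⟨x, h1⟩, h2, h3⟩) (by
              intro x hx
              refine (eg x).symm.trans ?_
              exact hj x hx)
          exact this)
      intro x hx
      have := eg ⟨x, hx⟩
      rw [hg0] at this
      simpa using this) (by omega)
    obtain ⟨g, pg, eg⟩ := hf.poly.div_prod l univ (fun j _ => h.ne_zero j) (by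
      intro j _ k _ hjk
      obtain ⟨x, h1, h2⟩ := h.facet j
      exact ⟨x, h1, (h2 k hjk.symm).ne'⟩) (fun j _ => hall j)
    intro x
    rw [eg, pg.eq_zero (by rw [Finset.card_univ, hN]; omega), mul_zero]

theorem adjt_unique (N : ℕ) : ∀ (V : Type) [AddCommGroup V] [Module ℝ V] [FiniteDimensional ℝ V]
    (ι : Type) [Fintype ι] (l : ι → V →ₗ[ℝ] ℝ), Module.finrank ℝ V = N → PCone l →
    ∀ f g : V → ℂ, Adjt l f → Adjt l g →
      ∃ a b : ℂ, (a, b) ≠ (0, 0) ∧ ∀ x, a * f x + b * g x = 0 := by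
  induction N with
  | zero =>
    intro V _ _ _ ι _ l hN h f g hf hg
    have : Subsingleton V := Module.finrank_zero_iff.1 hN
    by_cases hf0 : f 0 = 0
    · refine ⟨1, 0, by simp, fun x => ?_⟩
      rw [Subsingleton.elim x 0, hf0]; simp
    · refine ⟨g 0, - f 0, by simp [hf0], fun x => ?_⟩
      rw [Subsingleton.elim x 0]; ring
  | succ N ih =>
    intro V _ _ _ ι _ l hN h f g hf hg
    obtain ⟨i⟩ : Nonempty ι := by
      by_contra hc
      rw [not_nonempty_iff] at hc
      have : Subsingleton V := ⟨fun a b => by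
        rw [h.pointed a (fun i => hc.elim i), h.pointed b (fun i => hc.elim i)]⟩
      have := Module.finrank_zero_of_subsingleton (R := ℝ) (M := V)
      omega
    obtain ⟨f', hf', ef⟩ := hf.restrict h i
    obtain ⟨g', hg', eg⟩ := hg.restrict h i
    have hfr := finrank_ker_add (l i) (h.ne_zero i)
    obtain ⟨a, b, hab, e⟩ := ih (LinearMap.ker (l i)) _ (PCone.res l i) (by omega)
      (h.facet_cone i) f' g' hf' hg'
    refine ⟨a, b, hab, ?_⟩
    apply vanish_facet (N + 1) V ι l hN h _ (hf.comb hg a b) i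
    intro x hx
    have h1 := ef ⟨x, hx⟩
    have h2 := eg ⟨x, hx⟩
    have h3 := e ⟨x, hx⟩
    simp only at h1 h2
    rw [h1, h2]
    linear_combination (∏ j ∈ NA l i, (l j x : ℂ)) * h3

end AuxMain

/-- The linear form attached to the degree one part. -/
def TT (n : ℕ) : MvPolynomial (Fin (n + 1)) ℝ →ₗ[ℝ] ((Fin (n + 1) → ℝ) →ₗ[ℝ] ℝ) where
  toFun p := ∑ i, coeff (Finsupp.single i 1) p • (LinearMap.proj i : (Fin (n + 1) → ℝ) →ₗ[ℝ] ℝ)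
  map_add' p q := by simp [add_smul, Finset.sum_add_distrib]
  map_smul' c p := by simp [mul_smul, Finset.smul_sum]

theorem TT_X {n : ℕ} (i : Fin (n + 1)) : TT n (X i) = LinearMap.proj i := by
  simp only [TT, LinearMap.coe_mk, AddHom.coe_mk, coeff_X, Finsupp.single_left_inj one_ne_zero]
  simp

theorem TT_eval {n : ℕ} {p : MvPolynomial (Fin (n + 1)) ℝ} (hp : p.IsHomogeneous 1)
    (x : Fin (n + 1) → ℝ) : TT n p x = eval x p := by
  have h : p ∈ Submodule.span ℝ (Set.range (X : Fin (n + 1) → MvPolynomial (Fin (n + 1)) ℝ)) := by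
    rw [← homogeneousSubmodule_one_eq_span_X]
    exact hp
  clear hp
  induction h using Submodule.span_induction with
  | mem p h =>
    obtain ⟨i, rfl⟩ := h
    simp [TT_X]
  | zero => simp
  | add p q _ _ h1 h2 =>
    rw [map_add, LinearMap.add_apply, h1, h2, map_add]
  | smul c p _ h => rw [map_smul, LinearMap.smul_apply, h, smul_eval, smul_eq_mul]

theorem TT_inj {n : ℕ} {p q : MvPolynomial (Fin (n + 1)) ℝ} (hp : p.IsHomogeneous 1)
    (hq : q.IsHomogeneous 1) (h : TT n p = TT n q) : p = q := by
  apply MvPolynomial.funext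
  intro x
  rw [← TT_eval hp, ← TT_eval hq, h]

/-- Evaluation at real points. -/
def evC {n : ℕ} (f : MvPolynomial (Fin (n + 1)) ℂ) (x : Fin (n + 1) → ℝ) : ℂ :=
  eval (fun i => (x i : ℂ)) f

theorem PolyF.eval_hom {n m : ℕ} {f : MvPolynomial (Fin (n + 1)) ℂ} (hf : f.IsHomogeneous m) :
    PolyF (m + 1) (evC f) ∧ ∀ (t : ℝ) (x : Fin (n + 1) → ℝ), evC f (t • x) = (t : ℂ) ^ m * evC f x := by
  have h : f ∈ (homogeneousSubmodule (Fin (n + 1)) ℂ 1) ^ m := by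
    rw [homogeneousSubmodule_one_pow]
    exact hf
  clear hf
  induction h using Submodule.pow_induction_on_left' with
  | algebraMap r =>
    have : evC (algebraMap ℂ (MvPolynomial (Fin (n + 1)) ℂ) r) = fun _ => r := by
      funext x
      simp [evC]
    rw [this]
    exact ⟨PolyF.const 0 r, by simp⟩
  | add x y i hx hy h1 h2 =>
    have : evC (x + y) = fun z => evC x z + evC y z := by
      funext z
      simp [evC]
    rw [this]
    exact ⟨PolyF.add h1.1 h2.1, fun t z => by simp only [h1.2, h2.2]; ring⟩
  | mem_mul p hp i x hx h =>
    rw [homogeneousSubmodule_one_eq_span_X] at hp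
    induction hp using Submodule.span_induction with
    | mem p hp =>
      obtain ⟨k, rfl⟩ := hp
      have : evC (X k * x) = fun z => (((LinearMap.proj k : (Fin (n + 1) → ℝ) →ₗ[ℝ] ℝ) z : ℝ) : ℂ) * evC x z := by
        funext z
        simp [evC]
      rw [this]
      refine ⟨PolyF.mul _ h.1, fun t z => ?_⟩
      simp only [h.2]
      simp
      ring
    | zero =>
      have : evC (0 * x) = fun _ => 0 := by
        funext z
        simp [evC]
      rw [this]
      exact ⟨PolyF.zero _, by simp⟩
    | add p q _ _ h1 h2 =>
      have : evC ((p + q) * x) = fun z => evC (p * x) z + evC (q * x) z := by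
        funext z
        simp [evC]
        ring
      rw [this]
      exact ⟨PolyF.add h1.1 h2.1, fun t z => by simp only [h1.2, h2.2]; ring⟩
    | smul c p _ h1 =>
      have : evC ((c • p) * x) = fun z => c * evC (p * x) z := by
        funext z
        simp [evC]
      rw [this]
      exact ⟨PolyF.smul h1.1 c, fun t z => by simp only [h1.2]; ring⟩

theorem Van.of_mem {n k : ℕ} {f : MvPolynomial (Fin (n + 1)) ℂ} {v : Fin (n + 1) → ℝ}
    (hf : f ∈ pointIdealC v ^ k) : Van (evC f) v k := by
  intro u
  let φ : MvPolynomial (Fin (n + 1)) ℂ →+* Polynomial ℂ :=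
    (aeval (fun i => Polynomial.C (v i : ℂ) + Polynomial.X * Polynomial.C (u i : ℂ)) :
      MvPolynomial (Fin (n + 1)) ℂ →ₐ[ℂ] Polynomial ℂ).toRingHom
  have hev : ∀ (p : MvPolynomial (Fin (n + 1)) ℂ) (t : ℝ),
      evC p (v + t • u) = (φ p).eval (t : ℂ) := by
    intro p t
    have : (Polynomial.evalRingHom (t : ℂ)).comp φ = (eval (fun i => (((v + t • u) i : ℝ) : ℂ))) := by
      apply MvPolynomial.ringHom_ext
      · intro r
        simp [φ]
      · intro i
        simp [φ]
        ring
    rw [evC, ← this]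
    rfl
  have h1 : (pointIdealC v).map φ ≤ Ideal.span {Polynomial.X} := by
    rw [pointIdealC, Ideal.map_span, Ideal.span_le]
    rintro _ ⟨p, hp, rfl⟩
    rw [SetLike.mem_coe, Ideal.mem_span_singleton, Polynomial.X_dvd_iff,
      Polynomial.coeff_zero_eq_eval_zero]
    have := hev p 0
    simp only [zero_smul, add_zero, Complex.ofReal_zero] at this
    rw [← this]
    exact hp.2
  have h2 : φ f ∈ Ideal.span {(Polynomial.X : Polynomial ℂ) ^ k} := by
    rw [← Ideal.span_singleton_pow]
    refine Ideal.pow_right_mono h1 k ?_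
    rw [← Ideal.map_pow]
    exact Ideal.mem_map_of_mem φ hf
  obtain ⟨q, hq⟩ := Ideal.mem_span_singleton.1 h2
  refine ⟨q, fun t => ?_⟩
  rw [hev, hq]
  simp

theorem evC_final {n : ℕ} (f : MvPolynomial (Fin (n + 1)) ℂ) (h : ∀ x, evC f x = 0) : f = 0 := by
  apply MvPolynomial.funext_set (fun _ => Set.range Complex.ofReal)
  · intro i
    exact Set.infinite_range_of_injective Complex.ofReal_injective
  · intro x hx
    choose y hy using fun i => hx i (Set.mem_univ i)
    have := h y
    rw [evC] at this
    simp only [hy] at this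
    simpa using this


theorem dim_lift {n : ℕ} {A : Set (Fin n → ℝ)} (hA : A.Nonempty) :
    Module.finrank ℝ (affineSpan ℝ A).direction + 1 ≤
      Module.finrank ℝ (Submodule.span ℝ (lift1 '' A)) := by
  let J : (Fin n → ℝ) →ₗ[ℝ] (Fin (n + 1) → ℝ) :=
    { toFun := fun y => Fin.cons 0 y
      map_add' := by
        intro x y; funext i; refine Fin.cases ?_ (fun j => ?_) i <;> simp
      map_smul' := by
        intro c y; funext i; refine Fin.cases ?_ (fun j => ?_) i <;> simp }
  have hJ : Function.Injective J := by
    intro x y h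
    funext j
    have := congrFun h j.succ
    simpa [J] using this
  have hle : ((affineSpan ℝ A).direction).map J ≤ Submodule.span ℝ (lift1 '' A) := by
    rw [direction_affineSpan, vectorSpan_def, Submodule.map_span, Submodule.span_le]
    rintro _ ⟨_, ⟨a, ha, b, hb, rfl⟩, rfl⟩
    have : J (a -ᵥ b) = lift1 a - lift1 b := by
      funext i; refine Fin.cases ?_ (fun j => ?_) i <;> simp [J, lift1]
    rw [SetLike.mem_coe, this]
    exact Submodule.sub_mem _ (Submodule.subset_span ⟨a, ha, rfl⟩)
      (Submodule.subset_span ⟨b, hb, rfl⟩)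
  have hlt : ((affineSpan ℝ A).direction).map J < Submodule.span ℝ (lift1 '' A) := by
    refine lt_of_le_of_ne hle fun h => ?_
    obtain ⟨a, ha⟩ := hA
    have h1 : lift1 a ∈ Submodule.span ℝ (lift1 '' A) := Submodule.subset_span ⟨a, ha, rfl⟩
    rw [← h] at h1
    obtain ⟨y, _, hy⟩ := h1
    have := congrFun hy 0
    simp [J, lift1] at this
  have := Submodule.finrank_lt_finrank_of_lt hlt
  rw [← LinearEquiv.finrank_eq (Submodule.equivMapOfInjective J hJ _)] at this
  omega

theorem dim_lift_le {n : ℕ} {A : Set (Fin n → ℝ)} (hA : A.Nonempty)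
    (M : Submodule ℝ (Fin (n + 1) → ℝ)) (h : ∀ y ∈ A, lift1 y ∈ M) :
    Module.finrank ℝ (affineSpan ℝ A).direction + 1 ≤ Module.finrank ℝ M := by
  refine (dim_lift hA).trans (Submodule.finrank_mono ?_)
  rw [Submodule.span_le]
  rintro _ ⟨y, hy, rfl⟩
  exact h y hy

theorem sum_point {V : Type} [AddCommGroup V] [Module ℝ V] {ι : Type} [Fintype ι]
    (l : ι → V →ₗ[ℝ] ℝ) (B : Set V) (hB : ∀ y ∈ B, ∀ i, 0 ≤ l i y) :
    ∃ x, ∀ k, ((∃ y ∈ B, l k y ≠ 0) → 0 < l k x) ∧ ((∀ y ∈ B, l k y = 0) → l k x = 0) := by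
  let F : ι → V := fun k => if h : ∃ y ∈ B, l k y ≠ 0 then h.choose else 0
  have hF : ∀ k, F k = 0 ∨ F k ∈ B := by
    intro k
    by_cases h : ∃ y ∈ B, l k y ≠ 0
    · right
      simp only [F, dif_pos h]
      exact h.choose_spec.1
    · left
      simp only [F, dif_neg h]
  have hF0 : ∀ k j, 0 ≤ l k (F j) := by
    intro k j
    rcases hF j with h | h
    · rw [h, map_zero]
    · exact hB _ h k
  refine ⟨∑ k, F k, fun k => ⟨fun h => ?_, fun h => ?_⟩⟩
  · rw [map_sum]
    refine Finset.sum_pos' (fun j _ => hF0 k j) ⟨k, Finset.mem_univ k, ?_⟩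
    refine lt_of_le_of_ne (hF0 k k) (Ne.symm ?_)
    simp only [F, dif_pos h]
    exact h.choose_spec.2
  · rw [map_sum]
    refine Finset.sum_eq_zero fun j _ => ?_
    rcases hF j with h' | h'
    · rw [h', map_zero]
    · exact h _ h'

section
variable {n d : ℕ} {ℓ : Fin d → MvPolynomial (Fin (n + 1)) ℝ}

/-- The linear forms. -/
def lf (ℓ : Fin d → MvPolynomial (Fin (n + 1)) ℝ) (i : Fin d) : (Fin (n + 1) → ℝ) →ₗ[ℝ] ℝ :=
  TT n (ℓ i)

theorem lf_eval (hP : IsPolytopeSetup ℓ) (i : Fin d) (x) : eval x (ℓ i) = lf ℓ i x :=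
  (TT_eval (hP.hhom i) x).symm

theorem lf_ne (hP : IsPolytopeSetup ℓ) (i : Fin d) : lf ℓ i ≠ 0 := by
  intro h
  apply hP.hne i
  apply TT_inj (hP.hhom i) (isHomogeneous_zero _ _ _)
  rw [map_zero]
  exact h

theorem mem_poly (hP : IsPolytopeSetup ℓ) {y} : y ∈ polytopeOf ℓ ↔ ∀ i, 0 ≤ lf ℓ i (lift1 y) := by
  simp only [polytopeOf, lf_eval hP]
  rfl

theorem poly_ne (hP : IsPolytopeSetup ℓ) : (polytopeOf ℓ).Nonempty := by
  obtain ⟨y, hy⟩ := hP.hfacet_ne ⟨0, by have := hP.hd; omega⟩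
  exact ⟨y, hy.1⟩

theorem ex_pos (hP : IsPolytopeSetup ℓ) (i : Fin d) :
    ∃ y ∈ polytopeOf ℓ, lf ℓ i (lift1 y) ≠ 0 := by
  by_contra hc
  push Not at hc
  have h1 := dim_lift_le (poly_ne hP) (LinearMap.ker (lf ℓ i)) hc
  have h2 := finrank_ker_add (lf ℓ i) (lf_ne hP i)
  rw [hP.hfull, AffineSubspace.direction_top, finrank_top] at h1
  simp only [Module.finrank_fin_fun] at h1 h2
  omega

theorem ex_facet (hP : IsPolytopeSetup ℓ) {i j : Fin d} (hij : j ≠ i) :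
    ∃ y ∈ facetOf ℓ i, lf ℓ j (lift1 y) ≠ 0 := by
  by_contra hc
  push Not at hc
  have h1 := dim_lift_le (hP.hfacet_ne i) (LinearMap.ker (lf ℓ i) ⊓ LinearMap.ker (lf ℓ j))
    (fun y hy => ⟨by
      have := hy.2
      rw [lf_eval hP] at this
      exact this, hc y hy⟩)
  have h2 := finrank_ker_add (lf ℓ i) (lf_ne hP i)
  rw [hP.hfacet i] at h1
  have hn := hP.hn
  simp only [Module.finrank_fin_fun] at h2
  have h3 : LinearMap.ker (lf ℓ i) ⊓ LinearMap.ker (lf ℓ j) = LinearMap.ker (lf ℓ i) :=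
    Submodule.eq_of_le_of_finrank_le inf_le_left (by omega)
  have h4 : lf ℓ j ∈ Submodule.span ℝ (Set.range fun _ : Unit => lf ℓ i) := by
    apply mem_span_of_iInf_ker_le_ker
    simpa using inf_eq_left.1 h3
  rw [Set.range_const, Submodule.mem_span_singleton] at h4
  obtain ⟨c, hc⟩ := h4
  apply hP.hprop i j hij.symm c
  apply TT_inj ((homogeneousSubmodule _ _ 1).smul_mem c (hP.hhom i)) (hP.hhom j)
  rw [map_smul]
  exact hc

theorem recess (hP : IsPolytopeSetup ℓ) {u : Fin (n + 1) → ℝ} (h0 : u 0 = 0)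
    (hu : ∀ i, 0 ≤ lf ℓ i u) : u = 0 := by
  obtain ⟨c, hc⟩ := poly_ne hP
  obtain ⟨R, hR⟩ := hP.hcpt.isBounded.exists_norm_le
  have key : ∀ t : ℝ, 0 ≤ t → (fun j : Fin n => c j + t * u j.succ) ∈ polytopeOf ℓ := by
    intro t ht
    rw [mem_poly hP] at hc ⊢
    intro i
    have : lift1 (fun j : Fin n => c j + t * u j.succ) = lift1 c + t • u := by
      funext k; refine Fin.cases ?_ (fun j => ?_) k <;> simp [lift1, h0]
    rw [this, map_add, map_smul, smul_eq_mul]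
    have := mul_nonneg ht (hu i)
    have := hc i
    linarith
  funext k
  refine Fin.cases h0 (fun j => ?_) k
  by_contra hne
  have hpos : 0 < |u j.succ| := abs_pos.2 hne
  have hR0 : 0 ≤ R := (norm_nonneg _).trans (hR c hc)
  have h2 := (norm_le_pi_norm _ j).trans (hR c hc)
  have h1 := (norm_le_pi_norm _ j).trans (hR _ (key ((2 * R + 1) / |u j.succ|) (by positivity)))
  simp only [Real.norm_eq_abs] at h1 h2
  have h3 : |(2 * R + 1) / |u j.succ| * u j.succ| = 2 * R + 1 := by
    rw [abs_mul, abs_div, abs_abs, div_mul_cancel₀ _ hpos.ne', abs_of_pos (by linarith)]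
  have h4 := abs_sub_abs_le_abs_sub ((2 * R + 1) / |u j.succ| * u j.succ) (-c j)
  rw [abs_neg, sub_neg_eq_add, add_comm _ (c j)] at h4
  linarith

theorem pcone (hP : IsPolytopeSetup ℓ) : PCone (lf ℓ) where
  pointed := by
    intro x hx
    by_cases h0 : x 0 = 0
    · exact recess hP h0 fun i => (hx i).ge
    · exfalso
      obtain ⟨y, hy, hne⟩ := ex_pos hP ⟨0, by have := hP.hd; omega⟩
      have := recess hP (u := lift1 y - (x 0)⁻¹ • x) (by simp [lift1, h0]) (fun i => by
        rw [map_sub, map_smul, hx i]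
        simpa using (mem_poly hP).1 hy i)
      apply hne
      rw [sub_eq_zero.1 this, map_smul, hx, smul_zero]
  facet := by
    intro i
    obtain ⟨x, hx⟩ := sum_point (lf ℓ) (lift1 '' facetOf ℓ i) (by
      rintro _ ⟨y, hy, rfl⟩ k
      exact (mem_poly hP).1 hy.1 k)
    refine ⟨x, (hx i).2 ?_, fun j hj => (hx j).1 ?_⟩
    · rintro _ ⟨y, hy, rfl⟩
      rw [← lf_eval hP]
      exact hy.2
    · obtain ⟨y, hy, h⟩ := ex_facet hP hj
      exact ⟨_, ⟨y, hy, rfl⟩, h⟩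
  inter := by
    obtain ⟨x, hx⟩ := sum_point (lf ℓ) (lift1 '' polytopeOf ℓ) (by
      rintro _ ⟨y, hy, rfl⟩ k
      exact (mem_poly hP).1 hy k)
    refine ⟨x, fun j => (hx j).1 ?_⟩
    obtain ⟨y, hy, h⟩ := ex_pos hP j
    exact ⟨_, ⟨y, hy, rfl⟩, h⟩

theorem rk_add (hP : IsPolytopeSetup ℓ) (v : Fin (n + 1) → ℝ) :
    rkOf ℓ v + Module.finrank ℝ (LS (lf ℓ) v) ≤ n + 1 := by
  have h := Subspace.finrank_add_finrank_dualAnnihilator_eq (LS (lf ℓ) v)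
  rw [Module.finrank_fin_fun] at h
  have hle : (Submodule.span ℝ (ℓ '' (flatOf ℓ v : Set (Fin d)))).map (TT n) ≤
      (LS (lf ℓ) v).dualAnnihilator := by
    rw [Submodule.map_span, Submodule.span_le]
    rintro _ ⟨_, ⟨i, hi, rfl⟩, rfl⟩
    rw [SetLike.mem_coe, Submodule.mem_dualAnnihilator]
    intro w hw
    refine mem_LS.1 hw i ?_
    rw [← lf_eval hP]
    simpa [flatOf] using hi
  have hhom : Submodule.span ℝ (ℓ '' (flatOf ℓ v : Set (Fin d))) ≤ homogeneousSubmodule _ _ 1 := by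
    rw [Submodule.span_le]
    rintro _ ⟨i, hi, rfl⟩
    exact hP.hhom i
  have h1 : rkOf ℓ v = Module.finrank ℝ
      ((Submodule.span ℝ (ℓ '' (flatOf ℓ v : Set (Fin d)))).map (TT n)) := by
    rw [rkOf, ← LinearMap.range_domRestrict]
    refine (LinearMap.finrank_range_of_inj ?_).symm
    intro p q hpq
    exact Subtype.ext (TT_inj (hhom p.2) (hhom q.2) hpq)
  have h2 := Submodule.finrank_mono hle
  refine le_of_le_of_eq ?_ h
  rw [h1, add_comm]
  exact Nat.add_le_add_left h2 _

theorem bd_le (hP : IsPolytopeSetup ℓ) {v : Fin (n + 1) → ℝ} (hv : v ≠ 0) :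
    bd (lf ℓ) v ≤ ordOf ℓ v := by
  have h1 := rk_add hP v
  have hvL : v ∈ LS (lf ℓ) v := fun k hk => hk
  have h2 : 1 ≤ Module.finrank ℝ (LS (lf ℓ) v) := by
    rw [Nat.one_le_iff_ne_zero]
    intro h
    rw [Submodule.finrank_eq_zero] at h
    rw [h] at hvL
    exact hv ((Submodule.mem_bot ℝ).1 hvL)
  have hcard : (univ.filter (fun k => lf ℓ k v = 0)).card = (flatOf ℓ v).card := by
    simp only [flatOf, lf_eval hP]
  have key : ((faceOf ℓ v).Nonempty ∧
      Module.finrank ℝ (affineSpan ℝ (faceOf ℓ v)).direction = n - rkOf ℓ v) →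
      FaceC (lf ℓ) v := by
    rintro ⟨hne, hdim⟩
    have h3 := dim_lift hne
    have hle : Submodule.span ℝ (lift1 '' faceOf ℓ v) ≤ LS (lf ℓ) v := by
      rw [Submodule.span_le]
      rintro _ ⟨y, hy, rfl⟩
      intro k hk
      rw [← lf_eval hP]
      apply hy.2
      simpa [flatOf, lf_eval hP] using hk
    have heq := Submodule.eq_of_le_of_finrank_le hle (by omega)
    obtain ⟨x, hx⟩ := sum_point (lf ℓ) (lift1 '' faceOf ℓ v) (by
      rintro _ ⟨y, hy, rfl⟩ k
      exact (mem_poly hP).1 hy.1 k)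
    refine ⟨x, fun k => ⟨fun hk => (hx k).2 fun y hy => ?_, fun hk => (hx k).1 ?_⟩⟩
    · exact hle (Submodule.subset_span hy) k hk
    · by_contra hc
      push Not at hc
      apply hk
      have : Submodule.span ℝ (lift1 '' faceOf ℓ v) ≤ LinearMap.ker (lf ℓ k) := by
        rw [Submodule.span_le]
        exact hc
      rw [heq] at this
      exact this hvL
  rw [bd, hcard, Module.finrank_fin_fun, ordOf, nlOf]
  by_cases hF : (faceOf ℓ v).Nonempty ∧
      Module.finrank ℝ (affineSpan ℝ (faceOf ℓ v)).direction = n - rkOf ℓ v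
  · rw [if_pos hF, if_pos (key hF)]
    omega
  · rw [if_neg hF]
    split_ifs <;> omega

theorem adjt_of (hP : IsPolytopeSetup ℓ) {f : MvPolynomial (Fin (n + 1)) ℂ}
    (hf : f.IsHomogeneous (d - n - 1))
    (hfvan : ∀ v : Fin (n + 1) → ℝ, v ≠ 0 → f ∈ pointIdealC v ^ ordOf ℓ v) :
    Adjt (lf ℓ) (evC f) where
  poly := by
    have := (PolyF.eval_hom hf).1
    have hd := hP.hd
    rw [Module.finrank_fin_fun, Fintype.card_fin]
    convert this using 1
    omega
  van := by
    intro v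
    by_cases hv : v = 0
    · subst hv
      refine Van.mono (m := d - n - 1) ?_ ?_
      · intro u
        refine ⟨Polynomial.C (evC f u), fun t => ?_⟩
        rw [zero_add, (PolyF.eval_hom hf).2, Polynomial.eval_C]
      · have hL : LS (lf ℓ) 0 = ⊥ := by
          rw [eq_bot_iff]
          intro x hx
          exact (Submodule.mem_bot ℝ).2 ((pcone hP).pointed x fun i => hx i (map_zero _))
        have hF : FaceC (lf ℓ) 0 := ⟨0, by simp⟩
        rw [bd, hL, if_pos hF, Module.finrank_fin_fun]
        simp
        omega
    · exact (Van.of_mem (hfvan v hv)).mono (bd_le hP hv)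
end

/-- **uniqueness.** Two homogeneous polynomials of degree `d − n − 1` both
satisfying the vanishing conditions `f ∈ I_v^{ord_P(L_v)}` for all nonzero `v ∈ ℝ^{n+1}` are
linearly dependent over `ℂ`. -/
theorem adjoint_uniqueness {n d : ℕ}
    (ℓ : Fin d → MvPolynomial (Fin (n + 1)) ℝ) (hP : IsPolytopeSetup ℓ)
    (f g : MvPolynomial (Fin (n + 1)) ℂ)
    (hf : f.IsHomogeneous (d - n - 1)) (hg : g.IsHomogeneous (d - n - 1))
    (hfvan : ∀ v : Fin (n + 1) → ℝ, v ≠ 0 → f ∈ pointIdealC v ^ ordOf ℓ v)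
    (hgvan : ∀ v : Fin (n + 1) → ℝ, v ≠ 0 → g ∈ pointIdealC v ^ ordOf ℓ v) :
    ∃ a b : ℂ, (a, b) ≠ (0, 0) ∧ a • f + b • g = 0 := by
  obtain ⟨a, b, hab, h⟩ := adjt_unique (n + 1) (Fin (n + 1) → ℝ) (Fin d) (lf ℓ)
    (Module.finrank_fin_fun ℝ) (pcone hP) (evC f) (evC g)
    (adjt_of hP hf hfvan) (adjt_of hP hg hgvan)
  refine ⟨a, b, hab, evC_final _ fun x => ?_⟩
  rw [← h x]
  simp [evC]

end
end

section
/- There exists a nonzero homogeneous polynomial f ∈ ℝ[X₀, …, Xₙ] of degree d − n − 1 such that f ∈ I_v^{ord_P(L_v)} for every nonzero v ∈ ℝ^{n+1}. (Existence part of the paper's main theorem: Warren's adjoint polynomial of the polytope P is such a polynomial, vanishing along every linear space cut out by facet hyperplanes to at least the prescribed order.) -/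
open MvPolynomial Finset Classical

noncomputable section

/-- matrix with rows `a (σ k)` -/
def matA {N d : ℕ} (a : Fin d → Fin N → ℝ) (σ : Fin N ↪o Fin d) : Matrix (Fin N) (Fin N) ℝ :=
  Matrix.of fun k => a (σ k)

/-- open simplicial cone -/
def coneA {N d : ℕ} (a : Fin d → Fin N → ℝ) (σ : Fin N ↪o Fin d) : Set (Fin N → ℝ) :=
  (fun c => Matrix.vecMul c (matA a σ)) '' (Set.univ.pi fun _ => Set.Ioi (0:ℝ))

/-- full dual cone -/
def dualD {N d : ℕ} (a : Fin d → Fin N → ℝ) : Set (Fin N → ℝ) :=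
  {y | ∃ c : Fin d → ℝ, (∀ i, 0 ≤ c i) ∧ ∑ i, c i • a i = y}

lemma mem_coneA {N d : ℕ} (a : Fin d → Fin N → ℝ) (σ : Fin N ↪o Fin d) (y : Fin N → ℝ) :
    y ∈ coneA a σ ↔ ∃ c : Fin N → ℝ, (∀ k, 0 < c k) ∧ ∑ k, c k • a (σ k) = y := by
  unfold coneA matA
  simp only [Set.mem_image, Set.mem_univ_pi, Set.mem_Ioi]
  refine exists_congr fun c => and_congr_right fun _ => ?_
  rw [Matrix.vecMul_eq_sum]
  rfl

lemma cone_integral {N d : ℕ} (a : Fin d → Fin N → ℝ) (σ : Fin N ↪o Fin d)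
    (hdet : (matA a σ).det ≠ 0) (x : Fin N → ℝ) (hx : ∀ i, 0 < a i ⬝ᵥ x) :
    ∫ y in coneA a σ, Real.exp (-(y ⬝ᵥ x)) = |(matA a σ).det| / ∏ k, (a (σ k) ⬝ᵥ x) := by
  set M := matA a σ with hM
  set f : (Fin N → ℝ) →L[ℝ] (Fin N → ℝ) := LinearMap.toContinuousLinearMap (Matrix.toLin' M.transpose) with hf
  have hfd : f.det = M.det := by
    simp [hf, ContinuousLinearMap.det]
  have hfa : ∀ c, f c = Matrix.vecMul c M := by
    intro c; simp [hf, Matrix.mulVec_transpose]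
  have hinj : Function.Injective f := by
    intro c c' h
    rw [hfa, hfa] at h
    exact Matrix.vecMul_injective_of_isUnit ((Matrix.isUnit_iff_isUnit_det _).2 (isUnit_iff_ne_zero.2 hdet)) h
  have himg : coneA a σ = f '' (Set.univ.pi fun _ => Set.Ioi (0:ℝ)) := by
    unfold coneA
    apply Set.image_congr
    intro c _
    exact (hfa c).symm
  rw [himg, MeasureTheory.integral_image_eq_integral_abs_det_fderiv_smul MeasureTheory.volume
    (MeasurableSet.univ_pi fun _ => measurableSet_Ioi) (fun c _ => f.hasFDerivAt.hasFDerivWithinAt)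
    hinj.injOn]
  have h1 : ∀ c : Fin N → ℝ, |f.det| • Real.exp (-(f c ⬝ᵥ x)) =
      |M.det| * ∏ k, Real.exp (-(a (σ k) ⬝ᵥ x) * c k) := by
    intro c
    rw [hfd, hfa, smul_eq_mul, ← Real.exp_sum, ← Matrix.dotProduct_mulVec]
    congr 2
    simp only [dotProduct, Matrix.mulVec, ← Finset.sum_neg_distrib]
    refine Finset.sum_congr rfl fun k _ => ?_
    simp [hM, matA, Matrix.of_apply]
    ring
  simp_rw [h1]
  rw [MeasureTheory.integral_const_mul, MeasureTheory.volume_pi, MeasureTheory.Measure.restrict_pi_pi,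
    MeasureTheory.integral_fintype_prod_eq_prod (fun k t => Real.exp (-(a (σ k) ⬝ᵥ x) * t))]
  rw [div_eq_mul_inv, ← Finset.prod_inv_distrib]
  congr 1
  refine Finset.prod_congr rfl fun k _ => ?_
  rw [integral_exp_mul_Ioi (by simpa using hx (σ k))]
  simp

lemma isOpen_cone {N d : ℕ} (a : Fin d → Fin N → ℝ) (σ : Fin N ↪o Fin d)
    (hdet : (matA a σ).det ≠ 0) : IsOpen (coneA a σ) := by
  have hu : IsUnit (matA a σ) := (Matrix.isUnit_iff_isUnit_det _).2 (isUnit_iff_ne_zero.2 hdet)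
  have hs : Function.Surjective (Matrix.vecMulLinear (matA a σ)) :=
    Matrix.vecMul_surjective_iff_isUnit.2 hu
  have := (LinearMap.toContinuousLinearMap (Matrix.vecMulLinear (matA a σ))).isOpenMap hs
  exact this _ (isOpen_set_pi Set.finite_univ fun _ _ => isOpen_Ioi)

/-- `T` is a triangulation up to null sets -/
def IsTri {N d : ℕ} (a : Fin d → Fin N → ℝ) (T : Finset (Fin N ↪o Fin d)) : Prop :=
  (∀ σ ∈ T, (matA a σ).det ≠ 0) ∧
  (Set.PairwiseDisjoint (T : Set (Fin N ↪o Fin d)) (coneA a)) ∧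
  (⋃ σ ∈ T, coneA a σ) =ᵐ[MeasureTheory.volume] dualD a

/-- linear form -/
def linF {N : ℕ} (b : Fin N → ℝ) : MvPolynomial (Fin N) ℝ := ∑ k, C (b k) * X k

/-- adjoint polynomial -/
def adjF {N d : ℕ} (a : Fin d → Fin N → ℝ) (T : Finset (Fin N ↪o Fin d)) :
    MvPolynomial (Fin N) ℝ :=
  ∑ σ ∈ T, C |(matA a σ).det| * ∏ i ∈ univ \ univ.map σ.toEmbedding, linF (a i)

lemma eval_linF {N : ℕ} (b x : Fin N → ℝ) : eval x (linF b) = b ⬝ᵥ x := by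
  simp [linF, dotProduct]

lemma eval_adjF {N d : ℕ} (a : Fin d → Fin N → ℝ) (T : Finset (Fin N ↪o Fin d))
    (hT : IsTri a T) (x : Fin N → ℝ) (hx : ∀ i, 0 < a i ⬝ᵥ x) :
    eval x (adjF a T) = (∏ i, (a i ⬝ᵥ x)) * ∫ y in dualD a, Real.exp (-(y ⬝ᵥ x)) := by
  rw [← MeasureTheory.setIntegral_congr_set hT.2.2,
    MeasureTheory.integral_biUnion_finset T (fun σ hσ => (isOpen_cone a σ (hT.1 σ hσ)).measurableSet)
      hT.2.1]
  · simp only [adjF, map_sum, map_mul, eval_C, map_prod, eval_linF, Finset.mul_sum]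
    refine Finset.sum_congr rfl fun σ hσ => ?_
    rw [cone_integral a σ (hT.1 σ hσ) x hx]
    have h1 := Finset.prod_sdiff (f := fun i => a i ⬝ᵥ x) (Finset.subset_univ (univ.map σ.toEmbedding))
    rw [← h1, Finset.prod_map]
    have h2 : ∏ k, (a (σ k) ⬝ᵥ x) ≠ 0 := (Finset.prod_pos fun k _ => hx _).ne'
    simp only [RelEmbedding.coe_toEmbedding]
    field_simp
  · intro σ hσ
    apply MeasureTheory.Integrable.of_integral_ne_zero
    rw [cone_integral a σ (hT.1 σ hσ) x hx]
    have h2 : ∏ k, (a (σ k) ⬝ᵥ x) ≠ 0 := (Finset.prod_pos fun k _ => hx _).ne'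
    have := hT.1 σ hσ
    positivity

lemma adjF_eq {N d : ℕ} (a : Fin d → Fin N → ℝ) (T T' : Finset (Fin N ↪o Fin d))
    (hT : IsTri a T) (hT' : IsTri a T') (p : Fin N → ℝ) (hp : ∀ i, 0 < a i ⬝ᵥ p) :
    adjF a T = adjF a T' := by
  have ho : IsOpen {x : Fin N → ℝ | ∀ i, 0 < a i ⬝ᵥ x} := by
    simp only [Set.ofPred_forall]
    refine isOpen_iInter_of_finite fun i => isOpen_lt continuous_const ?_
    unfold dotProduct
    fun_prop
  obtain ⟨ε, hε, hb⟩ := Metric.isOpen_iff.1 ho p hp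
  refine MvPolynomial.funext_set (fun k => Metric.ball (p k) ε) (fun k => ?_) fun x hx => ?_
  · rw [Real.ball_eq_Ioo]
    exact Set.Ioo_infinite (by linarith)
  · have hx' : x ∈ Metric.ball p ε := by rw [ball_pi p hε]; exact hx
    have := hb hx'
    rw [eval_adjF a T hT x this, eval_adjF a T' hT' x this]

lemma tri_nonempty {N d : ℕ} (a : Fin d → Fin N → ℝ) (T : Finset (Fin N ↪o Fin d))
    (hT : IsTri a T) (hspan : Submodule.span ℝ (Set.range a) = ⊤) : T.Nonempty := by
  by_contra hne
  rw [Finset.not_nonempty_iff_eq_empty] at hne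
  have h := hT.2.2
  subst hne
  simp only [Finset.notMem_empty, Set.iUnion_of_empty, Set.iUnion_empty] at h
  have h0 : MeasureTheory.volume (dualD a) = 0 := by
    rw [← MeasureTheory.measure_congr h]; simp
  set g : (Fin d → ℝ) →L[ℝ] (Fin N → ℝ) := LinearMap.toContinuousLinearMap (Fintype.linearCombination ℝ a)
  have hs : Function.Surjective g := by
    have : LinearMap.range (Fintype.linearCombination ℝ a) = ⊤ := by
      rw [Fintype.range_linearCombination, hspan]
    exact LinearMap.range_eq_top.1 this
  have hop := g.isOpenMap hs _ (isOpen_set_pi (Set.finite_univ (α := Fin d)) (s := fun _ => Set.Ioi (0:ℝ)) fun _ _ => isOpen_Ioi)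
  have hpos := hop.measure_pos MeasureTheory.volume ⟨g (fun _ => 1), Set.mem_image_of_mem _ (by simp)⟩
  refine hpos.ne' (MeasureTheory.measure_mono_null ?_ h0)
  rintro _ ⟨c, hc, rfl⟩
  exact ⟨c, fun i => le_of_lt (hc i trivial), rfl⟩

lemma adjF_ne_zero {N d : ℕ} (a : Fin d → Fin N → ℝ) (T : Finset (Fin N ↪o Fin d))
    (hT : IsTri a T) (hspan : Submodule.span ℝ (Set.range a) = ⊤)
    (p : Fin N → ℝ) (hp : ∀ i, 0 < a i ⬝ᵥ p) : adjF a T ≠ 0 := by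
  intro h
  have h1 : 0 < eval p (adjF a T) := by
    simp only [adjF, map_sum, map_mul, eval_C, map_prod, eval_linF]
    refine Finset.sum_pos (fun σ hσ => mul_pos (abs_pos.2 (hT.1 σ hσ)) (Finset.prod_pos fun i _ => hp i))
      (tri_nonempty a T hT hspan)
  rw [h] at h1
  simp at h1

lemma linF_hom {N : ℕ} (b : Fin N → ℝ) : (linF b).IsHomogeneous 1 := by
  unfold linF
  refine IsHomogeneous.sum _ _ _ fun k _ => ?_
  simpa using (isHomogeneous_C (Fin N) (b k)).mul (isHomogeneous_X ℝ k)

lemma adjF_hom {N d : ℕ} (a : Fin d → Fin N → ℝ) (T : Finset (Fin N ↪o Fin d)) :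
    (adjF a T).IsHomogeneous (d - N) := by
  unfold adjF
  refine IsHomogeneous.sum _ _ _ fun σ _ => ?_
  have h := IsHomogeneous.prod (univ \ univ.map σ.toEmbedding) (fun i => linF (a i)) (fun _ => 1)
    fun i _ => linF_hom (a i)
  have h2 : ∑ i ∈ univ \ univ.map σ.toEmbedding, 1 = d - N := by
    rw [Finset.sum_const, smul_eq_mul, mul_one, Finset.card_sdiff_of_subset (Finset.subset_univ _)]
    simp
  rw [h2] at h
  simpa using (isHomogeneous_C (Fin N) (|(matA a σ).det|)).mul h

/-- vertex -/
def xsA {N d : ℕ} (a : Fin d → Fin N → ℝ) (σ : Fin N ↪o Fin d) : (Fin d → ℝ) →ₗ[ℝ] (Fin N → ℝ) :=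
  (Matrix.mulVecLin (matA a σ)⁻¹) ∘ₗ (LinearMap.funLeft ℝ ℝ σ)

lemma xsA_spec {N d : ℕ} (a : Fin d → Fin N → ℝ) (σ : Fin N ↪o Fin d)
    (hdet : (matA a σ).det ≠ 0) (ω : Fin d → ℝ) (k : Fin N) :
    a (σ k) ⬝ᵥ xsA a σ ω = ω (σ k) := by
  have h : (matA a σ).mulVec (xsA a σ ω) = LinearMap.funLeft ℝ ℝ σ ω := by
    simp only [xsA, LinearMap.comp_apply, Matrix.mulVecLin_apply, Matrix.mulVec_mulVec]
    rw [Matrix.mul_nonsing_inv _ (isUnit_iff_ne_zero.2 hdet), Matrix.one_mulVec]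
  exact congrFun h k

/-- regular triangulation -/
def triW {N d : ℕ} (a : Fin d → Fin N → ℝ) (ω : Fin d → ℝ) : Finset (Fin N ↪o Fin d) :=
  univ.filter fun σ => (matA a σ).det ≠ 0 ∧ ∀ j, a j ⬝ᵥ xsA a σ ω ≤ ω j

/-- generic heights -/
def GenW {N d : ℕ} (a : Fin d → Fin N → ℝ) (ω : Fin d → ℝ) : Prop :=
  ∀ σ : Fin N ↪o Fin d, (matA a σ).det ≠ 0 → ∀ j, j ∉ Set.range σ → a j ⬝ᵥ xsA a σ ω ≠ ω j

lemma ae_not_mem {E : Type*} [NormedAddCommGroup E] [NormedSpace ℝ E] [MeasurableSpace E]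
    [BorelSpace E] [FiniteDimensional ℝ E] (μ : MeasureTheory.Measure E) [μ.IsAddHaarMeasure]
    (S : Submodule ℝ E) (hS : S ≠ ⊤) : ∀ᵐ y ∂μ, y ∉ S := by
  have := MeasureTheory.Measure.addHaar_submodule μ S hS
  rw [MeasureTheory.ae_iff]
  simpa using this

lemma genW_ae {N d : ℕ} (a : Fin d → Fin N → ℝ) : ∀ᵐ ω, GenW a ω := by
  unfold GenW
  rw [MeasureTheory.ae_all_iff]
  intro σ
  rw [Filter.eventually_imp_distrib_left]
  intro hdet
  rw [MeasureTheory.ae_all_iff]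
  intro j
  rw [Filter.eventually_imp_distrib_left]
  intro hj
  let φ : (Fin d → ℝ) →ₗ[ℝ] ℝ := (dotProductBilin ℝ ℝ (a j)) ∘ₗ xsA a σ - LinearMap.proj j
  have hφ : ∀ ω, φ ω = a j ⬝ᵥ xsA a σ ω - ω j := fun ω => rfl
  have hk : LinearMap.ker φ ≠ ⊤ := by
    intro h
    have h1 : Pi.single j (1:ℝ) ∈ LinearMap.ker φ := by rw [h]; trivial
    have h2 : LinearMap.funLeft ℝ ℝ σ (Pi.single j (1:ℝ)) = 0 := by
      ext k
      have : σ k ≠ j := fun h => hj ⟨k, h⟩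
      simp [LinearMap.funLeft_apply, this]
    rw [LinearMap.mem_ker, hφ] at h1
    simp only [xsA, LinearMap.comp_apply, h2] at h1
    simp at h1
  filter_upwards [ae_not_mem MeasureTheory.volume _ hk] with ω hω h
  apply hω
  rw [LinearMap.mem_ker, hφ, h, sub_self]

lemma genW_exists {N d : ℕ} (a : Fin d → Fin N → ℝ) (U : Set (Fin d → ℝ)) (hU : IsOpen U)
    (hne : U.Nonempty) : ∃ ω ∈ U, GenW a ω := by
  have := MeasureTheory.Measure.dense_of_ae (genW_ae a)
  obtain ⟨ω, h1, h2⟩ := this.inter_open_nonempty U hU hne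
  exact ⟨ω, h1, h2⟩

lemma tri_unique {N d : ℕ} (a : Fin d → Fin N → ℝ) (ω : Fin d → ℝ) (hω : GenW a ω)
    (σ τ : Fin N ↪o Fin d) (hσ : σ ∈ triW a ω) (hτ : τ ∈ triW a ω) (y : Fin N → ℝ)
    (h1 : y ∈ coneA a σ) (h2 : y ∈ coneA a τ) : σ = τ := by
  -- if `σ ⊄ τ` then strict
  have key : ∀ σ τ : Fin N ↪o Fin d, σ ∈ triW a ω → τ ∈ triW a ω → y ∈ coneA a σ →
      (y ⬝ᵥ xsA a τ ω ≤ y ⬝ᵥ xsA a σ ω) ∧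
      ((∃ k, σ k ∉ Set.range τ) → y ⬝ᵥ xsA a τ ω < y ⬝ᵥ xsA a σ ω) := by
    intro σ τ hσ hτ h
    obtain ⟨c, hc, rfl⟩ := (mem_coneA a σ y).1 h
    simp only [triW, mem_filter, mem_univ, true_and] at hσ hτ
    simp only [sum_dotProduct, smul_dotProduct, smul_eq_mul, xsA_spec a σ hσ.1]
    refine ⟨Finset.sum_le_sum fun k _ => mul_le_mul_of_nonneg_left (hτ.2 _) (hc k).le, ?_⟩
    rintro ⟨k, hk⟩
    refine Finset.sum_lt_sum (fun k _ => mul_le_mul_of_nonneg_left (hτ.2 _) (hc k).le)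
      ⟨k, mem_univ _, mul_lt_mul_of_pos_left (lt_of_le_of_ne (hτ.2 _) (hω τ hτ.1 _ hk)) (hc k)⟩
  have hr : Set.range σ ⊆ Set.range τ := by
    rintro _ ⟨k, rfl⟩
    by_contra hk
    have := (key σ τ hσ hτ h1).2 ⟨k, hk⟩
    exact absurd ((key τ σ hτ hσ h2).1) (not_le.2 this)
  have hr' : Set.range σ = Set.range τ := by
    apply Set.eq_of_subset_of_ncard_le hr _ (Set.toFinite _)
    rw [← Set.image_univ, ← Set.image_univ, Set.ncard_image_of_injective _ σ.injective,
      Set.ncard_image_of_injective _ τ.injective]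
  apply RelEmbedding.coe_fn_injective
  exact (StrictMono.range_inj σ.strictMono τ.strictMono).1 hr'

lemma lp_basic {N d : ℕ} (a : Fin d → Fin N → ℝ) (p : Fin N → ℝ) (hp : ∀ i, 0 < a i ⬝ᵥ p)
    (ω : Fin d → ℝ) (y : Fin N → ℝ) (hy : y ∈ dualD a) :
    ∃ c : Fin d → ℝ, (∀ i, 0 ≤ c i) ∧ ∑ i, c i • a i = y ∧
      (∀ c' : Fin d → ℝ, (∀ i, 0 ≤ c' i) → ∑ i, c' i • a i = y → c ⬝ᵥ ω ≤ c' ⬝ᵥ ω) ∧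
      (∀ b : Fin d → ℝ, (∀ i, c i = 0 → b i = 0) → ∑ i, b i • a i = 0 → b = 0) := by
  set K : Set (Fin d → ℝ) := {c | (∀ i, 0 ≤ c i) ∧ ∑ i, c i • a i = y} with hK
  have hKc : IsCompact K := by
    have hcl : IsClosed K := by
      rw [hK, Set.ofPred_and]
      refine IsClosed.inter ?_ (isClosed_eq (by fun_prop) continuous_const)
      rw [Set.ofPred_forall]
      exact isClosed_iInter fun i => isClosed_le continuous_const (continuous_apply i)
    refine IsCompact.of_isClosed_subset
      (isCompact_univ_pi fun i => isCompact_Icc (a := (0:ℝ)) (b := (y ⬝ᵥ p) / (a i ⬝ᵥ p))) hcl ?_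
    rintro c ⟨hc, rfl⟩ i -
    refine ⟨hc i, ?_⟩
    rw [le_div_iff₀ (hp i)]
    simp only [sum_dotProduct, smul_dotProduct, smul_eq_mul]
    exact Finset.single_le_sum (f := fun i => c i * (a i ⬝ᵥ p))
      (fun j _ => mul_nonneg (hc j) (hp j).le) (mem_univ i)
  obtain ⟨c0, hc0, hmin⟩ := hKc.exists_isMinOn hy
    (show ContinuousOn (fun c : Fin d → ℝ => c ⬝ᵥ ω) K by
      unfold dotProduct; fun_prop)
  let Q : ℕ → Prop := fun m => ∃ c ∈ K, c ⬝ᵥ ω ≤ c0 ⬝ᵥ ω ∧ #(univ.filter fun i => c i ≠ 0) = m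
  have hQ : ∃ m, Q m := ⟨_, c0, hc0, le_rfl, rfl⟩
  obtain ⟨c, hcK, hcm, hcard⟩ := Nat.find_spec hQ
  refine ⟨c, hcK.1, hcK.2, fun c' h1 h2 => hcm.trans (hmin ⟨h1, h2⟩), ?_⟩
  -- no dependency with nonnegative cost
  have main : ∀ b : Fin d → ℝ, (∀ i, c i = 0 → b i = 0) → ∑ i, b i • a i = 0 → 0 ≤ b ⬝ᵥ ω → b = 0 := by
    intro b hb1 hb2 hb3
    by_contra hb
    have hpos : (univ.filter fun i => 0 < b i).Nonempty := by
      by_contra hne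
      rw [Finset.not_nonempty_iff_eq_empty, Finset.filter_eq_empty_iff] at hne
      have hz : ∑ i, b i * (a i ⬝ᵥ p) = 0 := by
        have := congrArg (fun z => z ⬝ᵥ p) hb2
        simpa [sum_dotProduct, smul_dotProduct] using this
      have hle : ∀ i ∈ univ, b i * (a i ⬝ᵥ p) ≤ 0 := fun i _ =>
        mul_nonpos_of_nonpos_of_nonneg (not_lt.1 (hne (mem_univ i))) (hp i).le
      rw [Finset.sum_eq_zero_iff_of_nonpos hle] at hz
      apply hb
      ext i
      exact (mul_eq_zero.1 (hz i (mem_univ i))).resolve_right (hp i).ne'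
    obtain ⟨i0, hi0, hmin0⟩ := Finset.exists_min_image _ (fun i => c i / b i) hpos
    simp only [mem_filter, mem_univ, true_and] at hi0 hmin0
    set t := c i0 / b i0 with ht
    have ht0 : 0 ≤ t := div_nonneg (hcK.1 i0) hi0.le
    have hlt : #(univ.filter fun i => c i - t * b i ≠ 0) < #(univ.filter fun i => c i ≠ 0) := by
      apply Finset.card_lt_card
      rw [Finset.ssubset_iff_of_subset]
      · refine ⟨i0, ?_, ?_⟩
        · simp only [mem_filter, mem_univ, true_and]
          intro h
          exact hi0.ne' (hb1 i0 h)
        · simp [ht, hi0.ne']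
      · intro i
        simp only [mem_filter, mem_univ, true_and]
        intro h h'
        apply h
        rw [h', hb1 i h']
        ring
    rw [hcard] at hlt
    refine Nat.find_min hQ hlt ⟨fun i => c i - t * b i, ⟨?_, ?_⟩, ?_, rfl⟩
    · intro i
      by_cases hbi : 0 < b i
      · have := hmin0 i hbi
        rw [le_div_iff₀ hbi] at this
        linarith
      · have := mul_nonneg ht0 (neg_nonneg.2 (not_lt.1 hbi))
        have := hcK.1 i
        nlinarith
    · simp only [sub_smul, mul_smul, Finset.sum_sub_distrib, ← Finset.smul_sum, hb2, hcK.2]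
      simp
    · have : (fun i => c i - t * b i) = c - t • b := by ext; simp
      rw [this, sub_dotProduct, smul_dotProduct, smul_eq_mul]
      have := mul_nonneg ht0 hb3
      linarith
  intro b hb1 hb2
  rcases le_total 0 (b ⬝ᵥ ω) with h | h
  · exact main b hb1 hb2 h
  · have := main (-b) (fun i hi => by simp [hb1 i hi]) (by simp [hb2]) (by simpa using h)
    simpa using this

lemma tri_cover {N d : ℕ} (a : Fin d → Fin N → ℝ) (p : Fin N → ℝ) (hp : ∀ i, 0 < a i ⬝ᵥ p)
    (ω : Fin d → ℝ) (y : Fin N → ℝ) (hy : y ∈ dualD a)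
    (hgen : ∀ s : Finset (Fin d), Submodule.span ℝ (a '' (s : Set (Fin d))) ≠ ⊤ →
      y ∉ Submodule.span ℝ (a '' (s : Set (Fin d)))) :
    ∃ σ ∈ triW a ω, y ∈ coneA a σ := by
  obtain ⟨c, hc, hcy, hopt, hind⟩ := lp_basic a p hp ω y hy
  set s : Finset (Fin d) := univ.filter fun i => c i ≠ 0 with hs
  have hcs : ∀ i, i ∉ s → c i = 0 := by intro i hi; simpa [hs] using hi
  have hsum : ∑ i ∈ s, c i • a i = y := by
    rw [← hcy]
    apply Finset.sum_subset (Finset.subset_univ _)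
    intro i _ hi
    rw [hcs i hi, zero_smul]
  have htop : Submodule.span ℝ (a '' (s : Set (Fin d))) = ⊤ := by
    by_contra h
    refine hgen s h ?_
    rw [← hsum]
    exact Submodule.sum_mem _ fun i hi => Submodule.smul_mem _ _
      (Submodule.subset_span ⟨i, hi, rfl⟩)
  have hli : LinearIndependent ℝ (fun i : s => a i) := by
    rw [Fintype.linearIndependent_iff]
    intro g hg i
    have := hind (fun i => if h : i ∈ s then g ⟨i, h⟩ else 0) (fun i hi => by
      rw [dif_neg]; simp [hs, hi]) (by
      rw [← hg, ← Finset.sum_subset (Finset.subset_univ s), ← Finset.sum_coe_sort s]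
      · refine Finset.sum_congr rfl fun i _ => ?_
        rw [dif_pos i.2]
      · intro i _ hi
        rw [dif_neg hi, zero_smul])
    have h2 := congrFun this i
    simpa using h2
  have hcard : #s = N := by
    have h1 := finrank_span_eq_card hli
    have h2 : Set.range (fun i : s => a i) = a '' (s : Set (Fin d)) := by
      ext z; simp
    rw [h2, htop] at h1
    simpa using h1.symm
  set σ := s.orderEmbOfFin hcard with hσ
  have hmem : ∀ k, σ k ∈ s := fun k => Finset.orderEmbOfFin_mem s hcard k
  have hmap : univ.map σ.toEmbedding = s := by
    have := Finset.map_orderEmbOfFin_univ s hcard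
    exact this
  have hli' : LinearIndependent ℝ (fun k => a (σ k)) :=
    hli.comp (fun k => (⟨σ k, hmem k⟩ : s)) (fun k l h => σ.injective (by simpa using h))
  have hdet : (matA a σ).det ≠ 0 := by
    have : IsUnit (matA a σ) := Matrix.linearIndependent_rows_iff_isUnit.1 hli'
    exact ((Matrix.isUnit_iff_isUnit_det _).1 this).ne_zero
  have hpos : ∀ k, 0 < c (σ k) := fun k => lt_of_le_of_ne (hc _) (by
    have := hmem k
    simp only [hs, mem_filter] at this
    exact this.2.symm)
  refine ⟨σ, ?_, ?_⟩
  · simp only [triW, mem_filter, mem_univ, true_and]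
    refine ⟨hdet, fun j => ?_⟩
    -- a j = ∑ β k • a (σ k)
    obtain ⟨β, hβ⟩ : ∃ β : Fin N → ℝ, ∑ k, β k • a (σ k) = a j := by
      have : a j ∈ Submodule.span ℝ (Set.range (fun k => a (σ k))) := by
        have h2 : Set.range (fun k => a (σ k)) = a '' (s : Set (Fin d)) := by
          rw [← hmap]; ext z; simp
        rw [h2, htop]; trivial
      exact (Submodule.mem_span_range_iff_exists_fun ℝ).1 this
    -- small ε
    obtain ⟨ε, hε, hεc⟩ : ∃ ε : ℝ, 0 < ε ∧ ∀ k, 0 ≤ c (σ k) - ε * β k := by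
      have : ∀ᶠ ε in nhdsWithin (0:ℝ) (Set.Ioi 0), ∀ k, 0 ≤ c (σ k) - ε * β k := by
        rw [Filter.eventually_all]
        intro k
        have hcont : Filter.Tendsto (fun ε : ℝ => c (σ k) - ε * β k) (nhds 0) (nhds (c (σ k) - 0 * β k)) := by
          apply Continuous.tendsto (by fun_prop)
        have h3 := (hcont.eventually (lt_mem_nhds (a := 0) (by simpa using hpos k)))
        exact (h3.mono fun _ h => le_of_lt h).filter_mono nhdsWithin_le_nhds
      obtain ⟨ε, h1, h2⟩ := (this.and self_mem_nhdsWithin).exists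
      exact ⟨ε, h2, h1⟩
    let e : Fin d → ℝ := ∑ k, β k • Pi.single (σ k) (1:ℝ)
    have he1 : ∀ k, e (σ k) = β k := by
      intro k
      simp [e, Finset.sum_apply, Pi.single_apply, σ.injective.eq_iff]
    have he2 : ∀ i, i ∉ s → e i = 0 := by
      intro i hi
      simp only [e, Finset.sum_apply, Pi.smul_apply, Pi.single_apply, smul_eq_mul]
      refine Finset.sum_eq_zero fun k _ => ?_
      rw [if_neg, mul_zero]
      rintro rfl
      exact hi (hmem k)
    have he3 : ∑ i, e i • a i = a j := by
      rw [← hβ, ← Finset.sum_subset (Finset.subset_univ s), ← hmap, Finset.sum_map]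
      · exact Finset.sum_congr rfl fun k _ => by
          simp only [RelEmbedding.coe_toEmbedding]; rw [he1]
      · intro i _ hi
        rw [he2 i hi, zero_smul]
    have he4 : e ⬝ᵥ ω = a j ⬝ᵥ xsA a σ ω := by
      rw [← hβ]
      simp only [e, sum_dotProduct, smul_dotProduct, smul_eq_mul, xsA_spec a σ hdet,
        single_dotProduct, one_mul]
    have := hopt (c + ε • (Pi.single j 1 - e)) (fun i => by
      simp only [Pi.add_apply, Pi.smul_apply, Pi.sub_apply, smul_eq_mul]
      have hs0 : (0:ℝ) ≤ (Pi.single j 1 : Fin d → ℝ) i := by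
        rw [Pi.single_apply]; split_ifs <;> norm_num
      have hs1 := mul_nonneg hε.le hs0
      by_cases hi : i ∈ s
      · rw [← hmap] at hi
        simp only [mem_map, mem_univ, true_and] at hi
        obtain ⟨k, rfl⟩ := hi
        simp only [RelEmbedding.coe_toEmbedding] at hs1 ⊢
        have := hεc k
        rw [he1]
        linarith
      · rw [he2 i hi]
        have := hc i
        linarith) (by
      simp only [Pi.add_apply, Pi.smul_apply, Pi.sub_apply, smul_eq_mul, add_smul, mul_smul, sub_smul,
        Finset.sum_add_distrib, ← Finset.smul_sum, Finset.sum_sub_distrib, he3, hcy]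
      have : ∑ i, (Pi.single j 1 : Fin d → ℝ) i • a i = a j := by
        simp [Pi.single_apply]
      rw [this]; simp)
    rw [add_dotProduct, smul_dotProduct, sub_dotProduct, he4, single_dotProduct, one_mul,
      smul_eq_mul] at this
    have h5 : 0 ≤ ε * (ω j - a j ⬝ᵥ xsA a σ ω) := by linarith
    have := nonneg_of_mul_nonneg_right h5 hε
    linarith
  · rw [mem_coneA]
    refine ⟨fun k => c (σ k), hpos, ?_⟩
    rw [← hsum, ← hmap, Finset.sum_map]
    rfl

lemma triW_isTri {N d : ℕ} (a : Fin d → Fin N → ℝ) (p : Fin N → ℝ) (hp : ∀ i, 0 < a i ⬝ᵥ p)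
    (ω : Fin d → ℝ) (hω : GenW a ω) : IsTri a (triW a ω) := by
  refine ⟨fun σ hσ => ?_, ?_, ?_⟩
  · simp only [triW, mem_filter] at hσ
    exact hσ.2.1
  · intro σ hσ τ hτ hne
    rw [Function.onFun, Set.disjoint_left]
    intro y h1 h2
    exact hne (tri_unique a ω hω σ τ hσ hτ y h1 h2)
  · have hg : ∀ᵐ y : Fin N → ℝ, ∀ s : Finset (Fin d), Submodule.span ℝ (a '' (s : Set (Fin d))) ≠ ⊤ →
      y ∉ Submodule.span ℝ (a '' (s : Set (Fin d))) := by
      rw [MeasureTheory.ae_all_iff]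
      intro s
      rw [Filter.eventually_imp_distrib_left]
      intro h
      exact ae_not_mem _ _ h
    rw [Filter.eventuallyEq_set]
    filter_upwards [hg] with y hy
    constructor
    · intro h
      simp only [Set.mem_iUnion] at h
      obtain ⟨σ, hσ, h⟩ := h
      obtain ⟨c, hc, rfl⟩ := (mem_coneA a σ y).1 h
      refine ⟨∑ k, c k • Pi.single (σ k) (1:ℝ), fun i => ?_, ?_⟩
      · simp only [Finset.sum_apply, Pi.smul_apply, Pi.single_apply, smul_eq_mul]
        refine Finset.sum_nonneg fun k _ => mul_nonneg (hc k).le ?_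
        split_ifs <;> norm_num
      · simp only [Finset.sum_apply, Pi.smul_apply, smul_eq_mul, Finset.sum_smul]
        rw [Finset.sum_comm]
        refine Finset.sum_congr rfl fun k _ => ?_
        simp [Pi.single_apply]
    · intro h
      obtain ⟨σ, h1, h2⟩ := tri_cover a p hp ω y h hy
      simp only [Set.mem_iUnion]
      exact ⟨σ, h1, h2⟩
lemma linInd_of_det {N d : ℕ} (a : Fin d → Fin N → ℝ) (σ : Fin N ↪o Fin d)
    (hdet : (matA a σ).det ≠ 0) (F : Finset (Fin d)) :
    LinearIndependent ℝ (fun i : ↥(F ∩ univ.map σ.toEmbedding) => a i) := by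
  have h1 : LinearIndependent ℝ (fun k => a (σ k)) :=
    Matrix.linearIndependent_rows_iff_isUnit.2
      ((Matrix.isUnit_iff_isUnit_det (matA a σ)).2 (isUnit_iff_ne_zero.2 hdet))
  have hex : ∀ i : ↥(F ∩ univ.map σ.toEmbedding), ∃ k, σ k = i := by
    intro i
    have := (Finset.mem_inter.1 i.2).2
    simpa using this
  choose g hg using hex
  have h2 := h1.comp g (fun i j h => by
    apply Subtype.ext
    rw [← hg i, ← hg j, h])
  convert h2 using 1
  ext i
  simp [hg]

lemma finrank_inter {N d : ℕ} (a : Fin d → Fin N → ℝ) (σ : Fin N ↪o Fin d)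
    (hdet : (matA a σ).det ≠ 0) (F : Finset (Fin d)) :
    Module.finrank ℝ (Submodule.span ℝ (a '' ((F ∩ univ.map σ.toEmbedding : Finset (Fin d)) : Set (Fin d)))) =
      #(F ∩ univ.map σ.toEmbedding) := by
  have h1 := finrank_span_eq_card (linInd_of_det a σ hdet F)
  have h2 : Set.range (fun i : ↥(F ∩ univ.map σ.toEmbedding) => a i) =
      a '' ((F ∩ univ.map σ.toEmbedding : Finset (Fin d)) : Set (Fin d)) := by
    ext z
    simp only [Set.mem_range, Set.mem_image, Finset.mem_coe, Subtype.exists, exists_prop]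
  rw [h2] at h1
  rw [h1, Fintype.card_coe]

lemma card_inter_le {N d : ℕ} (a : Fin d → Fin N → ℝ) (σ : Fin N ↪o Fin d)
    (hdet : (matA a σ).det ≠ 0) (F : Finset (Fin d)) :
    #(F ∩ univ.map σ.toEmbedding) ≤ Module.finrank ℝ (Submodule.span ℝ (a '' (F : Set (Fin d)))) := by
  rw [← finrank_inter a σ hdet F]
  apply Submodule.finrank_mono
  apply Submodule.span_mono
  apply Set.image_mono
  exact_mod_cast Finset.inter_subset_left

lemma degen_tri {N d : ℕ} (a : Fin d → Fin N → ℝ) (F : Finset (Fin d)) (c : Fin d → ℝ)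
    (hc0 : ∀ i, 0 ≤ c i) (hcF : ∀ i ∈ F, c i = 0) (hsum : ∑ i, c i = 1)
    (hw : ∑ i, c i • a i ∈ Submodule.span ℝ (a '' (F : Set (Fin d)))) :
    ∃ ω, GenW a ω ∧ ∀ σ ∈ triW a ω, #(F ∩ univ.map σ.toEmbedding) <
      Module.finrank ℝ (Submodule.span ℝ (a '' (F : Set (Fin d)))) := by
  set w := ∑ i, c i • a i with hwdef
  set r := Module.finrank ℝ (Submodule.span ℝ (a '' (F : Set (Fin d)))) with hr
  set U : Set (Fin d → ℝ) := ⋂ σ : Fin N ↪o Fin d, ⋂ _ : (matA a σ).det ≠ 0,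
    ⋂ _ : r ≤ #(F ∩ univ.map σ.toEmbedding), {ω | c ⬝ᵥ ω < w ⬝ᵥ xsA a σ ω} with hU
  have hopen : IsOpen U := by
    refine isOpen_iInter_of_finite fun σ => isOpen_iInter_of_finite fun _ =>
      isOpen_iInter_of_finite fun _ => isOpen_lt ?_ ?_
    · unfold dotProduct; fun_prop
    · have : Continuous (xsA a σ) := LinearMap.continuous_of_finiteDimensional _
      unfold dotProduct; fun_prop
  have hne : U.Nonempty := by
    refine ⟨fun i => if i ∈ F then 0 else -1, ?_⟩
    simp only [hU, Set.mem_iInter]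
    intro σ hdet hcard
    set ω0 : Fin d → ℝ := fun i => if i ∈ F then 0 else -1 with hω0
    have h1 : c ⬝ᵥ ω0 = -1 := by
      rw [← hsum, ← Finset.sum_neg_distrib]
      refine Finset.sum_congr rfl fun i _ => ?_
      by_cases hi : i ∈ F
      · simp [hω0, hi, hcF i hi]
      · simp [hω0, hi]
    have hspan : Submodule.span ℝ (a '' ((F ∩ univ.map σ.toEmbedding : Finset (Fin d)) : Set (Fin d))) =
        Submodule.span ℝ (a '' (F : Set (Fin d))) := by
      apply Submodule.eq_of_le_of_finrank_le
      · apply Submodule.span_mono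
        apply Set.image_mono
        exact_mod_cast Finset.inter_subset_left
      · rw [finrank_inter a σ hdet F]; exact hcard
    rw [← hspan] at hw
    have aux : ∀ z ∈ Submodule.span ℝ (a '' ((F ∩ univ.map σ.toEmbedding : Finset (Fin d)) : Set (Fin d))),
        z ⬝ᵥ xsA a σ ω0 = 0 := by
      intro z hz
      induction hz using Submodule.span_induction with
      | mem z hz =>
        obtain ⟨i, hi, rfl⟩ := hz
        have hi' := Finset.mem_inter.1 hi
        obtain ⟨k, hk⟩ : ∃ k, σ k = i := by simpa using hi'.2
        rw [← hk, xsA_spec a σ hdet]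
        simp [hω0, hk, hi'.1]
      | zero => simp
      | add x y _ _ hx hy => rw [add_dotProduct, hx, hy, add_zero]
      | smul t x _ hx => rw [smul_dotProduct, hx, smul_zero]
    have h2 : w ⬝ᵥ xsA a σ ω0 = 0 := aux w hw
    show c ⬝ᵥ ω0 < w ⬝ᵥ xsA a σ ω0
    rw [h1, h2]; norm_num
  obtain ⟨ω, hωU, hω⟩ := genW_exists a U hopen hne
  refine ⟨ω, hω, fun σ hσ => ?_⟩
  by_contra hcard
  simp only [triW, mem_filter, mem_univ, true_and] at hσ
  simp only [hU, Set.mem_iInter] at hωU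
  have h1 : c ⬝ᵥ ω < w ⬝ᵥ xsA a σ ω := hωU σ hσ.1 (not_lt.1 hcard)
  rw [hwdef, sum_dotProduct] at h1
  refine absurd h1 (not_lt.2 (Finset.sum_le_sum fun i _ => ?_))
  rw [smul_dotProduct, smul_eq_mul]
  exact mul_le_mul_of_nonneg_left (hσ.2 i) (hc0 i)

lemma adjF_mem {n d : ℕ} (a : Fin d → Fin (n+1) → ℝ) (T : Finset (Fin (n+1) ↪o Fin d))
    (v : Fin (n+1) → ℝ) (F : Finset (Fin d)) (hF : ∀ i ∈ F, a i ⬝ᵥ v = 0) (m : ℕ)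
    (h : ∀ σ ∈ T, m ≤ #(F \ univ.map σ.toEmbedding)) : adjF a T ∈ pointIdealR v ^ m := by
  unfold adjF
  refine Ideal.sum_mem _ fun σ hσ => Ideal.mul_mem_left _ _ ?_
  have hsub : F \ univ.map σ.toEmbedding ⊆ univ \ univ.map σ.toEmbedding :=
    Finset.sdiff_subset_sdiff (Finset.subset_univ _) le_rfl
  rw [← Finset.prod_sdiff hsub]
  refine Ideal.mul_mem_left _ _ (Ideal.pow_le_pow_right (h σ hσ) ?_)
  have := Ideal.prod_mem_prod (s := F \ univ.map σ.toEmbedding) (I := fun _ => pointIdealR v)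
    (x := fun i => linF (a i)) (fun i hi => Ideal.subset_span
      ⟨linF_hom _, by rw [eval_linF]; exact hF i (Finset.mem_sdiff.1 hi).1⟩)
  simpa using this

lemma exists_sep {N d : ℕ} (a : Fin d → Fin N → ℝ) (F : Finset (Fin d))
    (hno : ∀ c : Fin d → ℝ, (∀ i, 0 ≤ c i) → (∀ i ∈ F, c i = 0) → ∑ i, c i = 1 →
      ∑ i, c i • a i ∉ Submodule.span ℝ (a '' (F : Set (Fin d)))) :
    ∃ u : Fin N → ℝ, (∀ i ∈ F, a i ⬝ᵥ u = 0) ∧ ∀ i, i ∉ F → 0 < a i ⬝ᵥ u := by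
  set W := Submodule.span ℝ (a '' (F : Set (Fin d))) with hW
  let g : (Fin d → ℝ) →ₗ[ℝ] (Fin N → ℝ) := Fintype.linearCombination ℝ a
  have hg : ∀ c, g c = ∑ i, c i • a i := fun c => rfl
  let Z : Submodule ℝ (Fin d → ℝ) := ⨅ i ∈ F, LinearMap.ker (LinearMap.proj (R := ℝ) (φ := fun _ : Fin d => ℝ) i)
  have hZ : ∀ c, c ∈ Z ↔ ∀ i ∈ F, c i = 0 := by
    intro c; simp [Z, Submodule.mem_iInf]
  set K0 : Set (Fin d → ℝ) := stdSimplex ℝ (Fin d) ∩ (Z : Set (Fin d → ℝ)) with hK0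
  have hKc : IsCompact (g '' K0) :=
    ((isCompact_stdSimplex ℝ (Fin d)).inter_right Z.closed_of_finiteDimensional).image
      (LinearMap.continuous_of_finiteDimensional g)
  have hKv : Convex ℝ (g '' K0) := ((convex_stdSimplex ℝ (Fin d)).inter Z.convex).linear_image g
  have hdisj : Disjoint (g '' K0) (W : Set (Fin N → ℝ)) := by
    rw [Set.disjoint_left]
    rintro _ ⟨c, ⟨⟨h1, h2⟩, h3⟩, rfl⟩ h4
    exact hno c h1 ((hZ c).1 h3) h2 h4
  obtain ⟨f, s, t, h1, h2, h3⟩ := geometric_hahn_banach_compact_closed hKv hKc W.convex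
    W.closed_of_finiteDimensional hdisj
  have ht : t < 0 := by simpa using h3 0 W.zero_mem
  have hf0 : ∀ b ∈ W, f b = 0 := by
    intro b hb
    by_contra hne
    have := h3 ((t / f b) • b) (W.smul_mem _ hb)
    rw [map_smul, smul_eq_mul, div_mul_cancel₀ _ hne] at this
    exact lt_irrefl _ this
  have hdot : ∀ z : Fin N → ℝ, z ⬝ᵥ (fun k => - f (Pi.single k 1)) = - f z := by
    intro z
    have : z = ∑ k, z k • (Pi.single k 1 : Fin N → ℝ) := by
      ext j; simp [Finset.sum_apply, Pi.single_apply]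
    conv_rhs => rw [this, map_sum]
    simp [dotProduct, Finset.sum_neg_distrib]
  refine ⟨fun k => - f (Pi.single k 1), fun i hi => ?_, fun i hi => ?_⟩
  · rw [hdot, hf0 _ (Submodule.subset_span ⟨i, hi, rfl⟩), neg_zero]
  · rw [hdot]
    have := h1 (a i) ⟨Pi.single i 1, ⟨single_mem_stdSimplex ℝ i, (hZ _).2 fun j hj => by
      rw [Pi.single_apply, if_neg]; rintro rfl; exact hi hj⟩, by rw [hg]; simp [Pi.single_apply]⟩
    linarith

lemma finrank_Z {n d : ℕ} (a : Fin d → Fin (n+1) → ℝ) (F : Finset (Fin d)) (u : Fin (n+1) → ℝ)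
    (hu : ∀ i ∈ F, a i ⬝ᵥ u = 0) (hu0 : 0 < u 0) (Z : Submodule ℝ (Fin n → ℝ))
    (hZ : ∀ z, z ∈ Z ↔ ∀ i ∈ F, a i ⬝ᵥ (Fin.cons 0 z : Fin (n+1) → ℝ) = 0) :
    Module.finrank ℝ Z = n - Module.finrank ℝ (Submodule.span ℝ (a '' (F : Set (Fin d)))) := by
  let A : Matrix F (Fin (n+1)) ℝ := Matrix.of fun i => a i
  let S := LinearMap.ker A.mulVecLin
  have hS : ∀ x, x ∈ S ↔ ∀ i ∈ F, a i ⬝ᵥ x = 0 := by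
    intro x
    simp only [S, LinearMap.mem_ker, Matrix.mulVecLin_apply, funext_iff, Subtype.forall]
    rfl
  have hrank : Module.finrank ℝ S + Module.finrank ℝ (Submodule.span ℝ (a '' (F : Set (Fin d)))) = n + 1 := by
    have h1 := LinearMap.finrank_range_add_finrank_ker A.mulVecLin
    have h2 : A.rank = Module.finrank ℝ (Submodule.span ℝ (a '' (F : Set (Fin d)))) := by
      rw [Matrix.rank_eq_finrank_span_row]
      have : Set.range A.row = a '' (F : Set (Fin d)) := by
        ext z
        simp only [Set.mem_range, Set.mem_image, Finset.mem_coe, Subtype.exists]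
        constructor
        · rintro ⟨i, hi, rfl⟩; exact ⟨i, hi, rfl⟩
        · rintro ⟨i, hi, rfl⟩; exact ⟨i, hi, rfl⟩
      rw [this]
    rw [Matrix.rank] at h2
    rw [← h2]
    simp only [Module.finrank_fin_fun] at h1
    change _ + Module.finrank ℝ S = _ at h1
    omega
  let ψ : S →ₗ[ℝ] ℝ := (LinearMap.proj (R := ℝ) (φ := fun _ : Fin (n+1) => ℝ) 0).domRestrict S
  have hψ : LinearMap.range ψ = ⊤ := by
    rw [LinearMap.range_eq_top]
    intro t
    refine ⟨⟨(t / u 0) • u, S.smul_mem _ ((hS u).2 hu)⟩, ?_⟩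
    show (t / u 0) * u 0 = t
    field_simp
  have h3 := LinearMap.finrank_range_add_finrank_ker ψ
  rw [hψ, finrank_top, Module.finrank_self] at h3
  let ι : (Fin n → ℝ) →ₗ[ℝ] (Fin (n+1) → ℝ) :=
    { toFun := fun z => Fin.cons 0 z
      map_add' := by intro x y; ext k; refine Fin.cases ?_ (fun k => ?_) k <;> simp
      map_smul' := by intro t y; ext k; refine Fin.cases ?_ (fun k => ?_) k <;> simp }
  have hι : Function.Injective ι := by
    intro x y h
    have h' : (Fin.cons 0 x : Fin (n+1) → ℝ) = Fin.cons 0 y := h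
    ext k
    have := congrFun h' k.succ
    simpa using this
  have hmap : Z.map ι = (LinearMap.ker ψ).map S.subtype := by
    ext x
    simp only [Submodule.mem_map, LinearMap.mem_ker, Submodule.subtype_apply, Subtype.exists]
    constructor
    · rintro ⟨z, hz, rfl⟩
      exact ⟨ι z, (hS _).2 ((hZ z).1 hz), by show (Fin.cons 0 z : Fin (n+1) → ℝ) 0 = 0; simp, rfl⟩
    · rintro ⟨y, hy, h0, rfl⟩
      have h0' : y 0 = 0 := h0
      have hy' : Fin.cons 0 (Fin.tail y) = y := by
        rw [← h0']; exact Fin.cons_self_tail y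
      refine ⟨Fin.tail y, (hZ _).2 ?_, hy'⟩
      rw [hy']
      exact (hS _).1 hy
  have e1 := (Submodule.equivMapOfInjective ι hι Z).finrank_eq
  have e2 := (Submodule.equivMapOfInjective S.subtype S.injective_subtype (LinearMap.ker ψ)).finrank_eq
  rw [hmap] at e1
  omega

lemma lift1_comb {n : ℕ} (x y z : Fin n → ℝ) (t : ℝ) :
    lift1 (t • (x - y) + z) = t • lift1 x - t • lift1 y + lift1 z := by
  ext k
  refine Fin.cases ?_ (fun k => ?_) k
  · simp [lift1]
  · simp [lift1]; ring

lemma exists_pos_pt {n d : ℕ} (a : Fin d → Fin (n+1) → ℝ) (ha : ∀ i, a i ≠ 0)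
    (P : Set (Fin n → ℝ)) (hP : ∀ y ∈ P, ∀ i, 0 ≤ a i ⬝ᵥ lift1 y) (hfull : affineSpan ℝ P = ⊤) (j : Fin d) :
    ∃ y ∈ P, 0 < a j ⬝ᵥ lift1 y := by
  by_contra! hcon
  have h0 : ∀ y ∈ P, a j ⬝ᵥ lift1 y = 0 := fun y hy => le_antisymm (hcon y hy) (hP y hy j)
  let H : AffineSubspace ℝ (Fin n → ℝ) :=
    { carrier := {y | a j ⬝ᵥ lift1 y = 0}
      smul_vsub_vadd_mem' := by
        intro t x y z hx hy hz
        simp only [Set.mem_ofPred_eq, vsub_eq_sub, vadd_eq_add] at *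
        rw [lift1_comb, dotProduct_add, dotProduct_sub, dotProduct_smul, dotProduct_smul, hx, hy, hz]
        simp }
  have hH : affineSpan ℝ P ≤ H := affineSpan_le.2 h0
  rw [hfull] at hH
  have hall : ∀ y, a j ⬝ᵥ lift1 y = 0 := fun y => hH (AffineSubspace.mem_top ℝ _ y)
  have hz : a j 0 = 0 := by
    have := hall 0
    simpa [dotProduct, lift1, Fin.sum_univ_succ] using this
  apply ha j
  ext k
  refine Fin.cases hz (fun k => ?_) k
  have := hall (Pi.single k 1)
  simpa [dotProduct, lift1, Fin.sum_univ_succ, hz, Pi.single_apply] using this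

lemma cone_pos {n d : ℕ} (a : Fin d → Fin (n+1) → ℝ) (i0 : Fin d)
    (P : Set (Fin n → ℝ)) (hP : P = {y | ∀ i, 0 ≤ a i ⬝ᵥ lift1 y}) (hcpt : IsCompact P)
    (hne : P.Nonempty) (p : Fin (n+1) → ℝ) (hp : ∀ i, 0 < a i ⬝ᵥ p) (hp0 : 0 < p 0)
    (u : Fin (n+1) → ℝ) (hu : u ≠ 0) (hau : ∀ i, 0 ≤ a i ⬝ᵥ u) : 0 < u 0 := by
  by_contra hneg
  rw [not_lt] at hneg
  set t := - u 0 / p 0 with ht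
  have ht0 : 0 ≤ t := div_nonneg (by linarith) hp0.le
  set z := u + t • p with hz
  have hz0 : z 0 = 0 := by
    simp only [hz, ht, Pi.add_apply, Pi.smul_apply, smul_eq_mul]
    field_simp
    ring
  have haz : ∀ i, 0 ≤ a i ⬝ᵥ z := by
    intro i
    rw [hz, dotProduct_add, dotProduct_smul, smul_eq_mul]
    have := mul_nonneg ht0 (hp i).le
    have := hau i
    linarith
  have hzne : z ≠ 0 := by
    rcases ht0.eq_or_lt with h | h
    · rw [hz, ← h]; simpa using hu
    · intro h0
      have h1 : a i0 ⬝ᵥ z = 0 := by rw [h0]; simp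
      rw [hz, dotProduct_add, dotProduct_smul, smul_eq_mul] at h1
      have := mul_pos h (hp i0)
      have := hau i0
      linarith
  obtain ⟨k, hk⟩ : ∃ k : Fin n, z k.succ ≠ 0 := by
    by_contra! hcon
    apply hzne
    ext k
    exact Fin.cases hz0 hcon k
  obtain ⟨y, hy⟩ := hne
  obtain ⟨R, hR⟩ := hcpt.isBounded.exists_norm_le
  have hmem : ∀ s : ℝ, 0 ≤ s → y + s • Fin.tail z ∈ P := by
    intro s hs
    rw [hP] at hy ⊢
    intro i
    have : lift1 (y + s • Fin.tail z) = lift1 y + s • z := by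
      ext k
      refine Fin.cases ?_ (fun k => ?_) k
      · simp [lift1, hz0]
      · simp [lift1, Fin.tail]
    rw [this, dotProduct_add, dotProduct_smul, smul_eq_mul]
    exact add_nonneg (hy i) (mul_nonneg hs (haz i))
  have hRnn : 0 ≤ R := (norm_nonneg _).trans (hR y hy)
  set s := (R + |y k| + 1) / |z k.succ| with hs
  have hs0 : 0 ≤ s := by positivity
  have h1 := (norm_le_pi_norm (y + s • Fin.tail z) k).trans (hR _ (hmem s hs0))
  have h2 : s * |z k.succ| = R + |y k| + 1 := by
    rw [hs]; exact div_mul_cancel₀ _ (abs_ne_zero.2 hk)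
  have h3 : (y + s • Fin.tail z) k = y k + s * z k.succ := by simp [Fin.tail]
  rw [h3, Real.norm_eq_abs] at h1
  have h4 : |s * z k.succ| ≤ |y k + s * z k.succ| + |y k| := by
    have := abs_sub (y k + s * z k.succ) (y k)
    simpa using this
  rw [abs_mul, abs_of_nonneg hs0, h2] at h4
  linarith

lemma span_top_of {N d : ℕ} (a : Fin d → Fin N → ℝ)
    (h : ∀ u : Fin N → ℝ, (∀ i, a i ⬝ᵥ u = 0) → u = 0) : Submodule.span ℝ (Set.range a) = ⊤ := by
  by_contra hne
  obtain ⟨f, hf, hle⟩ := Submodule.exists_le_ker_of_lt_top _ (lt_top_iff_ne_top.2 hne)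
  have hdot : ∀ z : Fin N → ℝ, z ⬝ᵥ (fun k => f (Pi.single k 1)) = f z := by
    intro z
    have : z = ∑ k, z k • (Pi.single k 1 : Fin N → ℝ) := by
      ext j; simp [Finset.sum_apply, Pi.single_apply]
    conv_rhs => rw [this, map_sum]
    simp [dotProduct]
  have h0 := h (fun k => f (Pi.single k 1)) (fun i => by
    rw [hdot]; exact hle (Submodule.subset_span ⟨i, rfl⟩))
  apply hf
  ext z
  have := congrFun h0 z
  simpa using this

lemma hom_eq_linF {N : ℕ} (q : MvPolynomial (Fin N) ℝ) (hq : q.IsHomogeneous 1) :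
    ∃ b : Fin N → ℝ, q = linF b := by
  rw [← mem_homogeneousSubmodule, homogeneousSubmodule_one_eq_span_X,
    Submodule.mem_span_range_iff_exists_fun] at hq
  obtain ⟨c, rfl⟩ := hq
  exact ⟨c, by simp [linF, smul_eq_C_mul]⟩

/-- linear version of `linF` -/
def linFL (N : ℕ) : (Fin N → ℝ) →ₗ[ℝ] MvPolynomial (Fin N) ℝ where
  toFun := linF
  map_add' := by intro x y; simp [linF, add_mul, Finset.sum_add_distrib]
  map_smul' := by intro t x; simp [linF, smul_eq_C_mul, Finset.mul_sum, mul_assoc]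

lemma linFL_inj (N : ℕ) : Function.Injective (linFL N) := by
  intro x y h
  ext k
  have h' : linF x = linF y := h
  have := congrArg (eval (Pi.single k 1)) h'
  simpa [eval_linF] using this

lemma rk_eq {n d : ℕ} (a : Fin d → Fin (n+1) → ℝ) (F : Finset (Fin d)) :
    Module.finrank ℝ (Submodule.span ℝ ((fun i => linF (a i)) '' (F : Set (Fin d)))) =
    Module.finrank ℝ (Submodule.span ℝ (a '' (F : Set (Fin d)))) := by
  have : (fun i => linF (a i)) '' (F : Set (Fin d)) = linFL (n+1) '' (a '' (F : Set (Fin d))) := by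
    rw [Set.image_image]; rfl
  rw [this, Submodule.span_image]
  exact (Submodule.equivMapOfInjective _ (linFL_inj (n+1)) _).finrank_eq.symm

lemma face_dim {n d : ℕ} (a : Fin d → Fin (n+1) → ℝ) (F : Finset (Fin d)) (u : Fin (n+1) → ℝ)
    (hu : ∀ i ∈ F, a i ⬝ᵥ u = 0) (hu' : ∀ i, i ∉ F → 0 < a i ⬝ᵥ u) (hu0 : 0 < u 0)
    (Q : Set (Fin n → ℝ))
    (hQ : ∀ y, y ∈ Q ↔ (∀ i, 0 ≤ a i ⬝ᵥ lift1 y) ∧ ∀ i ∈ F, a i ⬝ᵥ lift1 y = 0) :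
    Q.Nonempty ∧ Module.finrank ℝ (affineSpan ℝ Q).direction =
      n - Module.finrank ℝ (Submodule.span ℝ (a '' (F : Set (Fin d)))) := by
  set y0 : Fin n → ℝ := (u 0)⁻¹ • Fin.tail u with hy0
  have hl : lift1 y0 = (u 0)⁻¹ • u := by
    ext k
    refine Fin.cases ?_ (fun k => ?_) k
    · simp [lift1, hu0.ne']
    · simp [lift1, hy0, Fin.tail]
  have hF : ∀ i ∈ F, a i ⬝ᵥ lift1 y0 = 0 := by
    intro i hi
    rw [hl, dotProduct_smul, hu i hi, smul_zero]
  have hnF : ∀ i, i ∉ F → 0 < a i ⬝ᵥ lift1 y0 := by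
    intro i hi
    rw [hl, dotProduct_smul, smul_eq_mul]
    exact mul_pos (inv_pos.2 hu0) (hu' i hi)
  have hy0Q : y0 ∈ Q := (hQ y0).2 ⟨fun i => by
    by_cases hi : i ∈ F
    · exact (hF i hi).ge
    · exact (hnF i hi).le, hF⟩
  refine ⟨⟨y0, hy0Q⟩, ?_⟩
  have hcons : ∀ (z y : Fin n → ℝ) (t : ℝ), lift1 (y + t • z) = lift1 y + t • (Fin.cons 0 z : Fin (n+1) → ℝ) := by
    intro z y t
    ext k
    refine Fin.cases ?_ (fun k => ?_) k <;> simp [lift1]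
  let Z : Submodule ℝ (Fin n → ℝ) :=
    { carrier := {z | ∀ i ∈ F, a i ⬝ᵥ (Fin.cons 0 z : Fin (n+1) → ℝ) = 0}
      add_mem' := by
        intro x y hx hy i hi
        have : (Fin.cons 0 (x + y) : Fin (n+1) → ℝ) = Fin.cons 0 x + Fin.cons 0 y := by
          ext k; refine Fin.cases ?_ (fun k => ?_) k <;> simp
        rw [this, dotProduct_add, hx i hi, hy i hi, add_zero]
      zero_mem' := by
        intro i hi
        have : (Fin.cons 0 (0 : Fin n → ℝ) : Fin (n+1) → ℝ) = 0 := by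
          ext k; refine Fin.cases ?_ (fun k => ?_) k <;> simp
        rw [this, dotProduct_zero]
      smul_mem' := by
        intro t x hx i hi
        have : (Fin.cons 0 (t • x) : Fin (n+1) → ℝ) = t • Fin.cons 0 x := by
          ext k; refine Fin.cases ?_ (fun k => ?_) k <;> simp
        rw [this, dotProduct_smul, hx i hi, smul_zero] }
  have hZ : ∀ z, z ∈ Z ↔ ∀ i ∈ F, a i ⬝ᵥ (Fin.cons 0 z : Fin (n+1) → ℝ) = 0 := fun z => Iff.rfl
  have hdir : (affineSpan ℝ Q).direction = Z := by
    apply le_antisymm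
    · have : affineSpan ℝ Q ≤ AffineSubspace.mk' y0 Z := by
        rw [affineSpan_le]
        intro y hy
        rw [SetLike.mem_coe, AffineSubspace.mem_mk', vsub_eq_sub, hZ]
        intro i hi
        have h1 := hcons (y - y0) y0 1
        rw [one_smul, one_smul, add_sub_cancel] at h1
        have h2 := ((hQ y).1 hy).2 i hi
        rw [h1, dotProduct_add, hF i hi, zero_add] at h2
        exact h2
      have := AffineSubspace.direction_le this
      rwa [AffineSubspace.direction_mk'] at this
    · intro z hz
      obtain ⟨ε, hε, hεQ⟩ : ∃ ε : ℝ, 0 < ε ∧ y0 + ε • z ∈ Q := by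
        have : ∀ᶠ ε in nhdsWithin (0:ℝ) (Set.Ioi 0), ∀ i, i ∉ F → 0 ≤ a i ⬝ᵥ lift1 (y0 + ε • z) := by
          rw [Filter.eventually_all]
          intro i
          rw [Filter.eventually_imp_distrib_left]
          intro hi
          simp only [hcons, dotProduct_add, dotProduct_smul, smul_eq_mul]
          have hcont : Filter.Tendsto (fun ε : ℝ => a i ⬝ᵥ lift1 y0 + ε * (a i ⬝ᵥ (Fin.cons 0 z : Fin (n+1) → ℝ)))
              (nhds 0) (nhds (a i ⬝ᵥ lift1 y0 + 0 * (a i ⬝ᵥ (Fin.cons 0 z : Fin (n+1) → ℝ)))) := by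
            apply Continuous.tendsto (by fun_prop)
          have h3 := (hcont.eventually (lt_mem_nhds (a := 0) (by simpa using hnF i hi)))
          exact (h3.mono fun _ h => le_of_lt h).filter_mono nhdsWithin_le_nhds
        obtain ⟨ε, h1, h2⟩ := (this.and self_mem_nhdsWithin).exists
        refine ⟨ε, h2, (hQ _).2 ?_⟩
        have h4 : ∀ i ∈ F, a i ⬝ᵥ lift1 (y0 + ε • z) = 0 := by
          intro i hi
          rw [hcons, dotProduct_add, dotProduct_smul, hF i hi, (hZ z).1 hz i hi]
          simp
        exact ⟨fun i => by
          by_cases hi : i ∈ F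
          · exact (h4 i hi).ge
          · exact h1 i hi, h4⟩
      have h5 := AffineSubspace.vsub_mem_direction (subset_affineSpan ℝ Q hεQ) (subset_affineSpan ℝ Q hy0Q)
      rw [vsub_eq_sub, add_sub_cancel_left] at h5
      have h6 := (affineSpan ℝ Q).direction.smul_mem ε⁻¹ h5
      rwa [smul_smul, inv_mul_cancel₀ hε.ne', one_smul] at h6
  rw [hdir]
  exact finrank_Z a F u hu hu0 Z hZ

/-- **existence.** There exists a nonzero homogeneous polynomial
`f ∈ ℝ[X₀,…,Xₙ]` of degree `d − n − 1` with `f ∈ I_v^{ord_P(L_v)}` for every nonzero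
`v ∈ ℝ^{n+1}` (Warren's adjoint is such a polynomial). -/
theorem adjoint_existence {n d : ℕ}
    (ℓ : Fin d → MvPolynomial (Fin (n + 1)) ℝ) (hP : IsPolytopeSetup ℓ) :
    ∃ f : MvPolynomial (Fin (n + 1)) ℝ, f ≠ 0 ∧ f.IsHomogeneous (d - n - 1) ∧
      ∀ v : Fin (n + 1) → ℝ, v ≠ 0 → f ∈ pointIdealR v ^ ordOf ℓ v := by
  have hex := fun i => hom_eq_linF (ℓ i) (hP.hhom i)
  choose a ha using hex
  have hℓ : ℓ = fun i => linF (a i) := funext ha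
  have hev : ∀ i x, eval x (ℓ i) = a i ⬝ᵥ x := fun i x => by rw [ha, eval_linF]
  have hPset : polytopeOf ℓ = {y | ∀ i, 0 ≤ a i ⬝ᵥ lift1 y} := by
    unfold polytopeOf; simp only [hev]
  have hane : ∀ i, a i ≠ 0 := by
    intro i h
    apply hP.hne i
    rw [ha, h]; simp [linF]
  have hd := hP.hd
  let i0 : Fin d := ⟨0, by omega⟩
  have hpts := exists_pos_pt a hane (polytopeOf ℓ) (fun y hy => by rw [hPset] at hy; exact hy) hP.hfull
  choose Y hY1 hY2 using hpts
  set p : Fin (n+1) → ℝ := ∑ j, lift1 (Y j) with hpdef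
  have hp : ∀ i, 0 < a i ⬝ᵥ p := by
    intro i
    rw [hpdef, dotProduct_sum]
    refine Finset.sum_pos' (fun j _ => ?_) ⟨i, mem_univ _, hY2 i⟩
    have := hY1 j
    rw [hPset] at this
    exact this i
  have hp0 : 0 < p 0 := by
    rw [hpdef, Finset.sum_apply]
    exact Finset.sum_pos (fun j _ => by simp [lift1]) ⟨i0, mem_univ _⟩
  have hcone := cone_pos a i0 (polytopeOf ℓ) hPset hP.hcpt ⟨_, hY1 i0⟩ p hp hp0
  have hperp : ∀ u : Fin (n+1) → ℝ, (∀ i, a i ⬝ᵥ u = 0) → u = 0 := by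
    intro u hu
    by_contra hne
    have h1 := hcone u hne (fun i => (hu i).ge)
    have h2 := hcone (-u) (neg_ne_zero.2 hne) (fun i => by rw [dotProduct_neg, hu i, neg_zero])
    simp only [Pi.neg_apply] at h2
    linarith
  have hspan := span_top_of a hperp
  obtain ⟨ω, -, hω⟩ := genW_exists a Set.univ isOpen_univ Set.univ_nonempty
  have hT := triW_isTri a p hp ω hω
  refine ⟨adjF a (triW a ω), adjF_ne_zero a _ hT hspan p hp, ?_, ?_⟩
  · rw [Nat.sub_sub]; exact adjF_hom a _
  intro v hv
  set F := flatOf ℓ v with hF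
  have hFmem : ∀ i, i ∈ F ↔ a i ⬝ᵥ v = 0 := by
    intro i; rw [hF]; simp [flatOf, hev]
  have hrk : rkOf ℓ v = Module.finrank ℝ (Submodule.span ℝ (a '' (F : Set (Fin d)))) := by
    rw [← rk_eq a F]
    unfold rkOf
    rw [← hF, hℓ]
  have hcard : ∀ σ : Fin (n+1) ↪o Fin d,
      #(F \ univ.map σ.toEmbedding) + #(F ∩ univ.map σ.toEmbedding) = #F := fun σ =>
    Finset.card_sdiff_add_card_inter _ _
  by_cases hdeg : ∃ c : Fin d → ℝ, (∀ i, 0 ≤ c i) ∧ (∀ i ∈ F, c i = 0) ∧ ∑ i, c i = 1 ∧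
      ∑ i, c i • a i ∈ Submodule.span ℝ (a '' (F : Set (Fin d)))
  · obtain ⟨c, h1, h2, h3, h4⟩ := hdeg
    obtain ⟨ω', hω', hlt⟩ := degen_tri a F c h1 h2 h3 h4
    have hT' := triW_isTri a p hp ω' hω'
    rw [adjF_eq a _ _ hT hT' p hp]
    have hmem : adjF a (triW a ω') ∈ pointIdealR v ^ (nlOf ℓ v + 1) := by
      refine adjF_mem a _ v F (fun i hi => (hFmem i).1 hi) _ fun σ hσ => ?_
      have h5 := hlt σ hσ
      have h6 := hcard σ
      have h7 : rkOf ℓ v ≤ #F := by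
        rw [hrk]
        have := finrank_span_finset_le_card (R := ℝ) (F.image a)
        rw [Finset.coe_image] at this
        exact this.trans Finset.card_image_le
      unfold nlOf
      rw [← hF]
      omega
    unfold ordOf
    split_ifs
    · exact Ideal.pow_le_pow_right (Nat.le_succ _) hmem
    · exact hmem
  · push Not at hdeg
    obtain ⟨u, hu1, hu2⟩ := exists_sep a F hdeg
    have hune : u ≠ 0 := by
      rintro rfl
      apply hv
      apply hperp
      intro i
      rw [← hFmem]
      by_contra hi
      simpa using hu2 i hi
    have hu0 : 0 < u 0 := hcone u hune fun i => by
      by_cases hi : i ∈ F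
      · exact (hu1 i hi).ge
      · exact (hu2 i hi).le
    have hface := face_dim a F u hu1 hu2 hu0 (faceOf ℓ v) (fun y => by
      unfold faceOf
      rw [← hF, hPset]
      simp only [hev, Set.mem_ofPred_eq])
    rw [← hrk] at hface
    unfold ordOf
    rw [if_pos hface]
    refine adjF_mem a _ v F (fun i hi => (hFmem i).1 hi) _ fun σ hσ => ?_
    have h5 := card_inter_le a σ (hT.1 σ hσ) F
    have h6 := hcard σ
    unfold nlOf
    rw [← hF]
    omega

end
end

section
/- Let f ∈ ℂ[X₀, …, Xₙ] be a nonzero homogeneous polynomial of degree d − n − 1 satisfying f ∈ I_v^{ord_P(L_v)} for every nonzero v ∈ ℝ^{n+1}. Then for every index i ∈ {1, …, d} the linear form ℓᵢ does not divide f; equivalently, f does not vanish identically on any facet hyperplane of P. -/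
open MvPolynomial Finset Classical

noncomputable section

namespace Adj

abbrev Fm (N : ℕ) := Module.Dual ℝ (Fin N → ℝ)

def ev {N : ℕ} (v : Fin N → ℝ) : MvPolynomial (Fin N) ℂ →+* ℂ := eval (fun i => (v i : ℂ))

def lin {N : ℕ} (l : Fm N) : MvPolynomial (Fin N) ℂ :=
  ∑ k, C ((l (Pi.single k 1) : ℝ) : ℂ) * X k

lemma form_apply {N : ℕ} (l : Fm N) (v : Fin N → ℝ) :
    l v = ∑ k, l (Pi.single k 1) * v k := by
  conv_lhs => rw [← (Pi.basisFun ℝ (Fin N)).sum_repr v]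
  rw [map_sum]
  refine Finset.sum_congr rfl fun k _ => ?_
  rw [map_smul, Pi.basisFun_apply, Pi.basisFun_repr, smul_eq_mul, mul_comm]

lemma ev_lin {N : ℕ} (l : Fm N) (v : Fin N → ℝ) : ev v (lin l) = (l v : ℂ) := by
  rw [form_apply l v]
  simp [ev, lin]

lemma real_funext {N : ℕ} {f g : MvPolynomial (Fin N) ℂ} (h : ∀ v, ev v f = ev v g) : f = g := by
  refine MvPolynomial.funext_set (fun _ => Set.range ((↑) : ℝ → ℂ))
    (fun _ => Set.infinite_range_of_injective Complex.ofReal_injective) ?_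
  intro x hx
  choose y hy using fun i => hx i (Set.mem_univ i)
  have : x = fun i => (y i : ℂ) := by ext i; exact (hy i).symm
  rw [this]; exact h y

lemma lin_smul {N : ℕ} (c : ℝ) (l : Fm N) : lin (c • l) = C (c : ℂ) * lin l := by
  apply real_funext; intro v
  rw [map_mul, ev_lin, ev_lin]; simp [ev]

lemma lin_ne {N : ℕ} {l : Fm N} (h : l ≠ 0) : lin l ≠ 0 := by
  intro h0; apply h; ext v
  have := ev_lin l (Pi.single v 1)
  rw [h0, map_zero] at this
  simpa using this.symm

lemma lin_hom {N : ℕ} (l : Fm N) : (lin l).IsHomogeneous 1 :=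
  IsHomogeneous.sum _ _ _ fun _ _ => isHomogeneous_C_mul_X _ _

lemma lin_totalDegree {N : ℕ} {l : Fm N} (h : l ≠ 0) : (lin l).totalDegree = 1 :=
  (lin_hom l).totalDegree (lin_ne h)

def sb {M N : ℕ} (φ : (Fin M → ℝ) →ₗ[ℝ] (Fin N → ℝ)) :
    MvPolynomial (Fin N) ℂ →ₐ[ℂ] MvPolynomial (Fin M) ℂ :=
  aeval fun k => lin ((LinearMap.proj k).comp φ)

lemma ev_sb {M N : ℕ} (φ : (Fin M → ℝ) →ₗ[ℝ] (Fin N → ℝ)) (f) (v) :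
    ev v (sb φ f) = ev (φ v) f := by
  have : (ev v).comp (sb φ).toRingHom = ev (φ v) := by
    apply MvPolynomial.ringHom_ext
    · intro r; simp [ev, sb]
    · intro i
      have := ev_lin ((LinearMap.proj i).comp φ) v
      simp only [RingHom.comp_apply]
      simp [sb, this]
      simp [ev]
  exact congrArg (fun g => g f) this

lemma sb_lin {M N : ℕ} (φ : (Fin M → ℝ) →ₗ[ℝ] (Fin N → ℝ)) (l : Fm N) :
    sb φ (lin l) = lin (l.comp φ) := by
  apply real_funext; intro v; rw [ev_sb, ev_lin, ev_lin]; rfl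

lemma sb_totalDegree {M N : ℕ} (φ : (Fin M → ℝ) →ₗ[ℝ] (Fin N → ℝ)) (f) :
    (sb φ f).totalDegree ≤ f.totalDegree := by
  rw [sb, aeval_def, eval₂_eq]
  refine totalDegree_finsetSum_le fun d hd => ?_
  refine (totalDegree_mul _ _).trans ?_
  have h1 : (algebraMap ℂ (MvPolynomial (Fin M) ℂ) (coeff d f)).totalDegree = 0 := by
    rw [algebraMap_eq, totalDegree_C]
  rw [h1, zero_add]
  refine (totalDegree_finsetProd _ _).trans ?_
  refine le_trans ?_ (le_totalDegree hd)
  rw [Finsupp.sum]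
  refine Finset.sum_le_sum fun i _ => ?_
  refine (totalDegree_pow _ _).trans ?_
  have := (lin_hom ((LinearMap.proj i).comp φ)).totalDegree_le
  nlinarith

/-- projection onto the kernel -/
lemma dvd_sub_sb {N : ℕ} (l : Fm N) (z : Fin N → ℝ) (f : MvPolynomial (Fin N) ℂ) :
    lin l ∣ f - sb (LinearMap.id - l.smulRight z) f := by
  rw [← Ideal.mem_span_singleton, ← Ideal.Quotient.eq]
  set I := Ideal.span {lin l}
  have : Ideal.Quotient.mk I = (Ideal.Quotient.mk I).comp
      (sb (LinearMap.id - l.smulRight z)).toRingHom := by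
    apply MvPolynomial.ringHom_ext
    · intro r; simp
    · intro i
      simp only [RingHom.comp_apply]
      rw [Ideal.Quotient.eq, Ideal.mem_span_singleton]
      refine ⟨C (z i : ℂ), ?_⟩
      apply real_funext; intro v
      have h2 := ev_sb (LinearMap.id - l.smulRight z) (X i) v
      have h3 : ev v (lin l * C (z i : ℂ)) = l v * z i := by
        rw [map_mul, ev_lin]; simp [ev]
      rw [map_sub, h3]
      erw [h2]
      simp [ev]
  exact congrArg (fun g => g f) this

lemma lin_dvd {N : ℕ} {l : Fm N} (hl : l ≠ 0) {ι : Type} (s : Finset ι) (q : ι → Fm N)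
    (hq : ∀ i ∈ s, ∃ v, l v = 0 ∧ q i v ≠ 0)
    {f : MvPolynomial (Fin N) ℂ}
    (h : ∀ v, l v = 0 → (∀ i ∈ s, q i v ≠ 0) → ev v f = 0) : lin l ∣ f := by
  obtain ⟨z, hz⟩ : ∃ z, l z = 1 := by
    obtain ⟨z, hz⟩ := DFunLike.ne_iff.1 hl
    exact ⟨(l z)⁻¹ • z, by rw [map_smul, smul_eq_mul]; exact inv_mul_cancel₀ hz⟩
  have h1 := dvd_sub_sb l z f
  set π : (Fin N → ℝ) →ₗ[ℝ] (Fin N → ℝ) := LinearMap.id - l.smulRight z with hπ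
  have hlπ : ∀ v, l (π v) = 0 := by intro v; simp [hπ, hz]
  have hπ2 : ∀ v, l v = 0 → π v = v := by intro v hv; simp [hπ, hv]
  have h0 : (∏ i ∈ s, lin ((q i).comp π)) * sb π f = 0 := by
    apply real_funext; intro v
    rw [map_mul, map_zero, map_prod, ev_sb]
    by_cases hv : ∀ i ∈ s, q i (π v) ≠ 0
    · rw [h _ (hlπ v) hv, mul_zero]
    · push Not at hv
      obtain ⟨i, hi, hi2⟩ := hv
      rw [Finset.prod_eq_zero hi, zero_mul]
      rw [ev_lin]; simp [hi2]
  have h2 : sb π f = 0 := by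
    rcases mul_eq_zero.1 h0 with h3 | h3
    · exfalso
      obtain ⟨i, hi, hi2⟩ := Finset.prod_eq_zero_iff.1 h3
      obtain ⟨v, hv, hv2⟩ := hq i hi
      refine lin_ne ?_ hi2
      intro h4
      apply hv2
      have := congrArg (fun g => g v) h4
      simpa [hπ2 v hv] using this
    · exact h3
  rwa [h2, sub_zero] at h1

lemma lin_dvd' {N : ℕ} {l : Fm N} (hl : l ≠ 0) 
    {f : MvPolynomial (Fin N) ℂ}
    (h : ∀ v, l v = 0 → ev v f = 0) : lin l ∣ f :=
  lin_dvd hl (∅ : Finset ℕ) (fun _ => 0) (by simp) (fun v hv _ => h v hv)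

lemma ev_of_dvd {N : ℕ} {l : Fm N} {f : MvPolynomial (Fin N) ℂ} (h : lin l ∣ f) {v}
    (hv : l v = 0) : ev v f = 0 := by
  obtain ⟨g, rfl⟩ := h
  rw [map_mul, ev_lin, hv]; simp

lemma lin_irred {N : ℕ} {l : Fm N} (hl : l ≠ 0) : Irreducible (lin l) := by
  have hd := lin_totalDegree hl
  have hu : ∀ a : MvPolynomial (Fin N) ℂ, a ≠ 0 → a.totalDegree = 0 → IsUnit a := by
    intro a ha h0
    rw [totalDegree_eq_zero_iff_eq_C] at h0
    rw [h0]
    apply IsUnit.map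
    rw [isUnit_iff_ne_zero]
    intro h; rw [h] at h0; exact ha (by simpa using h0)
  constructor
  · intro h
    rw [MvPolynomial.isUnit_iff_totalDegree_of_isReduced] at h
    omega
  · intro a b hab
    have hab0 : a * b ≠ 0 := hab ▸ lin_ne hl
    have ha := left_ne_zero_of_mul hab0
    have hb := right_ne_zero_of_mul hab0
    have := totalDegree_mul_of_isDomain ha hb
    rw [← hab, hd] at this
    rcases Nat.eq_zero_or_pos a.totalDegree with h | h
    · left; exact hu a ha h
    · right; exact hu b hb (by omega)

lemma ker_eq_of_dvd {N : ℕ} {l l' : Fm N} (h : lin l ∣ lin l') :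
    LinearMap.ker l ≤ LinearMap.ker l' := by
  intro v hv
  have := ev_of_dvd h (v := v) hv
  rw [ev_lin] at this
  simpa using this

lemma smul_of_ker {N : ℕ} {l l' : Fm N} (hl : l ≠ 0) (h : LinearMap.ker l ≤ LinearMap.ker l') :
    ∃ c : ℝ, l' = c • l := by
  obtain ⟨z, hz⟩ := DFunLike.ne_iff.1 hl
  change l z ≠ 0 at hz
  refine ⟨l' z / l z, ?_⟩
  apply LinearMap.ext; intro v
  have : v - (l v / l z) • z ∈ LinearMap.ker l := by
    rw [LinearMap.mem_ker]; simp [hz]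
  have := h this
  rw [LinearMap.mem_ker, map_sub, map_smul, smul_eq_mul] at this
  rw [LinearMap.smul_apply, smul_eq_mul]
  field_simp at this ⊢
  linarith

lemma ker_eq_of_le {N : ℕ} {l l' : Fm N} (hl : l ≠ 0) (hl' : l' ≠ 0)
    (h : LinearMap.ker l ≤ LinearMap.ker l') : LinearMap.ker l = LinearMap.ker l' := by
  obtain ⟨c, rfl⟩ := smul_of_ker hl h
  have hc : c ≠ 0 := by rintro rfl; simp at hl'
  exact (LinearMap.ker_smul l c hc).symm

lemma lin_assoc {N : ℕ} {l l' : Fm N} (hl : l ≠ 0) (hl' : l' ≠ 0)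
    (h : LinearMap.ker l = LinearMap.ker l') : Associated (lin l) (lin l') := by
  obtain ⟨c, rfl⟩ := smul_of_ker hl h.le
  have hc : c ≠ 0 := by rintro rfl; simp at hl'
  rw [lin_smul, mul_comm]
  refine associated_mul_unit_right _ _ ?_
  apply IsUnit.map
  rw [isUnit_iff_ne_zero]; exact_mod_cast hc

lemma lin_relPrime {N : ℕ} {l l' : Fm N} (hl : l ≠ 0) (hl' : l' ≠ 0)
    (h : LinearMap.ker l ≠ LinearMap.ker l') : IsRelPrime (lin l) (lin l') := by
  rw [(lin_irred hl).isRelPrime_iff_not_dvd]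
  intro h2
  exact h (ker_eq_of_le hl hl' (ker_eq_of_dvd h2))

/-- Taylor expansion -/
def tay {N : ℕ} (v : Fin N → ℝ) :
    MvPolynomial (Fin N) ℂ →ₐ[ℂ] Polynomial (MvPolynomial (Fin N) ℂ) :=
  aeval fun i => Polynomial.C (C (v i : ℂ)) + Polynomial.X * Polynomial.C (X i)

def Od {N : ℕ} (v : Fin N → ℝ) (k : ℕ) (f : MvPolynomial (Fin N) ℂ) : Prop :=
  Polynomial.X ^ k ∣ tay v f

lemma tay_lin {N : ℕ} (v : Fin N → ℝ) (l : Fm N) :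
    tay v (lin l) = Polynomial.C (C (l v : ℂ)) + Polynomial.X * Polynomial.C (lin l) := by
  rw [form_apply l v]
  simp only [lin, map_sum, map_mul, Finset.mul_sum, Complex.ofReal_sum, ← Finset.sum_add_distrib]
  refine Finset.sum_congr rfl fun k _ => ?_
  have h1 : tay v (C ((l (Pi.single k 1) : ℝ) : ℂ)) = Polynomial.C (C ((l (Pi.single k 1) : ℝ) : ℂ)) := by
    rw [tay, aeval_C]; rfl
  rw [h1]
  simp [tay]
  ring

lemma Od_ev {N : ℕ} {v : Fin N → ℝ} {k : ℕ} {f : MvPolynomial (Fin N) ℂ} (h : Od v (k + 1) f) :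
    ev v f = 0 := by
  have h1 : ((Polynomial.constantCoeff (R := MvPolynomial (Fin N) ℂ))).comp (tay v).toRingHom
      = C.comp (ev v) := by
    apply MvPolynomial.ringHom_ext
    · intro r; simp [ev]
      try rw [show (algebraMap ℂ (Polynomial (MvPolynomial (Fin N) ℂ))) r = Polynomial.C (C r) from rfl]
      try simp
    · intro i; simp [ev, tay]
  have h2 := congrArg (fun g => g f) h1
  simp only [RingHom.comp_apply] at h2
  obtain ⟨g, hg⟩ := h
  have h3 : (tay v).toRingHom f = Polynomial.X ^ (k+1) * g := hg
  rw [h3] at h2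
  simp at h2
  exact (C_eq_zero (σ := Fin N)).1 h2.symm

lemma Od_div {N : ℕ} {v : Fin N → ℝ} {k : ℕ} {l : Fm N} (hl : l ≠ 0) (hv : l v = 0)
    {f : MvPolynomial (Fin N) ℂ} (h : Od v (k + 1) (lin l * f)) : Od v k f := by
  unfold Od at h ⊢
  rw [map_mul, tay_lin, hv] at h
  simp only [Complex.ofReal_zero, map_zero, zero_add] at h
  rw [pow_succ', mul_assoc] at h
  have h2 := (mul_dvd_mul_iff_left (Polynomial.X_ne_zero)).1 h
  rw [Polynomial.X_pow_dvd_iff] at h2 ⊢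
  intro d hd
  have := h2 d hd
  rw [Polynomial.coeff_C_mul] at this
  exact (mul_eq_zero.1 this).resolve_left (lin_ne hl)

lemma Od_div_pow {N : ℕ} {v : Fin N → ℝ} {k m : ℕ} {l : Fm N} (hl : l ≠ 0) (hv : l v = 0)
    {f : MvPolynomial (Fin N) ℂ} (h : Od v (k + m) (lin l ^ m * f)) : Od v k f := by
  induction m with
  | zero => simpa using h
  | succ m ih =>
    apply ih
    apply Od_div hl hv
    rwa [← mul_assoc, ← pow_succ', add_assoc]

lemma tay_sb {M N : ℕ} (φ : (Fin M → ℝ) →ₗ[ℝ] (Fin N → ℝ)) (v) (f) :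
    tay v (sb φ f) = Polynomial.mapRingHom (sb φ).toRingHom (tay (φ v) f) := by
  have : (tay v).toRingHom.comp (sb φ).toRingHom =
      (Polynomial.mapRingHom (sb φ).toRingHom).comp (tay (φ v)).toRingHom := by
    apply MvPolynomial.ringHom_ext
    · intro r; simp
    · intro i
      have h1 := tay_lin v ((LinearMap.proj i).comp φ)
      have h2 : sb φ (X i) = lin ((LinearMap.proj i).comp φ) := by simp [sb]
      have h3 : tay (φ v) (X i) = Polynomial.C (C (φ v i : ℂ)) + Polynomial.X * Polynomial.C (X i) := by
        simp [tay]
      simp only [RingHom.comp_apply]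
      simp [h2, h1, h3]
  exact congrArg (fun g => g f) this

lemma Od_sb {M N : ℕ} {φ : (Fin M → ℝ) →ₗ[ℝ] (Fin N → ℝ)} {v} {f} {k : ℕ} (h : Od (φ v) k f) :
    Od v k (sb φ f) := by
  unfold Od at h ⊢
  rw [tay_sb]
  have := map_dvd (Polynomial.mapRingHom (sb φ).toRingHom) h
  simpa using this

lemma pow_dvd_of_Od {N : ℕ} {l : Fm N} (hl : l ≠ 0) {ι : Type} (s : Finset ι) (q : ι → Fm N)
    (hq : ∀ i ∈ s, ∃ v, l v = 0 ∧ q i v ≠ 0) (m : ℕ)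
    {f : MvPolynomial (Fin N) ℂ}
    (h : ∀ v, l v = 0 → (∀ i ∈ s, q i v ≠ 0) → Od v m f) : lin l ^ m ∣ f := by
  induction m generalizing f with
  | zero => simp
  | succ m ih =>
    have h1 : lin l ∣ f := lin_dvd hl s q hq fun v hv hv2 => Od_ev (h v hv hv2)
    obtain ⟨g, rfl⟩ := h1
    rw [pow_succ']
    apply mul_dvd_mul_left
    apply ih
    intro v hv hv2
    exact Od_div hl hv (h v hv hv2)


section geom
variable {ι : Type} {V : Type} [AddCommGroup V] [Module ℝ V]

lemma eps (l : ι → Module.Dual ℝ V) (s : Finset ι) (w y : V) (h : ∀ i ∈ s, 0 < l i w) :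
    ∃ ε : ℝ, 0 < ε ∧ ∀ i ∈ s, 0 < l i (w + ε • y) := by
  have h1 : ∀ᶠ ε in nhdsWithin (0:ℝ) (Set.Ioi 0), ∀ i ∈ s, 0 < l i (w + ε • y) := by
    rw [Finset.eventually_all]
    intro i hi
    apply Filter.Eventually.filter_mono nhdsWithin_le_nhds
    have hc : Continuous fun ε : ℝ => l i (w + ε • y) := by
      simp only [map_add, map_smul, smul_eq_mul]; fun_prop
    apply hc.continuousAt.eventually_const_lt
    simpa using h i hi
  obtain ⟨ε, h2, h3⟩ := (h1.and self_mem_nhdsWithin).exists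
  exact ⟨ε, h3, h2⟩

lemma exists_M [Fintype ι] (l : ι → Module.Dual ℝ V) (o : V) (ho : ∀ i, 0 < l i o) :
    ∃ M : Finset ι, (∀ x, (∀ i ∈ M, 0 ≤ l i x) → ∀ i, 0 ≤ l i x) ∧
      ∀ j ∈ M, ∃ w, l j w = 0 ∧ ∀ i ∈ M, i ≠ j → 0 < l i w := by
  let p : Finset ι → Prop := fun M => ∀ x, (∀ i ∈ M, 0 ≤ l i x) → ∀ i, 0 ≤ l i x
  have hu : p Finset.univ := fun x hx i => hx i (Finset.mem_univ i)
  obtain ⟨M, hM⟩ := exists_minimal_of_wellFoundedLT p ⟨_, hu⟩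
  refine ⟨M, hM.1, fun j hj => ?_⟩
  have h1 : ¬ p (M.erase j) := by
    intro h
    have := hM.2 h (Finset.erase_subset _ _) hj
    simp at this
  simp only [p] at h1
  push Not at h1
  obtain ⟨z, hz, k, hk⟩ := h1
  have hjz : l j z < 0 := by
    by_contra hc
    push Not at hc
    have := hM.1 z (fun i hi => by
      by_cases hij : i = j
      · rwa [hij]
      · exact hz i (Finset.mem_erase.2 ⟨hij, hi⟩)) k
    linarith
  refine ⟨(-l j z) • o + (l j o) • z, ?_, fun i hi hij => ?_⟩
  · simp; ring
  · simp only [map_add, map_smul, smul_eq_mul]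
    have h2 := hz i (Finset.mem_erase.2 ⟨hij, hi⟩)
    have h3 := ho i
    have h4 := ho j
    have : 0 < (-l j z) * l i o := mul_pos (by linarith) h3
    have : 0 ≤ l j o * l i z := mul_nonneg h4.le h2
    linarith

lemma local_nonneg (l : ι → Module.Dual ℝ V) (M : Finset ι)
    (hM : ∀ x, (∀ i ∈ M, 0 ≤ l i x) → ∀ i, 0 ≤ l i x) {b y : V}
    (hb : ∀ i ∈ M, 0 ≤ l i b) (hy : ∀ i ∈ M, l i b = 0 → 0 ≤ l i y) {k : ι} (hk : l k b = 0) :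
    0 ≤ l k y := by
  obtain ⟨ε, h0, h1⟩ := eps l (M.filter fun i => 0 < l i b) b y (by simp)
  have := hM (b + ε • y) (fun i hi => by
    rcases (hb i hi).lt_or_eq with h | h
    · exact (h1 i (by simp [hi, h])).le
    · rw [map_add, ← h, map_smul, smul_eq_mul, zero_add]
      exact mul_nonneg h0.le (hy i hi h.symm)) k
  rw [map_add, hk, map_smul, smul_eq_mul, zero_add] at this
  exact nonneg_of_mul_nonneg_right this h0

lemma step (l : ι → Module.Dual ℝ V) (M : Finset ι) (S : ι → Prop) (o : V) (ho : ∀ i ∈ M, 0 < l i o)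
    (hw : ∀ j ∈ M, ∃ w, l j w = 0 ∧ ∀ i ∈ M, i ≠ j → 0 < l i w)
    {a c k : ι} (ha : a ∈ M) (hc : c ∈ M) (hk : k ∈ M) (hSa : S a) (hSc : ¬ S c)
    {y : V} (hya : l a y = 0) (hyc : l c y = 0) (hyk : l k y ≠ 0) :
    ∃ u i j, i ∈ M ∧ j ∈ M ∧ S i ∧ ¬ S j ∧ l i u = 0 ∧ l j u = 0 ∧ (∀ m ∈ M, 0 ≤ l m u) ∧
      ∃ m ∈ M, 0 < l m u := by
  have hac : a ≠ c := by rintro rfl; exact hSc hSa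
  obtain ⟨p, hpa, hp⟩ := hw a ha
  obtain ⟨q, hqc, hq⟩ := hw c hc
  have hpc := hp c hc hac.symm
  have hqa := hq a ha hac
  let ψ : Module.Dual ℝ V := l k - (l k p / l c p) • l c - (l k q / l a q) • l a
  have hψp : ψ p = 0 := by simp [ψ, hpa, hpc.ne']
  have hψq : ψ q = 0 := by simp [ψ, hqc, hqa.ne']
  have hψy : ψ y ≠ 0 := by simpa [ψ, hya, hyc] using hyk
  obtain ⟨o, ho, hψo⟩ : ∃ o, (∀ i ∈ M, 0 < l i o) ∧ ψ o ≠ 0 := by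
    by_cases h : ψ o = 0
    · obtain ⟨ε, h0, h1⟩ := eps l M o y ho
      refine ⟨_, h1, ?_⟩
      rw [map_add, h, map_smul, zero_add, smul_eq_mul]
      exact mul_ne_zero h0.ne' hψy
    · exact ⟨o, ho, h⟩
  have hp0 : ∀ i ∈ M, 0 ≤ l i p := fun i hi => by
    by_cases h : i = a
    · rw [h, hpa]
    · exact (hp i hi h).le
  have hq0 : ∀ i ∈ M, 0 ≤ l i q := fun i hi => by
    by_cases h : i = c
    · rw [h, hqc]
    · exact (hq i hi h).le
  let x : ℝ → V := fun t => (1 - t) • p + t • q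
  let φ : ι → ℝ → ℝ := fun i t => ((1 - t) * l i p + t * l i q) / l i o
  have hφ : ∀ i t, i ∈ M → φ i t * l i o = l i (x t) := by
    intro i t hi
    simp only [φ, x, map_add, map_smul, smul_eq_mul]
    have := ho i hi
    field_simp
  have hφc : ∀ i, Continuous (φ i) := by intro i; simp only [φ]; fun_prop
  let A := M.filter S
  let B := M.filter fun i => ¬ S i
  have haA : a ∈ A := by simp [A, ha, hSa]
  have hcB : c ∈ B := by simp [B, hc, hSc]
  let mA : ℝ → ℝ := fun t => A.inf' ⟨a, haA⟩ fun i => φ i t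
  let mB : ℝ → ℝ := fun t => B.inf' ⟨c, hcB⟩ fun i => φ i t
  have hmA : Continuous mA := Continuous.finset_inf'_apply _ fun i _ => hφc i
  have hmB : Continuous mB := Continuous.finset_inf'_apply _ fun i _ => hφc i
  have h0 : mA 0 ≤ mB 0 := by
    have h1 : mA 0 ≤ φ a 0 := Finset.inf'_le _ haA
    have h2 : φ a 0 = 0 := by simp [φ, hpa]
    have h3 : 0 ≤ mB 0 := by
      apply Finset.le_inf'
      intro i hi
      have hi := (Finset.mem_filter.1 hi).1
      have := hp0 i hi
      have := ho i hi
      simp only [φ]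
      simp
      positivity
    linarith
  have h1 : mB 1 ≤ mA 1 := by
    have h1 : mB 1 ≤ φ c 1 := Finset.inf'_le _ hcB
    have h2 : φ c 1 = 0 := by simp [φ, hqc]
    have h3 : 0 ≤ mA 1 := by
      apply Finset.le_inf'
      intro i hi
      have hi := (Finset.mem_filter.1 hi).1
      have := hq0 i hi
      have := ho i hi
      simp only [φ]
      simp
      positivity
    linarith
  obtain ⟨t, -, ht⟩ : ∃ t ∈ Set.Icc (0:ℝ) 1, mA t = mB t :=
    isPreconnected_Icc.intermediate_value₂ (by simp) (by simp) hmA.continuousOn hmB.continuousOn h0 h1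
  obtain ⟨i, hi, hit⟩ := Finset.exists_mem_eq_inf' ⟨a, haA⟩ fun i => φ i t
  obtain ⟨j, hj, hjt⟩ := Finset.exists_mem_eq_inf' ⟨c, hcB⟩ fun i => φ i t
  change mA t = φ i t at hit
  change mB t = φ j t at hjt
  obtain ⟨hiM, hiS⟩ := Finset.mem_filter.1 hi
  obtain ⟨hjM, hjS⟩ := Finset.mem_filter.1 hj
  have hlu : ∀ m ∈ M, l m (x t - mA t • o) = (φ m t - mA t) * l m o := by
    intro m hm
    rw [map_sub, ← hφ m t hm, map_smul, smul_eq_mul]; ring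
  have hnn : ∀ m ∈ M, 0 ≤ l m (x t - mA t • o) := by
    intro m hm
    rw [hlu m hm]
    refine mul_nonneg ?_ (ho m hm).le
    by_cases h : S m
    · have : mA t ≤ φ m t := Finset.inf'_le _ (Finset.mem_filter.2 ⟨hm, h⟩)
      linarith
    · have : mB t ≤ φ m t := Finset.inf'_le _ (Finset.mem_filter.2 ⟨hm, h⟩)
      linarith
  refine ⟨x t - mA t • o, i, j, hiM, hjM, hiS, hjS, ?_, ?_, hnn, ?_⟩
  · rw [hlu i hiM, hit]; ring
  · rw [hlu j hjM, ht, hjt]; ring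
  · by_contra hcon
    push Not at hcon
    have hz : ∀ m ∈ M, l m (x t - mA t • o) = 0 := fun m hm => le_antisymm (hcon m hm) (hnn m hm)
    have h2 : ψ (x t - mA t • o) = 0 := by
      simp only [ψ, LinearMap.sub_apply, LinearMap.smul_apply, hz k hk, hz a ha, hz c hc]
      simp
    have h3 : mA t = 0 := by
      rw [map_sub, map_smul] at h2
      simp only [x, map_add, map_smul, hψp, hψq, smul_eq_mul] at h2
      have : mA t * ψ o = 0 := by linarith
      exact (mul_eq_zero.1 this).resolve_right hψo
    have h4 := hz a ha
    have h5 := hz c hc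
    simp only [x, h3, map_sub, map_add, map_smul, hpa, hqc, smul_eq_mul] at h4 h5
    have h6 : t = 0 := by
      have : t * l a q = 0 := by linarith
      exact (mul_eq_zero.1 this).resolve_right hqa.ne'
    have h7 : 1 - t = 0 := by
      have : (1 - t) * l c p = 0 := by linarith
      exact (mul_eq_zero.1 this).resolve_right hpc.ne'
    linarith

lemma connect (l : ι → Module.Dual ℝ V) (M : Finset ι) (S : ι → Prop) (o : V)
    (ho : ∀ i ∈ M, 0 < l i o)
    (hw : ∀ j ∈ M, ∃ w, l j w = 0 ∧ ∀ i ∈ M, i ≠ j → 0 < l i w) (n : ℕ) :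
    ∀ b a c, a ∈ M → c ∈ M → S a → ¬ S c → l a b = 0 → l c b = 0 → (∀ i ∈ M, 0 ≤ l i b) →
      (M.filter fun i => l i b = 0).card ≤ n →
    ∃ b a c, a ∈ M ∧ c ∈ M ∧ S a ∧ ¬ S c ∧ l a b = 0 ∧ l c b = 0 ∧ (∀ i ∈ M, 0 ≤ l i b) ∧
      ∀ k ∈ M, l k b = 0 → ∀ y, l a y = 0 → l c y = 0 → l k y = 0 := by
  induction n with
  | zero =>
    intro b a c ha hc hSa hSc hab hcb hb hcard
    rw [Nat.le_zero, Finset.card_eq_zero] at hcard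
    have : a ∈ M.filter fun i => l i b = 0 := by simp [ha, hab]
    rw [hcard] at this; simp at this
  | succ n ih =>
    intro b a c ha hc hSa hSc hab hcb hb hcard
    by_cases h : ∀ k ∈ M, l k b = 0 → ∀ y, l a y = 0 → l c y = 0 → l k y = 0
    · exact ⟨b, a, c, ha, hc, hSa, hSc, hab, hcb, hb, h⟩
    push Not at h
    obtain ⟨k, hk, hkb, y, hya, hyc, hyk⟩ := h
    obtain ⟨u, i, j, hi, hj, hSi, hSj, hiu, hju, hu, m, hm, hmu⟩ :=
      step l (M.filter fun i => l i b = 0) S o (fun i hi => ho i (Finset.mem_filter.1 hi).1)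
        (fun j hj => by
          obtain ⟨w, h1, h2⟩ := hw j (Finset.mem_filter.1 hj).1
          exact ⟨w, h1, fun i hi => h2 i (Finset.mem_filter.1 hi).1⟩)
        (a := a) (c := c) (k := k) (by simp [ha, hab]) (by simp [hc, hcb]) (by simp [hk, hkb])
        hSa hSc hya hyc hyk
    obtain ⟨ε, h0, h1⟩ := eps l (M.filter fun i => 0 < l i b) b u (by simp)
    have hK : ∀ i, l i b = 0 → l i (b + ε • u) = ε * l i u := by
      intro i hi; rw [map_add, hi, map_smul, smul_eq_mul, zero_add]
    rw [Finset.mem_filter] at hi hj hm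
    refine ih (b + ε • u) i j hi.1 hj.1 hSi hSj ?_ ?_ ?_ ?_
    · rw [hK i hi.2, hiu, mul_zero]
    · rw [hK j hj.2, hju, mul_zero]
    · intro r hr
      rcases (hb r hr).lt_or_eq with h | h
      · exact (h1 r (by simp [hr, h])).le
      · rw [hK r h.symm]
        exact mul_nonneg h0.le (hu r (by simp [hr, h.symm]))
    · apply Nat.lt_succ_iff.1
      refine lt_of_lt_of_le (Finset.card_lt_card ?_) hcard
      rw [Finset.ssubset_iff_of_subset]
      · refine ⟨m, by simp [hm], ?_⟩
        rw [Finset.mem_filter, hK m hm.2]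
        rintro ⟨-, h⟩
        exact (mul_pos h0 hmu).ne' h
      · intro r hr
        rw [Finset.mem_filter] at hr ⊢
        refine ⟨hr.1, ?_⟩
        by_contra hne
        have h2 := lt_of_le_of_ne (hb r hr.1) (Ne.symm hne)
        exact (h1 r (by simp [hr.1, h2])).ne' hr.2

end geom

section core
variable {ι : Type} [Fintype ι] {N : ℕ}

def mult (l : ι → Fm N) (a : ι) : ℕ :=
  (Finset.univ.filter fun i => LinearMap.ker (l i) = LinearMap.ker (l a)).card

def Fl (l : ι → Fm N) (v : Fin N → ℝ) : Finset ι := Finset.univ.filter fun i => l i v = 0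

def Lv {ι : Type} (l : ι → Fm N) (v : Fin N → ℝ) : Submodule ℝ (Fin N → ℝ) :=
  ⨅ i : {i // l i v = 0}, LinearMap.ker (l i)

lemma mem_Lv {ι : Type} {l : ι → Fm N} {v x : Fin N → ℝ} : x ∈ Lv l v ↔ ∀ i, l i v = 0 → l i x = 0 := by
  simp [Lv]

def Good (l : ι → Fm N) (v : Fin N → ℝ) : Prop :=
  ∃ w, (∀ i, l i v = 0 → l i w = 0) ∧ ∀ i, l i v ≠ 0 → 0 < l i w

def FP (l : ι → Fm N) (a : ι) : Prop :=
  ∃ w, l a w = 0 ∧ ∀ i, LinearMap.ker (l i) ≠ LinearMap.ker (l a) → 0 < l i w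

def Cond (l : ι → Fm N) (f : MvPolynomial (Fin N) ℂ) : Prop :=
  ∀ v, v ≠ 0 → ∀ k, (k + N ≤ (Fl l v).card + Module.finrank ℝ (Lv l v) ∨
    (¬ Good l v ∧ k + N ≤ (Fl l v).card + Module.finrank ℝ (Lv l v) + 1)) → Od v k f

lemma finrank_ker_add {l : Fm N} (hl : l ≠ 0) : Module.finrank ℝ (LinearMap.ker l) + 1 = N := by
  have := Module.Dual.finrank_ker_add_one_of_ne_zero hl
  simpa using this

lemma mult_pos (l : ι → Fm N) (a : ι) : 0 < mult l a :=
  Finset.card_pos.2 ⟨a, by simp⟩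

lemma mult_congr {l : ι → Fm N} {a b : ι} (h : LinearMap.ker (l a) = LinearMap.ker (l b)) :
    mult l a = mult l b := by simp [mult, h]

lemma gen {l : ι → Fm N} (hl : ∀ i, l i ≠ 0) {f : MvPolynomial (Fin N) ℂ} (hf : Cond l f) {c : ι}
    (hc : ∃ i, LinearMap.ker (l i) ≠ LinearMap.ker (l c)) (k : ℕ)
    (hk : k + 1 ≤ mult l c ∨ (¬ FP l c ∧ k ≤ mult l c)) : lin (l c) ^ k ∣ f := by
  refine pow_dvd_of_Od (hl c)
    (Finset.univ.filter fun i => LinearMap.ker (l i) ≠ LinearMap.ker (l c)) l ?_ k ?_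
  · intro i hi
    rw [Finset.mem_filter] at hi
    by_contra hcon
    push Not at hcon
    exact hi.2 (ker_eq_of_le (hl c) (hl i) fun v hv => hcon v hv).symm
  · intro v hv hi
    have hiff : ∀ i, l i v = 0 ↔ LinearMap.ker (l i) = LinearMap.ker (l c) := by
      intro i
      constructor
      · intro h
        by_contra h2
        exact hi i (by simp [h2]) h
      · intro h
        change v ∈ LinearMap.ker (l i)
        rw [h]; exact hv
    have hv0 : v ≠ 0 := by
      rintro rfl
      obtain ⟨i, hi⟩ := hc
      exact hi ((hiff i).1 (by simp))
    have hF : (Fl l v).card = mult l c := by simp [Fl, mult, hiff]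
    have hL : Lv l v = LinearMap.ker (l c) := by
      ext x
      rw [mem_Lv]
      constructor
      · intro h; exact h c hv
      · intro h i hi
        change x ∈ LinearMap.ker (l i)
        rw [(hiff i).1 hi]; exact h
    have hG : Good l v → FP l c := by
      rintro ⟨w, h1, h2⟩
      exact ⟨w, h1 c hv, fun i hi => h2 i fun h => hi ((hiff i).1 h)⟩
    have hr := finrank_ker_add (hl c)
    apply hf v hv0
    rw [hF, hL]
    rcases hk with hk | ⟨h1, h2⟩
    · left; omega
    · right; exact ⟨fun h => h1 (hG h), by omega⟩

lemma prod_class_assoc {ι : Type} {l : ι → Fm N} (hl : ∀ i, l i ≠ 0) (a : ι) (I : Finset ι)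
    (hI : ∀ i ∈ I, LinearMap.ker (l i) = LinearMap.ker (l a)) :
    Associated (∏ i ∈ I, lin (l i)) (lin (l a) ^ I.card) := by
  rw [← Finset.prod_const]
  exact Associated.prod I _ _ fun i hi => lin_assoc (hl i) (hl a) (hI i hi)

lemma prod_dvd {l : ι → Fm N} (hl : ∀ i, l i ≠ 0) {f : MvPolynomial (Fin N) ℂ} (I : Finset ι)
    (hI : ∀ i ∈ I, lin (l i) ^ mult l i ∣ f) : ∏ i ∈ I, lin (l i) ∣ f := by
  rw [← Finset.prod_fiberwise_of_maps_to (t := I.image fun i => LinearMap.ker (l i))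
    (g := fun i => LinearMap.ker (l i)) (fun i hi => Finset.mem_image_of_mem _ hi)]
  apply Finset.prod_dvd_of_isRelPrime
  · intro K _ K' _ hKK
    apply IsRelPrime.prod_left
    intro i hi
    apply IsRelPrime.prod_right
    intro j hj
    rw [Finset.mem_filter] at hi hj
    exact lin_relPrime (hl i) (hl j) (by rw [hi.2, hj.2]; exact hKK)
  · intro K hK
    obtain ⟨a, ha, rfl⟩ := Finset.mem_image.1 hK
    refine (prod_class_assoc hl a _ fun i hi => (Finset.mem_filter.1 hi).2).dvd.trans ?_
    refine (pow_dvd_pow _ ?_).trans (hI a ha)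
    exact Finset.card_le_card (Finset.filter_subset_filter _ (Finset.subset_univ _))

lemma eq_zero_of_all {l : ι → Fm N} (hl : ∀ i, l i ≠ 0) {f : MvPolynomial (Fin N) ℂ}
    (hdeg : f.totalDegree < Fintype.card ι)
    (h : ∀ i, lin (l i) ^ mult l i ∣ f) : f = 0 := by
  by_contra hf
  obtain ⟨g, rfl⟩ := prod_dvd hl Finset.univ fun i _ => h i
  have h1 := left_ne_zero_of_mul hf
  have h2 := right_ne_zero_of_mul hf
  rw [totalDegree_mul_of_isDomain h1 h2] at hdeg
  have : (∏ i, lin (l i)).totalDegree = Fintype.card ι := by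
    rw [IsHomogeneous.totalDegree (n := ∑ _i : ι, 1) _ h1]
    · simp
    · exact IsHomogeneous.prod _ _ _ fun i _ => lin_hom _
  omega

theorem core (N : ℕ) : ∀ (ι : Type) [Fintype ι] (l : ι → Fm N) (_ : ∀ i, l i ≠ 0)
    (_ : ∃ o, ∀ i, 0 < l i o) (f : MvPolynomial (Fin N) ℂ)
    (_ : f.totalDegree + N ≤ Fintype.card ι) (_ : Cond l f) (a : ι) (_ : FP l a)
    (_ : lin (l a) ^ mult l a ∣ f), f = 0 := by
  induction N with
  | zero =>
    intro ι _ l hl _ f _ _ a _ _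
    exact absurd (Subsingleton.elim _ _) (hl a)
  | succ N ih =>
    intro ι _ l hl ho f hdeg hf a₀ hFP₀ hS₀
    obtain ⟨o, ho⟩ := ho
    by_contra hf0
    let S : ι → Prop := fun i => lin (l i) ^ mult l i ∣ f
    have hScongr : ∀ i j, LinearMap.ker (l i) = LinearMap.ker (l j) → S i → S j := by
      intro i j h hi
      have := (lin_assoc (hl i) (hl j) h).pow_pow (n := mult l i)
      simp only [S]
      rw [← mult_congr h]
      exact this.symm.dvd.trans hi
    obtain ⟨c₀, hc₀⟩ : ∃ c, ¬ S c := by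
      by_contra h
      push Not at h
      exact hf0 (eq_zero_of_all hl (by omega) h)
    have hne₀ : LinearMap.ker (l a₀) ≠ LinearMap.ker (l c₀) := fun h => hc₀ (hScongr _ _ h hS₀)
    have hex : ∀ c, ∃ i, LinearMap.ker (l i) ≠ LinearMap.ker (l c) := by
      intro c
      by_cases h : LinearMap.ker (l a₀) = LinearMap.ker (l c)
      · exact ⟨c₀, by rw [← h]; exact hne₀.symm⟩
      · exact ⟨a₀, h⟩
    have hFP : ∀ i, ¬ S i → FP l i := by
      intro i hi
      by_contra h
      exact hi (gen hl hf (hex i) _ (Or.inr ⟨h, le_rfl⟩))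
    obtain ⟨M, hM, hw⟩ := exists_M l o ho
    -- facets are represented in M
    have hrep : ∀ i, FP l i → ∃ j ∈ M, LinearMap.ker (l i) = LinearMap.ker (l j) := by
      rintro i ⟨w, hw1, hw2⟩
      by_contra hcon
      push Not at hcon
      have hpos : ∀ j ∈ M, 0 < l j w := fun j hj => hw2 j (hcon j hj).symm
      apply hl i
      have h1 : ∀ y, 0 ≤ l i y := fun y =>
        local_nonneg l M hM (fun j hj => (hpos j hj).le)
          (fun j hj h => absurd h (hpos j hj).ne') hw1
      apply LinearMap.ext; intro y
      have h2 := h1 y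
      have h3 := h1 (-y)
      rw [map_neg] at h3
      simp; linarith
    obtain ⟨a₁, ha₁, ha₁'⟩ := hrep a₀ hFP₀
    obtain ⟨c₁, hc₁, hc₁'⟩ := hrep c₀ (hFP c₀ hc₀)
    obtain ⟨b, a, c, ha, hc, hSa, hSc, hab, hcb, hb, hridge⟩ :=
      connect l M S o (fun i _ => ho i) hw _ 0 a₁ c₁ ha₁ hc₁ (hScongr _ _ ha₁' hS₀)
        (fun h => hc₀ (hScongr _ _ hc₁'.symm h)) (by simp) (by simp) (by simp) le_rfl
    have hac : LinearMap.ker (l a) ≠ LinearMap.ker (l c) := fun h => hSc (hScongr _ _ h hSa)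
    have hridge' : ∀ k, l k b = 0 → ∀ y, l a y = 0 → l c y = 0 → l k y = 0 := by
      intro k hk y hya hyc
      have h2 := local_nonneg l M hM hb (y := y)
        (fun i hi hib => (hridge i hi hib y hya hyc).ge) hk
      have h3 := local_nonneg l M hM hb (y := -y)
        (fun i hi hib => by rw [map_neg, hridge i hi hib y hya hyc, neg_zero]) hk
      rw [map_neg] at h3
      linarith
    have hMFP : ∀ j ∈ M, FP l j := by
      intro j hj
      obtain ⟨w, hw1, hw2⟩ := hw j hj
      have hw0 : ∀ i ∈ M, 0 ≤ l i w := fun i hi => by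
        by_cases h : i = j
        · rw [h, hw1]
        · exact (hw2 i hi h).le
      refine ⟨w, hw1, fun k hk => ?_⟩
      refine lt_of_le_of_ne (hM w hw0 k) fun h => hk ?_
      refine (ker_eq_of_le (hl j) (hl k) fun y hy => ?_).symm
      rw [LinearMap.mem_ker] at hy ⊢
      have h2 : ∀ y, l j y = 0 → 0 ≤ l k y := fun y hy =>
        local_nonneg l M hM hw0 (fun i hi hiw => by
          by_cases h : i = j
          · rw [h, hy]
          · exact absurd hiw (hw2 i hi h).ne') h.symm
      have h3 := h2 y hy
      have h4 := h2 (-y) (by rw [map_neg, hy, neg_zero])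
      rw [map_neg] at h4
      linarith
    obtain ⟨wa, hwa, hwa'⟩ := hMFP a ha
    obtain ⟨wc, hwc, hwc'⟩ := hMFP c hc
    -- restrict to H_c
    obtain ⟨g, hg⟩ := gen hl hf (hex c) (mult l c - 1) (Or.inl (by have := mult_pos l c; omega))
    have hm := mult_pos l c
    have hr := finrank_ker_add (hl c)
    obtain ⟨E⟩ : Nonempty ((Fin N → ℝ) ≃ₗ[ℝ] LinearMap.ker (l c)) :=
      FiniteDimensional.nonempty_linearEquiv_of_finrank_eq (by simp; omega)
    let φ : (Fin N → ℝ) →ₗ[ℝ] (Fin (N+1) → ℝ) := (LinearMap.ker (l c)).subtype.comp E.toLinearMap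
    have hφc : ∀ w, l c (φ w) = 0 := fun w => (E w).2
    have hφinj : Function.Injective φ := Subtype.val_injective.comp E.injective
    have hφsurj : ∀ v, l c v = 0 → ∃ w, φ w = v := fun v hv =>
      ⟨E.symm ⟨v, hv⟩, by simp [φ]⟩
    let ι' := {i // LinearMap.ker (l i) ≠ LinearMap.ker (l c)}
    let l' : ι' → Fm N := fun i => (l i).comp φ
    have hl' : ∀ i, l' i ≠ 0 := by
      rintro ⟨i, hi⟩ h
      apply hi
      refine (ker_eq_of_le (hl c) (hl i) fun v hv => ?_).symm
      obtain ⟨w, rfl⟩ := hφsurj v hv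
      exact congrArg (fun g => g w) h
    have hcard : Fintype.card ι' + mult l c = Fintype.card ι := by
      have := Fintype.card_subtype_compl (fun i => LinearMap.ker (l i) = LinearMap.ker (l c))
      have h2 : Fintype.card {i // LinearMap.ker (l i) = LinearMap.ker (l c)} = mult l c := by
        rw [Fintype.card_subtype]; rfl
      have h3 : mult l c ≤ Fintype.card ι := Finset.card_le_univ _
      have h4 : Fintype.card ι' = Fintype.card ι - mult l c := by
        rw [← h2, ← this]
      omega
    have hg0 : g ≠ 0 := by rintro rfl; exact hf0 (by rw [hg, mul_zero])
    have hdg : (mult l c - 1) + g.totalDegree = f.totalDegree := by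
      rw [hg, totalDegree_mul_of_isDomain (pow_ne_zero _ (lin_ne (hl c))) hg0]
      rw [((lin_hom (l c)).pow (mult l c - 1)).totalDegree (pow_ne_zero _ (lin_ne (hl c))), one_mul]
    have hker' : ∀ i : ι', l i b = 0 →
        LinearMap.ker (l' i) = LinearMap.ker (l' ⟨a, hac⟩) := by
      intro i hi
      refine (ker_eq_of_le (hl' _) (hl' _) fun y hy => ?_).symm
      exact hridge' i hi (φ y) hy (hφc y)
    have key : sb φ g = 0 := by
      refine ih ι' l' hl' ?_ (sb φ g) ?_ ?_ ⟨a, hac⟩ ?_ ?_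
      · obtain ⟨o', ho'⟩ := hφsurj wc hwc
        refine ⟨o', fun i => ?_⟩
        change 0 < l i (φ o')
        rw [ho']; exact hwc' _ i.2
      · have := sb_totalDegree φ g
        omega
      · intro w hw0 k hk
        apply Od_sb
        apply Od_div_pow (hl c) (hφc w) (m := mult l c - 1)
        rw [← hg]
        have hF : (Fl l (φ w)).card = (Fl l' w).card + mult l c := by
          have h1 : (Fl l' w).card = ((Fl l (φ w)).filter
              fun i => LinearMap.ker (l i) ≠ LinearMap.ker (l c)).card := by
            refine Finset.card_bij (fun i _ => i.1) ?_ ?_ ?_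
            · intro i hi
              simp only [Fl, Finset.mem_filter, Finset.mem_univ, true_and] at hi ⊢
              exact ⟨hi, i.2⟩
            · intro i _ j _ h; exact Subtype.ext h
            · intro i hi
              simp only [Fl, Finset.mem_filter, Finset.mem_univ, true_and] at hi
              exact ⟨⟨i, hi.2⟩, by simp only [Fl, Finset.mem_filter, Finset.mem_univ, true_and]; exact hi.1, rfl⟩
          have h2 : mult l c = ((Fl l (φ w)).filter
              fun i => LinearMap.ker (l i) = LinearMap.ker (l c)).card := by
            rw [mult]
            congr 1
            ext i
            simp only [Fl, Finset.mem_filter, Finset.mem_univ, true_and]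
            constructor
            · intro h
              refine ⟨?_, h⟩
              change φ w ∈ LinearMap.ker (l i)
              rw [h]; exact hφc w
            · exact fun h => h.2
          have h3 := Finset.card_filter_add_card_filter_not (s := Fl l (φ w))
            (fun i => LinearMap.ker (l i) = LinearMap.ker (l c))
          rw [h1, h2, ← h3]
          exact Nat.add_comm _ _
        have hL : Module.finrank ℝ (Lv l' w) ≤ Module.finrank ℝ (Lv l (φ w)) := by
          rw [(Submodule.equivMapOfInjective φ hφinj (Lv l' w)).finrank_eq]
          apply Submodule.finrank_mono
          rintro _ ⟨x, hx, rfl⟩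
          rw [mem_Lv]
          intro i hi
          by_cases h : LinearMap.ker (l i) = LinearMap.ker (l c)
          · change φ x ∈ LinearMap.ker (l i)
            rw [h]; exact hφc x
          · exact (mem_Lv.1 hx) ⟨i, h⟩ hi
        have hG : Good l (φ w) → Good l' w := by
          rintro ⟨u, h1, h2⟩
          obtain ⟨u', rfl⟩ := hφsurj u (h1 c (hφc w))
          exact ⟨u', fun i hi => h1 i hi, fun i hi => h2 i hi⟩
        apply hf
        · intro h
          apply hw0
          apply hφinj
          rw [h, map_zero]
        · rcases hk with hk | ⟨h1, h2⟩
          · left; omega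
          · right; exact ⟨fun h => h1 (hG h), by omega⟩
      · obtain ⟨b', hb'⟩ := hφsurj b hcb
        refine ⟨b', ?_, ?_⟩
        · change l a (φ b') = 0
          rw [hb', hab]
        · intro i hi
          change 0 < l i (φ b')
          rw [hb']
          exact lt_of_le_of_ne (hM b hb i) fun h => hi (hker' i h.symm)
      · -- divisibility
        let I : Finset ι' := Finset.univ.filter fun i =>
          LinearMap.ker (l' i) = LinearMap.ker (l' ⟨a, hac⟩)
        have hIS : ∀ i ∈ I, S i := by
          intro i hi
          by_contra hSi
          obtain ⟨wi, hwi, hwi'⟩ := hFP i hSi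
          have hia : LinearMap.ker (l i) ≠ LinearMap.ker (l a) := fun h => hSi (hScongr _ _ h.symm hSa)
          have hac1 : 0 < l a wc := hwc' a hac
          have hca1 : 0 < l c wa := hwa' c hac.symm
          have h1 := hwa' i hia
          have h2 := hwc' i i.2
          have h3 := hwi' a hia.symm
          have h4 := hwi' c i.2.symm
          let y := wi - (l a wi / l a wc) • wc - (l c wi / l c wa) • wa
          have hya : l a y = 0 := by simp [y, hwa, hac1.ne']
          have hyc : l c y = 0 := by simp [y, hwc, hca1.ne']
          obtain ⟨y', hy'⟩ := hφsurj y hyc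
          have hy2 : y' ∈ LinearMap.ker (l' ⟨a, hac⟩) := by
            change l a (φ y') = 0
            rw [hy', hya]
          rw [← (Finset.mem_filter.1 hi).2] at hy2
          have hy3 : l i (φ y') = 0 := hy2
          rw [hy'] at hy3
          simp only [y, map_sub, map_smul, smul_eq_mul, hwi] at hy3
          have h5 : 0 < l a wi / l a wc * l i wc := by positivity
          have h6 : 0 < l c wi / l c wa * l i wa := by positivity
          linarith
        have h1 : ∏ i ∈ I.map (Function.Embedding.subtype _), lin (l i) ∣ f := by
          apply prod_dvd hl
          intro i hi
          obtain ⟨j, hj, rfl⟩ := Finset.mem_map.1 hi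
          exact hIS j hj
        have h2 : ∏ i ∈ I, lin (l i) ∣ g := by
          rw [Finset.prod_map, hg] at h1
          refine IsRelPrime.dvd_of_dvd_mul_left ?_ h1
          apply IsRelPrime.pow_right
          apply IsRelPrime.prod_left
          intro i _
          exact lin_relPrime (hl i) (hl c) i.2
        have h3 := map_dvd (sb φ) h2
        rw [map_prod] at h3
        simp only [sb_lin] at h3
        exact (prod_class_assoc hl' ⟨a, hac⟩ I fun i hi => (Finset.mem_filter.1 hi).2).symm.dvd.trans h3
    -- conclusion
    apply hSc
    have : lin (l c) ∣ g := by
      apply lin_dvd' (hl c)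
      intro v hv
      obtain ⟨w, rfl⟩ := hφsurj v hv
      rw [← ev_sb, key, map_zero]
    simp only [S]
    obtain ⟨m, hm'⟩ : ∃ m, mult l c = m + 1 := ⟨mult l c - 1, by omega⟩
    rw [hg, hm']
    rw [pow_succ]
    exact mul_dvd_mul_left _ this

end core

section top

lemma exists_w {ι : Type} {V : Type} [AddCommGroup V] [Module ℝ V] (l : ι → Module.Dual ℝ V)
    (A : Set V) (s : Finset ι) (hA : ∀ x ∈ A, ∀ j, 0 ≤ l j x)
    (hs : ∀ i ∈ s, ∃ x ∈ A, l i x ≠ 0) :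
    ∃ w, (∀ j, (∀ x ∈ A, l j x = 0) → l j w = 0) ∧ ∀ i ∈ s, 0 < l i w := by
  choose! x hx hx2 using hs
  refine ⟨∑ i ∈ s, x i, fun j hj => ?_, fun i hi => ?_⟩
  · rw [map_sum]
    exact Finset.sum_eq_zero fun i hi => hj _ (hx i hi)
  · rw [map_sum]
    exact Finset.sum_pos' (fun k hk => hA _ (hx k hk) i)
      ⟨i, hi, lt_of_le_of_ne (hA _ (hx i hi) i) (hx2 i hi).symm⟩

def J (n : ℕ) : (Fin n → ℝ) →ₗ[ℝ] (Fin (n + 1) → ℝ) where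
  toFun y := Fin.cons 0 y
  map_add' x y := by
    ext i; refine Fin.cases ?_ (fun j => ?_) i <;> simp
  map_smul' c y := by
    ext i; refine Fin.cases ?_ (fun j => ?_) i <;> simp

lemma J_inj (n : ℕ) : Function.Injective (J n) := by
  intro x y h
  exact (Fin.cons_right_injective (α := fun _ => ℝ) (0:ℝ)) h

lemma J_sub {n : ℕ} (x y : Fin n → ℝ) : J n (x - y) = lift1 x - lift1 y := by
  ext i; refine Fin.cases ?_ (fun j => ?_) i <;> simp [J, lift1]

lemma dim_le {n : ℕ} {Q : Set (Fin n → ℝ)} (hQ : Q.Nonempty)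
    (U : Submodule ℝ (Fin (n + 1) → ℝ)) (hU : ∀ y ∈ Q, lift1 y ∈ U) :
    Module.finrank ℝ (affineSpan ℝ Q).direction + 1 ≤ Module.finrank ℝ U := by
  obtain ⟨y0, hy0⟩ := hQ
  rw [direction_affineSpan]
  rw [(Submodule.equivMapOfInjective (J n) (J_inj n) (vectorSpan ℝ Q)).finrank_eq]
  apply Nat.succ_le_of_lt
  apply Submodule.finrank_lt_finrank_of_lt
  rw [SetLike.lt_iff_le_and_exists]
  constructor
  · rw [vectorSpan_def, Submodule.map_span, Submodule.span_le]
    rintro _ ⟨_, ⟨x, hx, y, hy, rfl⟩, rfl⟩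
    change J n (x - y) ∈ U
    rw [J_sub]
    exact U.sub_mem (hU x hx) (hU y hy)
  · refine ⟨lift1 y0, hU y0 hy0, ?_⟩
    rintro ⟨x, _, hx⟩
    have := congrFun hx 0
    simp [J, lift1] at this

lemma hom1 {K : Type} [Field K] {N : ℕ} {p : MvPolynomial (Fin N) K} (hp : p.IsHomogeneous 1) :
    ∃ c : Fin N → K, p = ∑ k, C (c k) * X k := by
  have : p ∈ homogeneousSubmodule (Fin N) K 1 := hp
  rw [homogeneousSubmodule_one_eq_span_X, Submodule.mem_span_range_iff_exists_fun] at this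
  obtain ⟨c, hc⟩ := this
  exact ⟨c, by rw [← hc]; simp [smul_eq_C_mul]⟩

lemma Od_of_mem {n : ℕ} {v : Fin (n + 1) → ℝ} {k : ℕ} {f : MvPolynomial (Fin (n + 1)) ℂ}
    (h : f ∈ pointIdealC v ^ k) : Od v k f := by
  have h1 : (pointIdealC v).map (tay v) ≤ Ideal.span {Polynomial.X} := by
    rw [pointIdealC, Ideal.map_span, Ideal.span_le]
    rintro _ ⟨p, ⟨hp, hp0⟩, rfl⟩
    obtain ⟨c, rfl⟩ := hom1 hp
    rw [SetLike.mem_coe, Ideal.mem_span_singleton]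
    refine ⟨Polynomial.C (∑ k, C (c k) * X k), ?_⟩
    have h2 : tay v (∑ k, C (c k) * X k) =
        Polynomial.C (C (eval (fun i => (v i : ℂ)) (∑ k, C (c k) * X k))) +
          Polynomial.X * Polynomial.C (∑ k, C (c k) * X k) := by
      simp only [map_sum, map_mul, Finset.mul_sum, ← Finset.sum_add_distrib]
      refine Finset.sum_congr rfl fun k _ => ?_
      have h1 : tay v (C (c k)) = Polynomial.C (C (c k)) := by
        rw [tay, aeval_C]; rfl
      rw [h1]
      simp [tay]
      ring
    rw [h2, hp0]; simp
  have h2 : tay v f ∈ (pointIdealC v ^ k).map (tay v) := Ideal.mem_map_of_mem _ h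
  rw [Ideal.map_pow] at h2
  have h3 := Ideal.pow_right_mono h1 k h2
  rwa [Ideal.span_singleton_pow, Ideal.mem_span_singleton] at h3

lemma Od_mono {N : ℕ} {v : Fin N → ℝ} {k m : ℕ} {f : MvPolynomial (Fin N) ℂ}
    (h : Od v m f) (hkm : k ≤ m) : Od v k f := (pow_dvd_pow _ hkm).trans h

def T (N : ℕ) : Fm N →ₗ[ℝ] MvPolynomial (Fin N) ℝ where
  toFun l := ∑ k, C (l (Pi.single k 1)) * X k
  map_add' x y := by simp [add_mul, Finset.sum_add_distrib]
  map_smul' c x := by simp [Finset.smul_sum, smul_eq_C_mul, mul_assoc]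

lemma eval_T {N : ℕ} (l : Fm N) (v) : eval v (T N l) = l v := by
  rw [form_apply l v]; simp [T]

lemma T_inj (N : ℕ) : Function.Injective (T N) := by
  intro x y h
  apply LinearMap.ext; intro v
  rw [← eval_T, ← eval_T, h]

lemma exists_form {N : ℕ} {p : MvPolynomial (Fin N) ℝ} (hp : p.IsHomogeneous 1) :
    ∃ l : Fm N, p = T N l := by
  obtain ⟨c, rfl⟩ := hom1 hp
  refine ⟨∑ k, c k • LinearMap.proj k, ?_⟩
  apply MvPolynomial.funext; intro v
  rw [eval_T]; simp

lemma toC_T {n : ℕ} (l : Fm (n + 1)) : toC (T (n + 1) l) = lin l := by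
  simp [toC, T, lin]

lemma Lv_rank {n d : ℕ} (l : Fin d → Fm (n + 1)) (v : Fin (n + 1) → ℝ) :
    rkOf (fun i => T (n + 1) (l i)) v + Module.finrank ℝ (Lv l v) = n + 1 := by
  have hs : ((flatOf (fun i => T (n + 1) (l i)) v : Finset (Fin d)) : Set (Fin d)) =
      {i | l i v = 0} := by
    ext j
    rw [Finset.mem_coe, flatOf, Finset.mem_filter, eval_T]
    simp
  have h1 : rkOf (fun i => T (n + 1) (l i)) v =
      Module.finrank ℝ (Submodule.span ℝ (l '' {i | l i v = 0})) := by
    rw [(Submodule.equivMapOfInjective (T (n+1)) (T_inj (n+1)) _).finrank_eq, Submodule.map_span,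
      ← Set.image_comp, rkOf, hs]
    rfl
  have h2 : Lv l v = (Submodule.span ℝ (l '' {i | l i v = 0})).dualCoannihilator := by
    ext x
    rw [mem_Lv, Submodule.mem_dualCoannihilator]
    constructor
    · intro h q hq
      induction hq using Submodule.span_induction with
      | mem q hq => obtain ⟨i, hi, rfl⟩ := hq; exact h i hi
      | zero => simp
      | add a b _ _ ha hb => simp [ha, hb]
      | smul c a _ ha => simp [ha]
    · intro h i hi
      exact h _ (Submodule.subset_span ⟨i, hi, rfl⟩)
  rw [h1, h2]
  have := Subspace.finrank_add_finrank_dualCoannihilator_eq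
    (Submodule.span ℝ (l '' {i | l i v = 0}))
  simpa using this

theorem main {n d : ℕ} (l : Fin d → Fm (n + 1))
    (hP : IsPolytopeSetup fun i => T (n + 1) (l i))
    (f : MvPolynomial (Fin (n + 1)) ℂ) (hf0 : f ≠ 0)
    (hf : f.IsHomogeneous (d - n - 1))
    (hvan : ∀ v : Fin (n + 1) → ℝ, v ≠ 0 →
      f ∈ pointIdealC v ^ ordOf (fun i => T (n + 1) (l i)) v) (i : Fin d)
    (hdvd : lin (l i) ∣ f) : False := by
  have hl : ∀ i, l i ≠ 0 := by
    intro i h; apply hP.hne i; simp [h]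
  have hker : ∀ i j, LinearMap.ker (l i) = LinearMap.ker (l j) → i = j := by
    intro i j h
    by_contra hij
    obtain ⟨c, hc⟩ := smul_of_ker (hl i) h.le
    apply hP.hprop i j hij c
    simp only [hc, map_smul]
  have hmem : ∀ y, y ∈ polytopeOf (fun i => T (n + 1) (l i)) ↔ ∀ j, 0 ≤ l j (lift1 y) := by
    intro y; simp [polytopeOf, eval_T]
  have hPne : (polytopeOf (fun i => T (n + 1) (l i))).Nonempty :=
    (hP.hfacet_ne i).mono fun y hy => hy.1
  apply hf0
  refine core (n + 1) (Fin d) l hl ?_ f ?_ ?_ i ?_ ?_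
  · obtain ⟨w, -, hw⟩ := exists_w l (lift1 '' (polytopeOf (fun i => T (n + 1) (l i)))) Finset.univ
      (by rintro _ ⟨y, hy, rfl⟩ j; exact (hmem y).1 hy j) (by
        intro j _
        by_contra hcon
        push Not at hcon
        have := dim_le hPne (LinearMap.ker (l j)) fun y hy => hcon _ ⟨y, hy, rfl⟩
        rw [hP.hfull, AffineSubspace.direction_top, finrank_top, Module.finrank_fin_fun] at this
        have h2 := finrank_ker_add (hl j)
        omega)
    exact ⟨w, fun j => hw j (Finset.mem_univ j)⟩
  · rw [hf.totalDegree hf0]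
    have := hP.hd
    simp; omega
  · intro v hv k hk
    refine Od_mono (Od_of_mem (hvan v hv)) ?_
    have hr := Lv_rank l v
    have hF : (flatOf (fun i => T (n + 1) (l i)) v) = Fl l v := by
      simp [flatOf, Fl, eval_T]
    have hnl : nlOf (fun i => T (n + 1) (l i)) v =
      (Fl l v).card - rkOf (fun i => T (n + 1) (l i)) v := by rw [nlOf, hF]
    rw [ordOf]
    split_ifs with hface
    · have hG : Good l v := by
        obtain ⟨hne, hfr⟩ := hface
        have hLpos : 0 < Module.finrank ℝ (Lv l v) := by
          apply Module.finrank_pos_iff_exists_ne_zero.2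
          exact ⟨⟨v, mem_Lv.2 fun _ h => h⟩, fun h => hv (congrArg Subtype.val h)⟩
        have hface0 : ∀ y ∈ faceOf (fun i => T (n + 1) (l i)) v, ∀ j, l j v = 0 → l j (lift1 y) = 0 := by
          intro y hy j hj
          have := hy.2 j (by rw [hF]; simp [Fl, hj])
          rwa [eval_T] at this
        obtain ⟨w, hw1, hw2⟩ := exists_w l (lift1 '' (faceOf (fun i => T (n + 1) (l i)) v))
          (Finset.univ.filter fun j => l j v ≠ 0)
          (by rintro _ ⟨y, hy, rfl⟩ j; exact (hmem y).1 hy.1 j) (by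
            intro j hj
            have hj := (Finset.mem_filter.1 hj).2
            by_contra hcon
            push Not at hcon
            have h1 := dim_le hne (Lv l v ⊓ LinearMap.ker (l j)) fun y hy =>
              ⟨mem_Lv.2 (hface0 y hy), hcon _ ⟨y, hy, rfl⟩⟩
            have h2 : Module.finrank ℝ (Lv l v ⊓ LinearMap.ker (l j) : Submodule ℝ (Fin (n+1) → ℝ))
                < Module.finrank ℝ (Lv l v) := by
              apply Submodule.finrank_lt_finrank_of_lt
              rw [SetLike.lt_iff_le_and_exists]
              exact ⟨inf_le_left, v, mem_Lv.2 fun _ h => h, fun h => hj h.2⟩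
            rw [hfr] at h1
            omega)
        refine ⟨w, fun j hj => hw1 j ?_, fun j hj => hw2 j (by simp [hj])⟩
        rintro _ ⟨y, hy, rfl⟩
        exact hface0 y hy j hj
      rw [hnl]
      rcases hk with hk | ⟨h1, -⟩
      · omega
      · exact absurd hG h1
    · rw [hnl]
      rcases hk with hk | ⟨-, hk⟩ <;> omega
  · obtain ⟨w, hw1, hw2⟩ := exists_w l (lift1 '' (facetOf (fun i => T (n + 1) (l i)) i))
      (Finset.univ.filter fun j => j ≠ i)
      (by rintro _ ⟨y, hy, rfl⟩ j; exact (hmem y).1 hy.1 j) (by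
        intro j hj
        have hj := (Finset.mem_filter.1 hj).2
        by_contra hcon
        push Not at hcon
        have h1 := dim_le (hP.hfacet_ne i) (LinearMap.ker (l i) ⊓ LinearMap.ker (l j)) fun y hy =>
          ⟨by have := hy.2; rwa [eval_T] at this, hcon _ ⟨y, hy, rfl⟩⟩
        have h2 : Module.finrank ℝ (LinearMap.ker (l i) ⊓ LinearMap.ker (l j) : Submodule ℝ (Fin (n+1) → ℝ))
            < Module.finrank ℝ (LinearMap.ker (l i)) := by
          apply Submodule.finrank_lt_finrank_of_lt
          refine lt_of_le_of_ne inf_le_left fun h => hj ?_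
          exact (hker i j (ker_eq_of_le (hl i) (hl j) (inf_eq_left.1 h))).symm
        rw [hP.hfacet i] at h1
        have h3 := finrank_ker_add (hl i)
        have := hP.hn
        omega)
    refine ⟨w, hw1 i ?_, fun j hj => hw2 j ?_⟩
    · rintro _ ⟨y, hy, rfl⟩
      have := hy.2
      rwa [eval_T] at this
    · simp only [Finset.mem_filter, Finset.mem_univ, true_and]
      rintro rfl; exact hj rfl
  · have : mult l i = 1 := by
      rw [mult, Finset.card_eq_one]
      refine ⟨i, ?_⟩
      ext j
      simp only [Finset.mem_filter, Finset.mem_univ, true_and, Finset.mem_singleton]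
      exact ⟨fun h => hker _ _ h, fun h => by rw [h]⟩
    rwa [this, pow_one]

end top

end Adj

/-- A nonzero homogeneous polynomial `f ∈ ℂ[X₀,…,Xₙ]` of degree `d − n − 1`
satisfying the vanishing conditions `f ∈ I_v^{ord_P(L_v)}` for all nonzero `v ∈ ℝ^{n+1}` is
not divisible by any of the facet equations `ℓᵢ`; i.e. `f` does not vanish identically on any
facet hyperplane of `P`. -/
theorem adjoint_not_vanishing_on_facet_hyperplanes {n d : ℕ}
    (ℓ : Fin d → MvPolynomial (Fin (n + 1)) ℝ) (hP : IsPolytopeSetup ℓ)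
    (f : MvPolynomial (Fin (n + 1)) ℂ) (hf0 : f ≠ 0)
    (hf : f.IsHomogeneous (d - n - 1))
    (hvan : ∀ v : Fin (n + 1) → ℝ, v ≠ 0 → f ∈ pointIdealC v ^ ordOf ℓ v) :
    ∀ i : Fin d, ¬ toC (ℓ i) ∣ f := by
  choose l hl using fun i => Adj.exists_form (hP.hhom i)
  obtain rfl : ℓ = fun i => Adj.T (n + 1) (l i) := funext hl
  intro i hdvd
  rw [Adj.toC_T] at hdvd
  exact Adj.main l hP f hf0 hf hvan i hdvd

end
end
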